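/- Fix an integer p ≥ 2. Let η_{p,n} = max over σ ∈ {−1,1}^n of n^{−(p+1)/2} · Σ_{1 ≤ i₁ < i₂ < ⋯ < i_p ≤ n} J_{i₁,…,i_p}·σ_{i₁}·σ_{i₂}⋯σ_{i_p}, where the J_{i₁,…,i_p} are i.i.d. standard Gaussian random variables. Then there exists a constant η_{p,OPT} ∈ ℝ such that η_{p,n} converges to η_{p,OPT} in probability as n → ∞ (the Parisi formula identifies this constant as inf over Parisi functionals; in particular the ground-state value of the p-spin glass has a deterministic limit). -/

import Mathlib

open MeasureTheory ProbabilityTheory Filter Topology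

/-- The coupling tensor of the `p`-spin glass on `n` sites: one i.i.d. standard
Gaussian entry `J S` for each set `S` of `p` indices `1 ≤ i₁ < ⋯ < i_p ≤ n`. -/
noncomputable def pSpinMeasure (n p : ℕ) :
    Measure ({S : Finset (Fin n) // S.card = p} → ℝ) :=
  Measure.pi fun _ => gaussianReal 0 1

/-- The normalized `p`-spin Hamiltonian
`n^{-(p+1)/2} Σ_{i₁<⋯<i_p} J_{i₁…i_p} σ_{i₁} ⋯ σ_{i_p}`, where the spin
configuration is encoded by `σ : Fin n → Bool` (`true ↦ +1`, `false ↦ -1`). -/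
noncomputable def pSpinValue (n p : ℕ) (J : {S : Finset (Fin n) // S.card = p} → ℝ)
    (σ : Fin n → Bool) : ℝ :=
  (n : ℝ) ^ (-(((p : ℝ) + 1) / 2)) *
    ∑ S : {S : Finset (Fin n) // S.card = p},
      J S * ∏ i ∈ S.1, (if σ i then (1 : ℝ) else -1)

/-- The ground-state value `η_{p,n} = max_{σ ∈ {-1,1}^n}` of the normalized
`p`-spin Hamiltonian. -/
noncomputable def groundStateValue (n p : ℕ)
    (J : {S : Finset (Fin n) // S.card = p} → ℝ) : ℝ :=
  Finset.univ.sup' Finset.univ_nonempty (pSpinValue n p J)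



namespace PSpin

/-- standard Gaussian measure on `ι → ℝ` -/
noncomputable abbrev gm (ι : Type*) [Fintype ι] : Measure (ι → ℝ) :=
  Measure.pi fun _ => gaussianReal 0 1

theorem merge_mp {ι : Type*} [Fintype ι] (p : ι → Prop) [DecidablePred p] :
    MeasurePreserving (fun q : (ι → ℝ) × (ι → ℝ) => fun i => if p i then q.1 i else q.2 i)
      ((gm ι).prod (gm ι)) (gm ι) := by
  have hm : Measurable (fun q : (ι → ℝ) × (ι → ℝ) => fun i => if p i then q.1 i else q.2 i) := by
    refine measurable_pi_lambda _ fun i => ?_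
    by_cases h : p i
    · simp only [h, if_true]; fun_prop
    · simp only [h, if_false]; fun_prop
  refine ⟨hm, ?_⟩
  symm
  refine Measure.pi_eq fun s hs => ?_
  rw [Measure.map_apply hm (MeasurableSet.univ_pi hs)]
  have : (fun q : (ι → ℝ) × (ι → ℝ) => fun i => if p i then q.1 i else q.2 i) ⁻¹' (Set.univ.pi s)
      = (Set.univ.pi fun i => if p i then s i else Set.univ) ×ˢ
        (Set.univ.pi fun i => if p i then Set.univ else s i) := by
    ext q
    simp only [Set.mem_preimage, Set.mem_pi, Set.mem_univ, true_imp_iff, Set.mem_prod]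
    rw [← forall_and]
    refine forall_congr' fun i => ?_
    by_cases h : p i <;> simp [h]
  rw [this, Measure.prod_prod, Measure.pi_pi, Measure.pi_pi, ← Finset.prod_mul_distrib]
  refine Finset.prod_congr rfl fun i _ => ?_
  by_cases h : p i <;> simp [h]

theorem comp_mp {ι κ : Type*} [Fintype ι] [Fintype κ] (e : κ → ι) (he : Function.Injective e) :
    MeasurePreserving (fun g : ι → ℝ => fun k => g (e k)) (gm ι) (gm κ) := by
  classical
  have hm : Measurable (fun g : ι → ℝ => fun k => g (e k)) := by fun_prop
  refine ⟨hm, ?_⟩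
  symm
  refine Measure.pi_eq fun s hs => ?_
  rw [Measure.map_apply hm (MeasurableSet.univ_pi hs)]
  have : (fun g : ι → ℝ => fun k => g (e k)) ⁻¹' (Set.univ.pi s)
      = Set.univ.pi fun i => {x : ℝ | ∀ k, e k = i → x ∈ s k} := by
    ext g
    simp only [Set.mem_preimage, Set.mem_pi, Set.mem_univ, true_imp_iff, Set.mem_ofPred_eq]
    constructor
    · rintro h i k rfl; exact h k
    · intro h k; exact h _ k rfl
  rw [this, Measure.pi_pi]
  rw [← Finset.prod_subset (Finset.subset_univ (Finset.univ.image e))]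
  · rw [Finset.prod_image (fun a _ b _ h => he h)]
    refine Finset.prod_congr rfl fun k _ => ?_
    congr 1
    ext x
    simp only [Set.mem_ofPred_eq]
    constructor
    · intro h; exact h k rfl
    · intro h k' hk; rw [he hk]; exact h
  · intro i _ hi
    have : {x : ℝ | ∀ k, e k = i → x ∈ s k} = Set.univ := by
      ext x
      simp only [Set.mem_ofPred_eq, Set.mem_univ, iff_true]
      intro k hk
      exact absurd (Finset.mem_image.2 ⟨k, Finset.mem_univ _, hk⟩) hi
    rw [this]; simp

theorem merge_integral {ι : Type*} [Fintype ι] (p : ι → Prop) [DecidablePred p]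
    {F : (ι → ℝ) → ℝ} (hF : Integrable F (gm ι)) :
    ∫ g, F g ∂(gm ι) = ∫ g', ∫ g, F (fun i => if p i then g i else g' i) ∂(gm ι) ∂(gm ι) := by
  have h := merge_mp (ι := ι) p
  have h1 : ∫ g, F g ∂(gm ι) = ∫ q, F (fun i => if p i then q.1 i else q.2 i)
      ∂((gm ι).prod (gm ι)) := by
    conv_lhs => rw [← h.map_eq]
    rw [integral_map h.measurable.aemeasurable]
    rw [h.map_eq]; exact hF.aestronglyMeasurable
  have h2 : Integrable (fun q : (ι → ℝ) × (ι → ℝ) => F (fun i => if p i then q.1 i else q.2 i))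
      ((gm ι).prod (gm ι)) := h.integrable_comp_of_integrable hF
  rw [h1, integral_prod_symm _ h2]

theorem stein_one {f f' : ℝ → ℝ} {C : ℝ} (hf : ∀ x, HasDerivAt f (f' x) x)
    (hC : ∀ x, |f x| ≤ C) (hC' : ∀ x, |f' x| ≤ C) (hm' : Measurable f') :
    ∫ x, x * f x ∂(gaussianReal 0 1) = ∫ x, f' x ∂(gaussianReal 0 1) := by
  have hcont : Continuous f := continuous_iff_continuousAt.2 fun x => (hf x).continuousAt
  rw [integral_gaussianReal_eq_integral_smul one_ne_zero,
    integral_gaussianReal_eq_integral_smul one_ne_zero]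
  have hv : ∀ x, HasDerivAt (gaussianPDFReal 0 1) (-x * gaussianPDFReal 0 1 x) x := by
    intro x
    simp only [gaussianPDFReal_def]
    have h1 : HasDerivAt (fun x : ℝ => -(x - 0) ^ 2 / (2 * ((1 : NNReal) : ℝ))) (-x) x := by
      have := ((((hasDerivAt_id x).sub_const 0).pow 2).neg).div_const (2 * ((1 : NNReal) : ℝ))
      exact this.congr_deriv (by simp; ring)
    have := (h1.exp).const_mul ((√(2 * Real.pi * ((1 : NNReal) : ℝ)))⁻¹)
    exact this.congr_deriv (by ring)
  have hI0 : Integrable (gaussianPDFReal 0 1) := integrable_gaussianPDFReal 0 1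
  have hI1 : Integrable (fun x => -x * gaussianPDFReal 0 1 x) := by
    have h := (memLp_id_gaussianReal (μ := 0) (v := 1) 1).integrable (by simp)
    rw [gaussianReal_of_var_ne_zero _ one_ne_zero] at h
    rw [integrable_withDensity_iff_integrable_smul₀' (by fun_prop) (by simp [gaussianPDF_lt_top])] at h
    have := h.neg
    refine this.congr (ae_of_all _ fun x => ?_)
    simp [toReal_gaussianPDF, mul_comm]
  have key := integral_mul_deriv_eq_deriv_mul_of_integrable (u := f) (u' := f')
    (v := gaussianPDFReal 0 1) (v' := fun x => -x * gaussianPDFReal 0 1 x) (fun x _ => hf x) (fun x _ => hv x)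
    (by exact hI1.bdd_mul hcont.aestronglyMeasurable (ae_of_all _ hC))
    (by exact hI0.bdd_mul hm'.aestronglyMeasurable (ae_of_all _ hC'))
    (by exact hI0.bdd_mul hcont.aestronglyMeasurable (ae_of_all _ hC))
  have e1 : ∀ x, gaussianPDFReal 0 1 x • (x * f x) = -(f x * (-x * gaussianPDFReal 0 1 x)) := by
    intro x; simp only [smul_eq_mul]; ring
  have e2 : ∀ x, gaussianPDFReal 0 1 x • f' x = f' x * gaussianPDFReal 0 1 x := by
    intro x; simp only [smul_eq_mul]; ring
  simp_rw [e1, e2]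
  rw [integral_neg, key, neg_neg]

theorem integrable_coord {ι : Type*} [Fintype ι] (i : ι) :
    Integrable (fun g : ι → ℝ => g i) (gm ι) := by
  have h := (memLp_id_gaussianReal (μ := 0) (v := 1) 1).integrable (by simp)
  exact (measurePreserving_eval (fun _ : ι => gaussianReal 0 1) i).integrable_comp_of_integrable h

theorem integral_coord {ι : Type*} [Fintype ι] (i : ι) :
    ∫ g : ι → ℝ, g i ∂(gm ι) = 0 := by
  have := integral_comp_eval (μ := fun _ : ι => gaussianReal 0 1) (i := i) (f := fun x : ℝ => x)
    (by fun_prop)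
  rw [this, integral_id_gaussianReal]

theorem stein {ι : Type*} [Fintype ι] [DecidableEq ι] (i : ι) {F F' : (ι → ℝ) → ℝ} {C : ℝ}
    (hF : ∀ g u, HasDerivAt (fun u => F (Function.update g i u)) (F' (Function.update g i u)) u)
    (hm : Measurable F) (hm' : Measurable F') (hC : ∀ x, |F x| ≤ C) (hC' : ∀ x, |F' x| ≤ C) :
    ∫ g, g i * F g ∂(gm ι) = ∫ g, F' g ∂(gm ι) := by
  have hup : ∀ g g' : ι → ℝ, (fun k => if k = i then g k else g' k) = Function.update g' i (g i) := by
    intro g g'; ext k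
    by_cases h : k = i
    · subst h; simp
    · simp [h]
  have hI : Integrable (fun g : ι → ℝ => g i * F g) (gm ι) :=
    (integrable_coord i).mul_bdd (c := C) hm.aestronglyMeasurable (ae_of_all _ hC)
  have hI' : Integrable F' (gm ι) :=
    Integrable.of_bound hm'.aestronglyMeasurable C (ae_of_all _ hC')
  rw [merge_integral (fun k => k = i) hI, merge_integral (fun k => k = i) hI']
  refine integral_congr_ae (ae_of_all _ fun g' => ?_)
  simp only [hup, if_true]
  have mu : Measurable (fun u : ℝ => Function.update g' i u) := measurable_update g'
  have e1 := integral_comp_eval (μ := fun _ : ι => gaussianReal 0 1) (i := i)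
    (f := fun x : ℝ => x * F (Function.update g' i x))
    (by exact (measurable_id.mul (hm.comp mu)).aestronglyMeasurable)
  have e2 := integral_comp_eval (μ := fun _ : ι => gaussianReal 0 1) (i := i)
    (f := fun x : ℝ => F' (Function.update g' i x))
    (by exact (hm'.comp mu).aestronglyMeasurable)
  rw [e1, e2]
  exact stein_one (hF g') (fun x => hC _) (fun x => hC' _) (hm'.comp mu)

end PSpin


namespace PSpin

/-- `ℓ¹`-type coordinatewise Lipschitz condition -/
def LipC {ι : Type*} [Fintype ι] (c : ι → ℝ) (F : (ι → ℝ) → ℝ) : Prop :=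
  ∀ g g', |F g - F g'| ≤ ∑ i, c i * |g i - g' i|

theorem LipC.continuous {ι : Type*} [Fintype ι] {c : ι → ℝ} {F : (ι → ℝ) → ℝ} (h : LipC c F) :
    Continuous F := by
  rw [continuous_iff_continuousAt]
  intro g
  rw [ContinuousAt, tendsto_iff_dist_tendsto_zero]
  have : Tendsto (fun g' : ι → ℝ => ∑ i, c i * |g' i - g i|) (𝓝 g) (𝓝 0) := by
    have hc : Continuous (fun g' : ι → ℝ => ∑ i, c i * |g' i - g i|) := by fun_prop
    have := hc.tendsto g
    simpa using this
  refine squeeze_zero (fun _ => dist_nonneg) (fun g' => ?_) this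
  rw [Real.dist_eq]
  exact h g' g

theorem memLp_coord {ι : Type*} [Fintype ι] (i : ι) :
    MemLp (fun g : ι → ℝ => g i) 2 (gm ι) := by
  have h := memLp_id_gaussianReal (μ := 0) (v := 1) 2
  exact h.comp_measurePreserving (measurePreserving_eval (fun _ : ι => gaussianReal 0 1) i)

theorem LipC.memLp {ι : Type*} [Fintype ι] {c : ι → ℝ} {F : (ι → ℝ) → ℝ} (h : LipC c F) :
    MemLp F 2 (gm ι) := by
  have h1 : MemLp (fun g : ι → ℝ => |F 0| + ∑ i, c i * |g i|) 2 (gm ι) := by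
    have h2 : ∀ i ∈ (Finset.univ : Finset ι), MemLp (fun g : ι → ℝ => c i * |g i|) 2 (gm ι) := by
      intro i _
      have := (memLp_coord i).norm.const_mul (c i)
      simpa only [Real.norm_eq_abs] using this
    have h3 := memLp_finsetSum _ h2
    have h4 := (memLp_const (μ := gm ι) (p := 2) |F 0|).add h3
    exact h4
  refine h1.mono' h.continuous.aestronglyMeasurable (ae_of_all _ fun g => ?_)
  have := h g 0
  simp only [Pi.zero_apply, sub_zero] at this
  rw [Real.norm_eq_abs]
  calc |F g| = |F 0 + (F g - F 0)| := by ring_nf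
    _ ≤ |F 0| + |F g - F 0| := abs_add_le _ _
    _ ≤ _ := by linarith

theorem LipC.integrable {ι : Type*} [Fintype ι] {c : ι → ℝ} {F : (ι → ℝ) → ℝ} (h : LipC c F) :
    Integrable F (gm ι) := h.memLp.integrable (by norm_num)

theorem var_one {f : ℝ → ℝ} {c : ℝ} (hf : ∀ x y, |f x - f y| ≤ c * |x - y|) :
    ∫ x, (f x - ∫ y, f y ∂(gaussianReal 0 1)) ^ 2 ∂(gaussianReal 0 1) ≤ c ^ 2 := by
  have hcont : Continuous f := by
    rw [continuous_iff_continuousAt]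
    intro g
    rw [ContinuousAt, tendsto_iff_dist_tendsto_zero]
    have : Tendsto (fun g' : ℝ => c * |g' - g|) (𝓝 g) (𝓝 0) := by
      have hc : Continuous (fun g' : ℝ => c * |g' - g|) := by fun_prop
      have := hc.tendsto g
      simpa using this
    refine squeeze_zero (fun _ => dist_nonneg) (fun g' => ?_) this
    rw [Real.dist_eq]
    exact hf g' g
  have hid : MemLp (fun x : ℝ => x) 2 (gaussianReal 0 1) := memLp_id_gaussianReal (μ := 0) (v := 1) 2
  have hf2 : MemLp (fun x => f x - f 0) 2 (gaussianReal 0 1) := by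
    refine (hid.norm.const_mul c).mono' (by fun_prop) (ae_of_all _ fun x => ?_)
    have := hf x 0
    simpa using this
  have hf3 : MemLp f 2 (gaussianReal 0 1) := by
    have := hf2.add (memLp_const (f 0))
    refine this.congr_norm hcont.aestronglyMeasurable (ae_of_all _ fun x => ?_)
    simp
  have h1 := variance_le_expectation_sq (μ := gaussianReal 0 1) (X := fun x => f x - f 0)
    hf2.aestronglyMeasurable
  rw [variance_sub_const hf3.aestronglyMeasurable, variance_eq_integral hf3.aemeasurable] at h1
  refine h1.trans ?_
  have h2 : ∫ x, x ^ 2 ∂(gaussianReal 0 1) = 1 := by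
    have := variance_fun_id_gaussianReal (μ := 0) (v := 1)
    rw [variance_eq_integral (by fun_prop)] at this
    simpa using this
  calc ∫ x, ((fun x => f x - f 0) ^ 2) x ∂(gaussianReal 0 1)
      ≤ ∫ x, c ^ 2 * x ^ 2 ∂(gaussianReal 0 1) := by
        refine integral_mono hf2.integrable_sq (hid.integrable_sq.const_mul _) fun x => ?_
        have := hf x 0
        simp only [sub_zero] at this
        simp only [Pi.pow_apply]
        rw [← sq_abs (f x - f 0), ← sq_abs x, ← mul_pow]
        gcongr
    _ = c ^ 2 := by rw [integral_const_mul, h2, mul_one]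

theorem efron_fin : ∀ (n : ℕ) (c : Fin n → ℝ) (F : (Fin n → ℝ) → ℝ), LipC c F →
    ∫ g, (F g - ∫ g', F g' ∂(gm (Fin n))) ^ 2 ∂(gm (Fin n)) ≤ ∑ i, c i ^ 2 := by
  intro n
  induction n with
  | zero =>
    intro c F _
    have : ∀ g, F g = F 0 := fun g => by congr 1; exact Subsingleton.elim _ _
    simp [this]
  | succ n ih =>
    intro c F hF
    set μ := gaussianReal 0 1 with hμ
    have mp := (measurePreserving_piFinSuccAbove (fun _ : Fin (n+1) => gaussianReal 0 1) 0).symm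
    have mpe : MeasurePreserving (fun q : ℝ × (Fin n → ℝ) => (Fin.cons q.1 q.2 : Fin (n+1) → ℝ))
        (μ.prod (gm (Fin n))) (gm (Fin (n+1))) := by
      have := mp
      simp [MeasurableEquiv.piFinSuccAbove] at this
      exact this
    set G : ℝ × (Fin n → ℝ) → ℝ := fun q => F (Fin.cons q.1 q.2) with hG
    have hG2 : MemLp G 2 (μ.prod (gm (Fin n))) := hF.memLp.comp_measurePreserving mpe
    have hGi : Integrable G (μ.prod (gm (Fin n))) := hG2.integrable (by norm_num)
    have hx : ∀ y x x', |G (x, y) - G (x', y)| ≤ c 0 * |x - x'| := by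
      intro y x x'
      have := hF (Fin.cons x y) (Fin.cons x' y)
      rw [Fin.sum_univ_succ] at this
      simpa [hG] using this
    have hy : ∀ x y y', |G (x, y) - G (x, y')| ≤ ∑ i, c (Fin.succ i) * |y i - y' i| := by
      intro x y y'
      have := hF (Fin.cons x y) (Fin.cons x y')
      rw [Fin.sum_univ_succ] at this
      simpa [hG] using this
    have hxi : ∀ y, Integrable (fun x => G (x, y)) μ := by
      intro y
      have hc : Continuous (fun x => G (x, y)) := by
        have := hF.continuous
        simp only [hG]
        fun_prop
      have hid : Integrable (fun x : ℝ => x) μ :=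
        (memLp_id_gaussianReal (μ := 0) (v := 1) 1).integrable (by simp)
      refine Integrable.mono' ((integrable_const |G (0, y)|).add (hid.norm.const_mul (c 0)))
        hc.aestronglyMeasurable (ae_of_all _ fun x => ?_)
      have := hx y x 0
      simp only [sub_zero] at this
      rw [Real.norm_eq_abs]
      calc |G (x, y)| = |G (0, y) + (G (x, y) - G (0, y))| := by ring_nf
        _ ≤ |G (0, y)| + |G (x, y) - G (0, y)| := abs_add_le _ _
        _ ≤ _ := by simp only [Pi.add_apply, Real.norm_eq_abs]; linarith
    set m : (Fin n → ℝ) → ℝ := fun y => ∫ x, G (x, y) ∂μ with hm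
    have hml : LipC (fun i => c (Fin.succ i)) m := by
      intro y y'
      simp only [hm]
      rw [← integral_sub (hxi y) (hxi y')]
      refine (norm_integral_le_of_norm_le_const (μ := μ) (f := fun x => G (x, y) - G (x, y'))
        (C := ∑ i, c (Fin.succ i) * |y i - y' i|)
        (ae_of_all _ fun x => hy x y y')).trans ?_
      simp
    have ihm := ih _ m hml
    have eE : ∫ g, F g ∂(gm (Fin (n+1))) = ∫ y, m y ∂(gm (Fin n)) := by
      conv_lhs => rw [← mpe.map_eq]
      rw [integral_map mpe.measurable.aemeasurable
        (by exact hF.continuous.aestronglyMeasurable)]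
      exact integral_prod_symm _ hGi
    set e := ∫ y, m y ∂(gm (Fin n)) with he
    rw [eE]
    have hGe : Integrable (fun q => (G q - e) ^ 2) (μ.prod (gm (Fin n))) :=
      (hG2.sub (memLp_const e)).integrable_sq
    have e2 : ∫ g, (F g - e) ^ 2 ∂(gm (Fin (n+1)))
        = ∫ y, ∫ x, (G (x, y) - e) ^ 2 ∂μ ∂(gm (Fin n)) := by
      conv_lhs => rw [← mpe.map_eq]
      rw [integral_map mpe.measurable.aemeasurable
        (by exact ((hF.continuous.sub continuous_const).pow 2).aestronglyMeasurable)]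
      exact integral_prod_symm _ hGe
    rw [e2, Fin.sum_univ_succ]
    have inner : ∀ y, ∫ x, (G (x, y) - e) ^ 2 ∂μ ≤ c 0 ^ 2 + (m y - e) ^ 2 := by
      intro y
      have hv := var_one (hx y)
      have hmem : MemLp (fun x => G (x, y)) 2 μ := by
        have hc : Continuous (fun x => G (x, y)) := by
          have := hF.continuous
          simp only [hG]
          fun_prop
        have hid : MemLp (fun x : ℝ => x) 2 μ := memLp_id_gaussianReal (μ := 0) (v := 1) 2
        refine MemLp.mono' ((memLp_const |G (0, y)|).add (hid.norm.const_mul (c 0)))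
          hc.aestronglyMeasurable (ae_of_all _ fun x => ?_)
        have := hx y x 0
        simp only [sub_zero] at this
        rw [Real.norm_eq_abs]
        calc |G (x, y)| = |G (0, y) + (G (x, y) - G (0, y))| := by ring_nf
          _ ≤ |G (0, y)| + |G (x, y) - G (0, y)| := abs_add_le _ _
          _ ≤ _ := by simp only [Pi.add_apply, Real.norm_eq_abs]; linarith
      have i1 : Integrable (fun x => (G (x, y) - m y) ^ 2) μ :=
        (hmem.sub (memLp_const (m y))).integrable_sq
      have i2 : Integrable (fun x => 2 * (m y - e) * (G (x, y) - m y)) μ :=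
        ((hxi y).sub (integrable_const _)).const_mul _
      have : ∀ x, (G (x, y) - e) ^ 2 = (G (x, y) - m y) ^ 2 + 2 * (m y - e) * (G (x, y) - m y)
          + (m y - e) ^ 2 := fun x => by ring
      simp_rw [this]
      have i3 : Integrable (fun x => (G (x, y) - m y) ^ 2 + 2 * (m y - e) * (G (x, y) - m y)) μ := i1.add i2
      rw [integral_add i3 (integrable_const _), integral_add i1 i2, integral_const_mul,
        integral_sub (hxi y) (integrable_const _)]
      simp only [integral_const, probReal_univ, one_smul]
      have : ∫ x, G (x, y) ∂μ = m y := rfl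
      rw [this]
      have : ∫ x, (G (x, y) - m y) ^ 2 ∂μ ≤ c 0 ^ 2 := hv
      linarith
    have hmi : Integrable (fun y => (m y - e) ^ 2) (gm (Fin n)) :=
      (hml.memLp.sub (memLp_const e)).integrable_sq
    calc ∫ y, ∫ x, (G (x, y) - e) ^ 2 ∂μ ∂(gm (Fin n))
        ≤ ∫ y, (c 0 ^ 2 + (m y - e) ^ 2) ∂(gm (Fin n)) :=
          integral_mono hGe.integral_prod_right ((integrable_const _).add hmi) inner
      _ = c 0 ^ 2 + ∫ y, (m y - e) ^ 2 ∂(gm (Fin n)) := by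
          rw [integral_add (integrable_const _) hmi]; simp
      _ ≤ _ := by linarith

theorem efron {ι : Type*} [Fintype ι] {c : ι → ℝ} {F : (ι → ℝ) → ℝ} (hF : LipC c F) :
    ∫ g, (F g - ∫ g', F g' ∂(gm ι)) ^ 2 ∂(gm ι) ≤ ∑ i, c i ^ 2 := by
  classical
  set e := Fintype.equivFin ι
  have mp := comp_mp (ι := Fin (Fintype.card ι)) (κ := ι) e e.injective
  have hG : LipC (fun i => c (e.symm i)) (fun g : Fin (Fintype.card ι) → ℝ => F (fun k => g (e k))) := by
    intro g g'
    refine (hF _ _).trans (le_of_eq ?_)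
    exact Fintype.sum_equiv e _ _ (fun i => by simp)
  have h := efron_fin _ _ _ hG
  have e1 : ∀ H : (ι → ℝ) → ℝ, Continuous H →
      ∫ g, H (fun k => g (e k)) ∂(gm (Fin (Fintype.card ι))) = ∫ g, H g ∂(gm ι) := by
    intro H hH
    conv_rhs => rw [← mp.map_eq]
    rw [integral_map mp.measurable.aemeasurable hH.aestronglyMeasurable]
  rw [e1 F hF.continuous,
    e1 (fun g => (F g - ∫ g', F g' ∂(gm ι)) ^ 2) ((hF.continuous.sub continuous_const).pow 2)] at h
  refine h.trans (le_of_eq ?_)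
  exact (Fintype.sum_equiv e _ _ (fun i => by simp)).symm

theorem efron_abs {ι : Type*} [Fintype ι] {c : ι → ℝ} {F : (ι → ℝ) → ℝ} (hF : LipC c F) :
    ∫ g, |F g - ∫ g', F g' ∂(gm ι)| ∂(gm ι) ≤ √(∑ i, c i ^ 2) := by
  set e := ∫ g', F g' ∂(gm ι)
  have h2 : MemLp (fun g => |F g - e|) 2 (gm ι) := by
    have := (hF.memLp.sub (memLp_const e)).norm
    exact this
  have h := variance_nonneg (fun g => |F g - e|) (gm ι)
  rw [variance_eq_sub h2] at h
  simp only [Pi.pow_apply, sq_abs] at h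
  have h3 := efron hF
  apply Real.le_sqrt_of_sq_le
  linarith

end PSpin


namespace PSpin

section Gibbs
variable {S : Type*} [Fintype S] [Nonempty S]

/-- log partition function -/
noncomputable def FE (E : S → ℝ) : ℝ := Real.log (∑ σ, Real.exp (E σ))

/-- Gibbs weight -/
noncomputable def gw (E : S → ℝ) (σ : S) : ℝ := Real.exp (E σ - FE E)

/-- replicated Gibbs weight -/
noncomputable def gW {n : ℕ} (E : S → ℝ) (τ : Fin n → S) : ℝ :=
  Real.exp (∑ l, E (τ l) - n * FE E)

theorem Z_pos (E : S → ℝ) : 0 < ∑ σ, Real.exp (E σ) :=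
  Finset.sum_pos (fun _ _ => Real.exp_pos _) Finset.univ_nonempty

theorem exp_FE (E : S → ℝ) : Real.exp (FE E) = ∑ σ, Real.exp (E σ) := Real.exp_log (Z_pos E)

theorem gw_nonneg (E : S → ℝ) (σ : S) : 0 ≤ gw E σ := (Real.exp_pos _).le

theorem gw_sum (E : S → ℝ) : ∑ σ, gw E σ = 1 := by
  simp only [gw, Real.exp_sub, exp_FE]
  rw [← Finset.sum_div, div_self (Z_pos E).ne']

theorem gw_le_one (E : S → ℝ) (σ : S) : gw E σ ≤ 1 := by
  rw [← gw_sum E]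
  exact Finset.single_le_sum (fun i _ => gw_nonneg E i) (Finset.mem_univ σ)

theorem gW_eq {n : ℕ} (E : S → ℝ) (τ : Fin n → S) : gW E τ = ∏ l, gw E (τ l) := by
  simp only [gW, gw]
  rw [← Real.exp_sum, Finset.sum_sub_distrib]
  simp

theorem gW_nonneg {n : ℕ} (E : S → ℝ) (τ : Fin n → S) : 0 ≤ gW E τ := (Real.exp_pos _).le

theorem gW_le_one {n : ℕ} (E : S → ℝ) (τ : Fin n → S) : gW E τ ≤ 1 := by
  rw [gW_eq]
  exact Finset.prod_le_one (fun _ _ => gw_nonneg _ _) (fun _ _ => gw_le_one _ _)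

theorem gW_sum {n : ℕ} (E : S → ℝ) : ∑ τ : Fin n → S, gW E τ = 1 := by
  simp only [gW_eq]
  rw [← Fintype.prod_sum]
  simp [gw_sum]

theorem gW_cons {n : ℕ} (E : S → ℝ) (ρ : S) (τ : Fin n → S) :
    gW E (Fin.cons ρ τ : Fin (n+1) → S) = gw E ρ * gW E τ := by
  simp only [gW_eq, Fin.prod_univ_succ, Fin.cons_zero, Fin.cons_succ]

theorem FE_add (E X : S → ℝ) : FE (fun σ => E σ + X σ) = FE E + Real.log (∑ σ, gw E σ * Real.exp (X σ)) := by
  have h : ∑ σ, Real.exp (E σ + X σ) = Real.exp (FE E) * ∑ σ, gw E σ * Real.exp (X σ) := by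
    rw [Finset.mul_sum]
    refine Finset.sum_congr rfl fun σ _ => ?_
    rw [gw, ← Real.exp_add, ← Real.exp_add]
    congr 1; ring
  have h2 : 0 < ∑ σ, gw E σ * Real.exp (X σ) :=
    Finset.sum_pos (fun _ _ => mul_pos (Real.exp_pos _) (Real.exp_pos _)) Finset.univ_nonempty
  rw [FE, h, Real.log_mul (Real.exp_pos _).ne' h2.ne', Real.log_exp]

theorem jensen_gw (E X : S → ℝ) : ∑ σ, gw E σ * X σ ≤ Real.log (∑ σ, gw E σ * Real.exp (X σ)) := by
  set m := ∑ σ, gw E σ * X σ with hm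
  have h2 : 0 < ∑ σ, gw E σ * Real.exp (X σ) :=
    Finset.sum_pos (fun _ _ => mul_pos (Real.exp_pos _) (Real.exp_pos _)) Finset.univ_nonempty
  rw [Real.le_log_iff_exp_le h2]
  have : ∀ σ, Real.exp m * (gw E σ * (1 + X σ - m)) ≤ gw E σ * Real.exp (X σ) := by
    intro σ
    have h := Real.add_one_le_exp (X σ - m)
    have h3 : Real.exp m * (1 + X σ - m) ≤ Real.exp (X σ) := by
      calc Real.exp m * (1 + X σ - m) ≤ Real.exp m * Real.exp (X σ - m) := by
            gcongr; linarith
        _ = Real.exp (X σ) := by rw [← Real.exp_add]; congr 1; ring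
    nlinarith [gw_nonneg E σ]
  have h4 := Finset.sum_le_sum fun σ (_ : σ ∈ Finset.univ) => this σ
  rw [← Finset.mul_sum] at h4
  have h5 : ∑ σ, gw E σ * (1 + X σ - m) = 1 := by
    have : ∀ σ, gw E σ * (1 + X σ - m) = gw E σ * (1 - m) + gw E σ * X σ := fun σ => by ring
    simp_rw [this]
    rw [Finset.sum_add_distrib, ← Finset.sum_mul, gw_sum, ← hm]
    ring
  rw [h5, mul_one] at h4
  exact h4

theorem FE_add_ge (E X : S → ℝ) : FE E + ∑ σ, gw E σ * X σ ≤ FE (fun σ => E σ + X σ) := by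
  rw [FE_add]; linarith [jensen_gw E X]

theorem le_FE (E : S → ℝ) (σ : S) : E σ ≤ FE E := by
  rw [FE, Real.le_log_iff_exp_le (Z_pos E)]
  exact Finset.single_le_sum (f := fun σ => Real.exp (E σ)) (fun i _ => (Real.exp_pos _).le) (Finset.mem_univ σ)

theorem FE_le (E : S → ℝ) {m : ℝ} (h : ∀ σ, E σ ≤ m) : FE E ≤ m + Real.log (Fintype.card S) := by
  have hc : (0 : ℝ) < Fintype.card S := by exact_mod_cast Fintype.card_pos
  rw [FE, Real.log_le_iff_le_exp (Z_pos E), Real.exp_add, Real.exp_log hc]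
  calc ∑ σ, Real.exp (E σ) ≤ ∑ σ : S, Real.exp m := Finset.sum_le_sum fun σ _ => Real.exp_le_exp.2 (h σ)
    _ = _ := by simp [mul_comm]

theorem FE_mono_add (E E' : S → ℝ) {δ : ℝ} (h : ∀ σ, E σ ≤ E' σ + δ) : FE E ≤ FE E' + δ := by
  rw [FE, Real.log_le_iff_le_exp (Z_pos E), Real.exp_add, exp_FE, Finset.sum_mul]
  refine Finset.sum_le_sum fun σ _ => ?_
  rw [← Real.exp_add]; exact Real.exp_le_exp.2 (h σ)

theorem FE_abs_sub (E E' : S → ℝ) {δ : ℝ} (h : ∀ σ, |E σ - E' σ| ≤ δ) : |FE E - FE E'| ≤ δ := by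
  rw [abs_le]
  constructor
  · have := FE_mono_add E' E (δ := δ) fun σ => by have := (abs_le.1 (h σ)).1; linarith
    linarith
  · have := FE_mono_add E E' (δ := δ) fun σ => by have := (abs_le.1 (h σ)).2; linarith
    linarith

theorem FE_deriv {E : ℝ → S → ℝ} {a : S → ℝ} {u : ℝ} (h : ∀ σ, HasDerivAt (fun u => E u σ) (a σ) u) :
    HasDerivAt (fun u => FE (E u)) (∑ σ, gw (E u) σ * a σ) u := by
  have h1 : HasDerivAt (fun u => ∑ σ, Real.exp (E u σ)) (∑ σ, Real.exp (E u σ) * a σ) u :=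
    HasDerivAt.fun_sum fun σ _ => (h σ).exp
  have h2 := h1.log (Z_pos (E u)).ne'
  refine h2.congr_deriv ?_
  rw [Finset.sum_div]
  refine Finset.sum_congr rfl fun σ _ => ?_
  rw [gw, Real.exp_sub, exp_FE]; ring

theorem gW_deriv {n : ℕ} {E : ℝ → S → ℝ} {a : S → ℝ} {u : ℝ}
    (h : ∀ σ, HasDerivAt (fun u => E u σ) (a σ) u) (τ : Fin n → S) :
    HasDerivAt (fun u => gW (E u) τ)
      (gW (E u) τ * (∑ l, a (τ l) - n * ∑ σ, gw (E u) σ * a σ)) u := by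
  have h1 : HasDerivAt (fun u => ∑ l, E u (τ l)) (∑ l, a (τ l)) u :=
    HasDerivAt.fun_sum fun l _ => h _
  exact (h1.sub ((FE_deriv h).const_mul (n : ℝ))).exp

variable {ι : Type*} [Fintype ι]

/-- linear Gaussian energy -/
noncomputable def en (c : S → ℝ) (a : ι → S → ℝ) (g : ι → ℝ) (σ : S) : ℝ := c σ + ∑ i, a i σ * g i

theorem en_cont (c : S → ℝ) (a : ι → S → ℝ) (σ : S) : Continuous fun g => en c a g σ := by
  unfold en; fun_prop

theorem FE_cont (c : S → ℝ) (a : ι → S → ℝ) : Continuous fun g => FE (en c a g) := by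
  unfold FE
  refine Continuous.log ?_ fun g => (Z_pos _).ne'
  exact continuous_finsetSum _ fun σ _ => (en_cont c a σ).rexp

theorem gw_cont (c : S → ℝ) (a : ι → S → ℝ) (σ : S) : Continuous fun g => gw (en c a g) σ := by
  unfold gw
  exact ((en_cont c a σ).sub (FE_cont c a)).rexp

theorem gW_cont {n : ℕ} (c : S → ℝ) (a : ι → S → ℝ) (τ : Fin n → S) :
    Continuous fun g => gW (en c a g) τ := by
  simp only [gW_eq]
  exact continuous_finsetProd _ fun l _ => gw_cont c a _

theorem FE_lip (c : S → ℝ) (a : ι → S → ℝ) {C : ι → ℝ} (h : ∀ i σ, |a i σ| ≤ C i) :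
    LipC C fun g => FE (en c a g) := by
  intro g g'
  refine FE_abs_sub _ _ fun σ => ?_
  have : en c a g σ - en c a g' σ = ∑ i, a i σ * (g i - g' i) := by
    simp only [en, mul_sub, Finset.sum_sub_distrib]; ring
  rw [this]
  refine (Finset.abs_sum_le_sum_abs _ _).trans (Finset.sum_le_sum fun i _ => ?_)
  rw [abs_mul]
  exact mul_le_mul_of_nonneg_right (h i σ) (abs_nonneg _)

theorem FE_integrable (c : S → ℝ) (a : ι → S → ℝ) : Integrable (fun g => FE (en c a g)) (gm ι) :=
  (FE_lip c a (C := fun i => ∑ σ, |a i σ|) fun i σ =>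
    Finset.single_le_sum (f := fun σ => |a i σ|) (fun _ _ => abs_nonneg _) (Finset.mem_univ σ)).integrable

theorem gibbs_ibp (c : S → ℝ) (a b : ι → S → ℝ) {n : ℕ} (l0 : Fin n) (f : (Fin n → S) → ℝ) :
    ∫ g, ∑ τ, gW (en c a g) τ * (f τ * ∑ i, b i (τ l0) * g i) ∂(gm ι)
    = ∫ g, ∑ τ, gW (en c a g) τ * (f τ * (∑ l, (∑ i, b i (τ l0) * a i (τ l))
        - n * ∑ ρ, gw (en c a g) ρ * ∑ i, b i (τ l0) * a i ρ)) ∂(gm ι) := by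
  classical
  set F : ι → (ι → ℝ) → ℝ := fun i g => ∑ τ, gW (en c a g) τ * (f τ * b i (τ l0)) with hF
  set F' : ι → (ι → ℝ) → ℝ := fun i g => ∑ τ, gW (en c a g) τ *
    (∑ l, a i (τ l) - n * ∑ σ, gw (en c a g) σ * a i σ) * (f τ * b i (τ l0)) with hF'
  have cF : ∀ i, Continuous (F i) := fun i =>
    continuous_finsetSum _ fun τ _ => (gW_cont c a τ).mul continuous_const
  have cF' : ∀ i, Continuous (F' i) := fun i =>
    continuous_finsetSum _ fun τ _ => ((gW_cont c a τ).mul (continuous_const.sub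
      (continuous_const.mul (continuous_finsetSum _ fun σ _ => (gw_cont c a σ).mul continuous_const)))).mul
      continuous_const
  set C : ι → ℝ := fun i => ∑ τ : Fin n → S, |f τ * b i (τ l0)| with hC
  set C' : ι → ℝ := fun i => ∑ τ : Fin n → S, (∑ l, |a i (τ l)| + n * ∑ σ, |a i σ|) * |f τ * b i (τ l0)| with hC'
  have bF : ∀ i g, |F i g| ≤ C i := fun i g => by
    refine (Finset.abs_sum_le_sum_abs _ _).trans (Finset.sum_le_sum fun τ _ => ?_)
    rw [abs_mul, abs_of_nonneg (gW_nonneg _ _)]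
    exact mul_le_of_le_one_left (abs_nonneg _) (gW_le_one _ _)
  have bF' : ∀ i g, |F' i g| ≤ C' i := fun i g => by
    refine (Finset.abs_sum_le_sum_abs _ _).trans (Finset.sum_le_sum fun τ _ => ?_)
    rw [abs_mul, abs_mul, abs_of_nonneg (gW_nonneg _ _)]
    refine mul_le_mul_of_nonneg_right ?_ (abs_nonneg _)
    refine (mul_le_of_le_one_left (abs_nonneg _) (gW_le_one _ _)).trans ?_
    refine (abs_sub _ _).trans (add_le_add (Finset.abs_sum_le_sum_abs _ _) ?_)
    rw [abs_mul, Nat.abs_cast]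
    refine mul_le_mul_of_nonneg_left ?_ (Nat.cast_nonneg _)
    refine (Finset.abs_sum_le_sum_abs _ _).trans (Finset.sum_le_sum fun σ _ => ?_)
    rw [abs_mul, abs_of_nonneg (gw_nonneg _ _)]
    exact mul_le_of_le_one_left (abs_nonneg _) (gw_le_one _ _)
  have C0 : ∀ i, 0 ≤ C i := fun i => (abs_nonneg _).trans (bF i 0)
  have C0' : ∀ i, 0 ≤ C' i := fun i => (abs_nonneg _).trans (bF' i 0)
  have key : ∀ i, ∫ g, g i * F i g ∂(gm ι) = ∫ g, F' i g ∂(gm ι) := by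
    intro i
    refine stein i (C := C i + C' i) ?_ (cF i).measurable (cF' i).measurable
      (fun g => (bF i g).trans (by linarith [C0' i])) (fun g => (bF' i g).trans (by linarith [C0 i]))
    intro g u
    have hE : ∀ σ, HasDerivAt (fun u => en c a (Function.update g i u) σ) (a i σ) u := by
      intro σ
      have : (fun u => en c a (Function.update g i u) σ) =
          fun u => (c σ + ∑ k ∈ Finset.univ.erase i, a k σ * g k) + a i σ * u := by
        ext u
        rw [en, ← Finset.add_sum_erase _ _ (Finset.mem_univ i)]
        have : ∑ k ∈ Finset.univ.erase i, a k σ * Function.update g i u k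
            = ∑ k ∈ Finset.univ.erase i, a k σ * g k :=
          Finset.sum_congr rfl fun k hk => by rw [Function.update_of_ne (Finset.ne_of_mem_erase hk)]
        rw [this, Function.update_self]; ring
      rw [this]
      simpa using ((hasDerivAt_id u).const_mul (a i σ)).const_add
        (c σ + ∑ k ∈ Finset.univ.erase i, a k σ * g k)
    exact HasDerivAt.fun_sum fun τ _ => (gW_deriv hE τ).mul_const _
  have i1 : ∀ i, Integrable (fun g => g i * F i g) (gm ι) := fun i =>
    (integrable_coord i).mul_bdd (c := C i) (cF i).aestronglyMeasurable (ae_of_all _ (bF i))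
  have i2 : ∀ i, Integrable (F' i) (gm ι) := fun i =>
    Integrable.of_bound (cF' i).aestronglyMeasurable (C' i) (ae_of_all _ (bF' i))
  calc _ = ∫ g, ∑ i, g i * F i g ∂(gm ι) := by
        congr 1; ext g
        simp only [hF, Finset.mul_sum]
        rw [Finset.sum_comm]
        refine Finset.sum_congr rfl fun i _ => Finset.sum_congr rfl fun τ _ => by ring
    _ = ∑ i, ∫ g, F' i g ∂(gm ι) := by
        rw [integral_finsetSum _ fun i _ => i1 i]
        exact Finset.sum_congr rfl fun i _ => key i
    _ = ∫ g, ∑ i, F' i g ∂(gm ι) := by rw [integral_finsetSum _ fun i _ => i2 i]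
    _ = _ := by
        congr 1; ext g
        simp only [hF']
        rw [Finset.sum_comm]
        refine Finset.sum_congr rfl fun τ _ => ?_
        have e1 : ∑ l, ∑ i, b i (τ l0) * a i (τ l) = ∑ i, b i (τ l0) * ∑ l, a i (τ l) := by
          rw [Finset.sum_comm]; simp only [Finset.mul_sum]
        have e2 : ∑ ρ, gw (en c a g) ρ * ∑ i, b i (τ l0) * a i ρ
            = ∑ i, b i (τ l0) * ∑ ρ, gw (en c a g) ρ * a i ρ := by
          simp only [Finset.mul_sum]
          rw [Finset.sum_comm]
          refine Finset.sum_congr rfl fun i _ => Finset.sum_congr rfl fun τ _ => by ring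
        rw [e1, e2]
        rw [Finset.mul_sum (a := (n : ℝ)), ← Finset.sum_sub_distrib, Finset.mul_sum, Finset.mul_sum]
        refine Finset.sum_congr rfl fun i _ => by ring

end Gibbs
end PSpin


namespace PSpin

/-- the Ghirlanda-Guerra defect for the kernel `φ ∘ R` -/
noncomputable def GG {S : Type} [Fintype S] (R : S → S → ℝ) (q : (n : ℕ) → (Fin n → S) → ℝ)
    (n : ℕ) (l0 : Fin n) (f : (Fin n → S) → ℝ) (φ : ℝ → ℝ) : ℝ :=
  ∑ τ, q n τ * (f τ * ∑ l, φ (R (τ l0) (τ l)))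
    - n * ∑ τ, ∑ ρ, q (n+1) (Fin.cons ρ τ : Fin (n+1) → S) * (f τ * φ (R (τ l0) ρ))
    - (∑ τ, q n τ * f τ) * (φ 1 - ∑ τ : Fin 2 → S, q 2 τ * φ (R (τ 0) (τ 1)))

/-- the data of a consistent family of replicas -/
structure Rep {S : Type} [Fintype S] (R : S → S → ℝ) (q : (n : ℕ) → (Fin n → S) → ℝ) : Prop where
  bd : ∀ σ ρ, |R σ ρ| ≤ 1
  diag : ∀ σ, R σ σ = 1
  symm : ∀ σ ρ, R σ ρ = R ρ σ
  psd : ∀ (n : ℕ) (τ : Fin n → S), 0 ≤ ∑ l, ∑ l', R (τ l) (τ l')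
  nn : ∀ n τ, 0 ≤ q n τ
  one : ∀ n, ∑ τ, q n τ = 1
  cons : ∀ n τ, ∑ ρ, q (n+1) (Fin.cons ρ τ : Fin (n+1) → S) = q n τ

variable {S : Type} [Fintype S] {R : S → S → ℝ} {q : (n : ℕ) → (Fin n → S) → ℝ}

theorem GG_one (h : Rep R q) (n : ℕ) (l0 : Fin n) (f : (Fin n → S) → ℝ) :
    GG R q n l0 f (fun _ => 1) = 0 := by
  unfold GG
  simp only [mul_one, h.one, ← Finset.sum_mul, h.cons]
  simp [← mul_assoc, ← Finset.sum_mul]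
  ring

theorem GG_add (n : ℕ) (l0 : Fin n) (f : (Fin n → S) → ℝ) (φ ψ : ℝ → ℝ) :
    GG R q n l0 f (fun x => φ x + ψ x) = GG R q n l0 f φ + GG R q n l0 f ψ := by
  unfold GG
  simp only [mul_add, Finset.sum_add_distrib]
  ring

theorem GG_smul (n : ℕ) (l0 : Fin n) (f : (Fin n → S) → ℝ) (c : ℝ) (φ : ℝ → ℝ) :
    GG R q n l0 f (fun x => c * φ x) = c * GG R q n l0 f φ := by
  unfold GG
  have e1 : ∑ τ, q n τ * (f τ * ∑ l, c * φ (R (τ l0) (τ l))) =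
      c * ∑ τ, q n τ * (f τ * ∑ l, φ (R (τ l0) (τ l))) := by
    rw [Finset.mul_sum]; refine Finset.sum_congr rfl fun τ _ => ?_
    rw [← Finset.mul_sum]; ring
  have e2 : ∑ τ, ∑ ρ, q (n+1) (Fin.cons ρ τ : Fin (n+1) → S) * (f τ * (c * φ (R (τ l0) ρ))) =
      c * ∑ τ, ∑ ρ, q (n+1) (Fin.cons ρ τ : Fin (n+1) → S) * (f τ * φ (R (τ l0) ρ)) := by
    rw [Finset.mul_sum]; refine Finset.sum_congr rfl fun τ _ => ?_
    rw [Finset.mul_sum]; refine Finset.sum_congr rfl fun ρ _ => ?_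
    ring
  have e3 : ∑ τ : Fin 2 → S, q 2 τ * (c * φ (R (τ 0) (τ 1))) =
      c * ∑ τ : Fin 2 → S, q 2 τ * φ (R (τ 0) (τ 1)) := by
    rw [Finset.mul_sum]; refine Finset.sum_congr rfl fun τ _ => ?_
    ring
  rw [e1, e2, e3]; ring

theorem sum_q_le (h : Rep R q) (n : ℕ) (f : (Fin n → S) → ℝ) {c : ℝ} (hf : ∀ τ, |f τ| ≤ c) :
    |∑ τ, q n τ * f τ| ≤ c := by
  calc |∑ τ, q n τ * f τ| ≤ ∑ τ, |q n τ * f τ| := Finset.abs_sum_le_sum_abs _ _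
    _ ≤ ∑ τ, q n τ * c := Finset.sum_le_sum fun τ _ => by
        rw [abs_mul, abs_of_nonneg (h.nn n τ)]
        exact mul_le_mul_of_nonneg_left (hf τ) (h.nn n τ)
    _ = c := by rw [← Finset.sum_mul, h.one, one_mul]

theorem GG_bd (h : Rep R q) (n : ℕ) (l0 : Fin n) (f : (Fin n → S) → ℝ) (hf : ∀ τ, |f τ| ≤ 1)
    (φ : ℝ → ℝ) {t : ℝ} (hφ : ∀ x, |x| ≤ 1 → |φ x| ≤ t) :
    |GG R q n l0 f φ| ≤ (2 * n + 2) * t := by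
  have ht : 0 ≤ t := (abs_nonneg _).trans (hφ 0 (by simp))
  have hR : ∀ σ ρ, |φ (R σ ρ)| ≤ t := fun σ ρ => hφ _ (h.bd σ ρ)
  have h1 : |∑ τ, q n τ * (f τ * ∑ l, φ (R (τ l0) (τ l)))| ≤ n * t := by
    refine sum_q_le h n _ fun τ => ?_
    rw [abs_mul]
    have : |∑ l, φ (R (τ l0) (τ l))| ≤ n * t := by
      refine (Finset.abs_sum_le_sum_abs _ _).trans ?_
      refine (Finset.sum_le_sum fun l _ => hR _ _).trans ?_
      simp
    calc _ ≤ 1 * (n * t) := mul_le_mul (hf τ) this (abs_nonneg _) zero_le_one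
      _ = _ := one_mul _
  have h2 : |∑ τ, ∑ ρ, q (n+1) (Fin.cons ρ τ : Fin (n+1) → S) * (f τ * φ (R (τ l0) ρ))| ≤ t := by
    refine (Finset.abs_sum_le_sum_abs _ _).trans ?_
    calc _ ≤ ∑ τ, ∑ ρ, q (n+1) (Fin.cons ρ τ : Fin (n+1) → S) * t := by
          refine Finset.sum_le_sum fun τ _ => (Finset.abs_sum_le_sum_abs _ _).trans ?_
          refine Finset.sum_le_sum fun ρ _ => ?_
          rw [abs_mul, abs_of_nonneg (h.nn _ _), abs_mul]
          refine mul_le_mul_of_nonneg_left ?_ (h.nn _ _)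
          calc _ ≤ 1 * t := mul_le_mul (hf τ) (hR _ _) (abs_nonneg _) zero_le_one
            _ = _ := one_mul _
      _ = t := by simp only [← Finset.sum_mul, h.cons, h.one, one_mul]
  have h3 : |∑ τ, q n τ * f τ| ≤ 1 := sum_q_le h n _ hf
  have h4 : |∑ τ : Fin 2 → S, q 2 τ * φ (R (τ 0) (τ 1))| ≤ t := sum_q_le h 2 _ fun τ => hR _ _
  have h5 : |φ 1| ≤ t := hφ 1 (by simp)
  unfold GG
  refine (abs_sub _ _).trans ?_
  have h6 : |(∑ τ, q n τ * f τ) * (φ 1 - ∑ τ : Fin 2 → S, q 2 τ * φ (R (τ 0) (τ 1)))| ≤ 1 * (2 * t) := by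
    rw [abs_mul]
    refine mul_le_mul h3 ?_ (abs_nonneg _) zero_le_one
    refine (abs_sub _ _).trans ?_
    linarith
  have h7 : |(n : ℝ) * ∑ τ, ∑ ρ, q (n+1) (Fin.cons ρ τ : Fin (n+1) → S) * (f τ * φ (R (τ l0) ρ))| ≤ n * t := by
    rw [abs_mul, abs_of_nonneg (Nat.cast_nonneg n)]
    exact mul_le_mul_of_nonneg_left h2 (Nat.cast_nonneg n)
  have h8 := abs_sub (∑ τ, q n τ * (f τ * ∑ l, φ (R (τ l0) (τ l))))
    ((n : ℝ) * ∑ τ, ∑ ρ, q (n+1) (Fin.cons ρ τ : Fin (n+1) → S) * (f τ * φ (R (τ l0) ρ)))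
  linarith

theorem GG_poly (h : Rep R q) (n : ℕ) (l0 : Fin n) (f : (Fin n → S) → ℝ) (P : Polynomial ℝ)
    {D : ℕ} (hD : P.natDegree ≤ D) {Δ : ℕ → ℝ}
    (hΔ : ∀ d < D, |GG R q n l0 f (fun x => x ^ (d+1))| ≤ Δ d) :
    |GG R q n l0 f (fun x => P.eval x)| ≤ ∑ d ∈ Finset.range D, |P.coeff (d+1)| * Δ d := by
  have key : ∀ m ≤ D, |GG R q n l0 f (fun x => ∑ i ∈ Finset.range (m+1), P.coeff i * x ^ i)|
      ≤ ∑ d ∈ Finset.range m, |P.coeff (d+1)| * Δ d := by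
    intro m
    induction m with
    | zero =>
      intro _
      have := GG_smul (R := R) (q := q) n l0 f (P.coeff 0) (fun _ => 1)
      rw [GG_one h, mul_zero] at this
      simp only [zero_add, Finset.range_one, Finset.sum_singleton, pow_zero, this]
      simp
    | succ m ih =>
      intro hm
      have ih := ih (by omega)
      simp only [Finset.sum_range_succ _ (m+1)]
      rw [GG_add n l0 f, GG_smul, Finset.sum_range_succ]
      refine (abs_add_le _ _).trans (add_le_add ih ?_)
      rw [abs_mul]
      exact mul_le_mul_of_nonneg_left (hΔ m (by omega)) (abs_nonneg _)
  have := key D le_rfl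
  have e : (fun x : ℝ => P.eval x) = fun x => ∑ i ∈ Finset.range (D+1), P.coeff i * x ^ i := by
    funext x
    exact Polynomial.eval_eq_sum_range' (by omega) x
  rw [e]; exact this

theorem GG_approx (h : Rep R q) (n : ℕ) (l0 : Fin n) (f : (Fin n → S) → ℝ) (hf : ∀ τ, |f τ| ≤ 1)
    (P : Polynomial ℝ)
    {D : ℕ} (hD : P.natDegree ≤ D) {Δ : ℕ → ℝ}
    (hΔ : ∀ d < D, |GG R q n l0 f (fun x => x ^ (d+1))| ≤ Δ d) (ψ : ℝ → ℝ) {t : ℝ}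
    (hψ : ∀ x, |x| ≤ 1 → |ψ x - P.eval x| ≤ t) :
    |GG R q n l0 f ψ| ≤ (2 * n + 2) * t + ∑ d ∈ Finset.range D, |P.coeff (d+1)| * Δ d := by
  have e : ψ = fun x => (ψ x - P.eval x) + P.eval x := by funext x; ring
  rw [e, GG_add]
  exact (abs_add_le _ _).trans (add_le_add (GG_bd h n l0 f hf _ hψ) (GG_poly h n l0 f P hD hΔ))

/-- ramp -/
noncomputable def ramp (u v x : ℝ) : ℝ := max 0 (min 1 ((x - u) / (v - u)))

theorem ramp_nonneg (u v x : ℝ) : 0 ≤ ramp u v x := le_max_left _ _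
theorem ramp_le_one (u v x : ℝ) : ramp u v x ≤ 1 := max_le zero_le_one (min_le_left _ _)
theorem ramp_lo {u v x : ℝ} (h : u < v) (hx : x ≤ u) : ramp u v x = 0 := by
  unfold ramp
  exact max_eq_left ((min_le_right _ _).trans (div_nonpos_of_nonpos_of_nonneg (by linarith) (by linarith)))
theorem ramp_hi {u v x : ℝ} (h : u < v) (hx : v ≤ x) : ramp u v x = 1 := by
  unfold ramp
  rw [min_eq_left, max_eq_right zero_le_one]
  rw [le_div_iff₀ (by linarith)]; linarith
theorem ramp_cont (u v : ℝ) : Continuous (ramp u v) := by unfold ramp; fun_prop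

open Classical in
/-- indicator that all distinct replicas have overlap at most `y` -/
noncomputable def allLe (R : S → S → ℝ) (y : ℝ) (n : ℕ) (τ : Fin n → S) : ℝ :=
  if ∀ l l', l ≠ l' → R (τ l) (τ l') ≤ y then 1 else 0

theorem step (h : Rep R q) {n : ℕ} (hn : 0 < n) {u v : ℝ} (huv : u < v) (hv : v ≤ 1) {e a : ℝ}
    (he : ∀ l0, |GG R q n l0 (allLe R u n) (ramp u v)| ≤ e)
    (ha : a ≤ 1 - ∑ τ : Fin 2 → S, q 2 τ * ramp u v (R (τ 0) (τ 1))) :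
    a * (∑ τ, q n τ * allLe R u n τ) - e ≤ ∑ τ, q (n+1) τ * allLe R v (n+1) τ := by
  classical
  set T := ∑ τ, q n τ * allLe R u n τ with hT
  set w := ∑ τ : Fin 2 → S, q 2 τ * ramp u v (R (τ 0) (τ 1)) with hw
  have f0 : ∀ τ, 0 ≤ allLe R u n τ := fun τ => by unfold allLe; split_ifs <;> norm_num
  have T0 : 0 ≤ T := Finset.sum_nonneg fun τ _ => mul_nonneg (h.nn _ _) (f0 τ)
  have hn' : (0 : ℝ) < n := by exact_mod_cast hn
  have h1 : ∀ l0 : Fin n, (n : ℝ) * ∑ τ, ∑ ρ, q (n+1) (Fin.cons ρ τ : Fin (n+1) → S) *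
      (allLe R u n τ * ramp u v (R (τ l0) ρ)) ≤ T * w + e := by
    intro l0
    have := (abs_le.1 (he l0)).1
    unfold GG at this
    have e1 : ∑ τ, q n τ * (allLe R u n τ * ∑ l, ramp u v (R (τ l0) (τ l))) = T := by
      refine Finset.sum_congr rfl fun τ _ => ?_
      congr 1
      unfold allLe
      split_ifs with hh
      · rw [one_mul, Finset.sum_eq_single l0]
        · rw [h.diag]; exact ramp_hi huv hv
        · intro l _ hl
          exact ramp_lo huv (hh _ _ hl.symm)
        · simp
      · simp
    rw [e1, ramp_hi huv hv] at this
    linarith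
  have h2 : ∑ τ, ∑ ρ, q (n+1) (Fin.cons ρ τ : Fin (n+1) → S) *
      (allLe R u n τ * ∑ l, ramp u v (R (τ l) ρ)) ≤ T * w + e := by
    have : ∑ τ, ∑ ρ, q (n+1) (Fin.cons ρ τ : Fin (n+1) → S) *
      (allLe R u n τ * ∑ l, ramp u v (R (τ l) ρ)) = ∑ l, ∑ τ, ∑ ρ, q (n+1) (Fin.cons ρ τ : Fin (n+1) → S) *
      (allLe R u n τ * ramp u v (R (τ l) ρ)) := by
      simp only [Finset.mul_sum]
      rw [Finset.sum_comm' (t' := Finset.univ) (s' := fun _ => Finset.univ) (by simp)]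
      rw [Finset.sum_comm]
      rw [Finset.sum_comm (s := (Finset.univ : Finset (Fin n)))]
      refine Finset.sum_congr rfl fun τ _ => ?_
      rw [Finset.sum_comm]
    rw [this]
    calc _ ≤ ∑ l : Fin n, (T * w + e) / n := Finset.sum_le_sum fun l _ => by
            rw [le_div_iff₀ hn', mul_comm]; exact h1 l
      _ = T * w + e := by simp; field_simp
  have h3 : ∑ τ, q (n+1) τ * allLe R v (n+1) τ = ∑ τ, ∑ ρ, q (n+1) (Fin.cons ρ τ : Fin (n+1) → S) *
      allLe R v (n+1) (Fin.cons ρ τ : Fin (n+1) → S) := by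
    rw [← (Fin.consEquiv (fun _ : Fin (n+1) => S)).sum_comp, Fintype.sum_prod_type, Finset.sum_comm]
    rfl
  have h4 : ∀ τ : Fin n → S, ∀ ρ, allLe R u n τ - allLe R u n τ * ∑ l, ramp u v (R (τ l) ρ) ≤
      allLe R v (n+1) (Fin.cons ρ τ : Fin (n+1) → S) := by
    intro τ ρ
    by_cases h5 : ∀ l l', l ≠ l' → R (τ l) (τ l') ≤ u
    · by_cases h6 : ∀ l, R (τ l) ρ ≤ v
      · have : allLe R v (n+1) (Fin.cons ρ τ : Fin (n+1) → S) = 1 := by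
          unfold allLe
          rw [if_pos]
          intro l l'
          refine Fin.cases ?_ (fun i => ?_) l <;> refine Fin.cases ?_ (fun j => ?_) l'
          · simp
          · intro _; simp only [Fin.cons_zero, Fin.cons_succ]; rw [h.symm]; exact h6 j
          · intro _; simp only [Fin.cons_zero, Fin.cons_succ]; exact h6 i
          · intro hij; simp only [Fin.cons_succ]
            exact (h5 i j (fun hh => hij (by rw [hh]))).trans huv.le
        rw [this]
        have : allLe R u n τ = 1 := by unfold allLe; rw [if_pos h5]
        rw [this]
        have : 0 ≤ ∑ l, ramp u v (R (τ l) ρ) := Finset.sum_nonneg fun _ _ => ramp_nonneg _ _ _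
        linarith
      · push Not at h6
        obtain ⟨l, hl⟩ := h6
        have h7 : (1 : ℝ) ≤ ∑ l, ramp u v (R (τ l) ρ) := by
          rw [← ramp_hi huv hl.le]
          exact Finset.single_le_sum (f := fun l => ramp u v (R (τ l) ρ)) (fun _ _ => ramp_nonneg _ _ _) (Finset.mem_univ l)
        have h8 : 0 ≤ allLe R v (n+1) (Fin.cons ρ τ : Fin (n+1) → S) := by
          unfold allLe; split_ifs <;> norm_num
        nlinarith [f0 τ]
    · have : allLe R u n τ = 0 := by unfold allLe; rw [if_neg h5]
      rw [this]
      unfold allLe; split_ifs <;> norm_num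
  have h5 : ∑ τ, ∑ ρ, q (n+1) (Fin.cons ρ τ : Fin (n+1) → S) *
      (allLe R u n τ - allLe R u n τ * ∑ l, ramp u v (R (τ l) ρ)) ≤ ∑ τ, q (n+1) τ * allLe R v (n+1) τ := by
    rw [h3]
    exact Finset.sum_le_sum fun τ _ => Finset.sum_le_sum fun ρ _ =>
      mul_le_mul_of_nonneg_left (h4 τ ρ) (h.nn _ _)
  simp only [mul_sub, Finset.sum_sub_distrib] at h5
  have h6 : ∑ τ, ∑ ρ, q (n+1) (Fin.cons ρ τ : Fin (n+1) → S) * allLe R u n τ = T := by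
    simp only [← Finset.sum_mul, h.cons]; rfl
  rw [h6] at h5
  nlinarith

set_option maxHeartbeats 1600000 in
theorem positivity_lemma (ε : ℝ) (hε : 0 < ε) (hε1 : ε ≤ 1/4) : ∃ D : ℕ, ∃ C : ℝ, 0 ≤ C ∧
    ∀ (S : Type) [Fintype S] (R : S → S → ℝ) (q : (n : ℕ) → (Fin n → S) → ℝ) (_ : Rep R q)
      (Δ : ℕ → ℝ) (_ : ∀ d, 0 ≤ Δ d)
      (_ : ∀ d < D, ∀ n l0 f, (∀ τ, |f τ| ≤ 1) → |GG R q n l0 f (fun x => x ^ (d+1))| ≤ Δ d),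
      ∑ τ : Fin 2 → S, q 2 τ * max (-R (τ 0) (τ 1)) 0 ≤ 4 * ε + C * ∑ d ∈ Finset.range D, Δ d := by
  obtain ⟨m, hm⟩ := exists_nat_gt (1 / ε)
  have hmpos : (0 : ℝ) < m := lt_trans (by positivity) hm
  have hm0 : 0 < m := by exact_mod_cast hmpos
  have hm1 : 1 < m * ε := by rwa [div_lt_iff₀ hε] at hm
  set y : ℕ → ℝ := fun n => -2 * ε + ε * n / (m + 1) with hy
  have hylt : ∀ n, y n < y (n+1) := fun n => by
    simp only [hy]; push_cast
    have : 0 < ε / (m + 1) := by positivity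
    have e : ε * (n + 1 : ℝ) / (m + 1) = ε * n / (m+1) + ε / (m+1) := by ring
    rw [e]; linarith
  have hymono : StrictMono y := strictMono_nat_of_lt_succ hylt
  have hytop : y (m+1) = -ε := by
    simp only [hy]; push_cast; field_simp; ring
  set t : ℝ := ε ^ m / (m * (2 * (m + 1) + 2)) with ht
  have htpos : 0 < t := by positivity
  have hP : ∀ n : ℕ, ∃ P : Polynomial ℝ, ∀ x, |x| ≤ 1 → |ramp (y n) (y (n+1)) x - P.eval x| ≤ t := by
    intro n
    obtain ⟨P, hP⟩ := exists_polynomial_near_of_continuousOn (-1) 1 (ramp (y n) (y (n+1)))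
      (ramp_cont _ _).continuousOn t htpos
    refine ⟨P, fun x hx => ?_⟩
    rw [abs_sub_comm]
    exact (hP x (abs_le.1 hx)).le
  choose P hP using hP
  set D := (Finset.range (m+1)).sup (fun n => (P n).natDegree) with hD
  set c0 : ℝ := ∑ n ∈ Finset.range (m+1), ∑ d ∈ Finset.range D, |(P n).coeff (d+1)| with hc0
  have c00 : 0 ≤ c0 := Finset.sum_nonneg fun _ _ => Finset.sum_nonneg fun _ _ => abs_nonneg _
  refine ⟨D, m / ε ^ (m-1) * c0, by positivity, ?_⟩
  intro S _ R q h Δ hΔ0 hΔ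
  set s := ∑ d ∈ Finset.range D, Δ d with hs
  have hs0 : 0 ≤ s := Finset.sum_nonneg fun _ _ => hΔ0 _
  set e : ℝ := (2 * (m + 1) + 2) * t + c0 * s with he
  have he0 : 0 ≤ e := by positivity
  set a : ℝ := ∑ τ : Fin 2 → S, q 2 τ * (if R (τ 0) (τ 1) ≤ y 1 then 1 else 0) with ha
  have ha0 : 0 ≤ a := Finset.sum_nonneg fun τ _ => mul_nonneg (h.nn _ _) (by split_ifs <;> norm_num)
  have ha1 : a ≤ 1 := by
    rw [← h.one 2]
    refine Finset.sum_le_sum fun τ _ => ?_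
    have := h.nn 2 τ
    split_ifs <;> simp [this]
  have hw : ∀ n, 1 ≤ n → a ≤ 1 - ∑ τ : Fin 2 → S, q 2 τ * ramp (y n) (y (n+1)) (R (τ 0) (τ 1)) := by
    intro n hn
    rw [← h.one 2, ← Finset.sum_sub_distrib]
    refine Finset.sum_le_sum fun τ _ => ?_
    have h0 := h.nn 2 τ
    split_ifs with hh
    · rw [ramp_lo (hylt n) (hh.trans (hymono.monotone hn))]; simp
    · have := ramp_le_one (y n) (y (n+1)) (R (τ 0) (τ 1))
      nlinarith
  have hfb : ∀ n u τ, |allLe R u n τ| ≤ 1 := fun n u τ => by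
    unfold allLe; split_ifs <;> simp
  have hGG : ∀ n ≤ m, ∀ l0, |GG R q n l0 (allLe R (y n) n) (ramp (y n) (y (n+1)))| ≤ e := by
    intro n hn l0
    have hmem : n ∈ Finset.range (m+1) := Finset.mem_range.2 (by omega)
    have := GG_approx h n l0 (allLe R (y n) n) (hfb _ _) (P n)
      (D := D) (Finset.le_sup (f := fun n => (P n).natDegree) hmem)
      (fun d hd => hΔ d hd n l0 _ (hfb _ _)) (ramp (y n) (y (n+1))) (hP n)
    refine this.trans (add_le_add ?_ ?_)
    · refine mul_le_mul_of_nonneg_right ?_ htpos.le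
      have : (n : ℝ) ≤ m := by exact_mod_cast hn
      linarith
    · calc _ ≤ ∑ d ∈ Finset.range D, |(P n).coeff (d+1)| * s := Finset.sum_le_sum fun d hd =>
            mul_le_mul_of_nonneg_left (Finset.single_le_sum (fun i _ => hΔ0 i) hd) (abs_nonneg _)
        _ = (∑ d ∈ Finset.range D, |(P n).coeff (d+1)|) * s := by rw [Finset.sum_mul]
        _ ≤ c0 * s := by
          refine mul_le_mul_of_nonneg_right ?_ hs0
          exact Finset.single_le_sum (f := fun n => ∑ d ∈ Finset.range D, |(P n).coeff (d+1)|)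
            (fun _ _ => Finset.sum_nonneg fun _ _ => abs_nonneg _) hmem
  have hind : ∀ n ≤ m, a ^ n - n * e ≤ ∑ τ, q (n+1) τ * allLe R (y (n+1)) (n+1) τ := by
    intro n
    induction n with
    | zero =>
      intro _
      have : ∀ τ : Fin 1 → S, allLe R (y 1) 1 τ = 1 := fun τ => by
        unfold allLe; rw [if_pos]; intro l l' hl
        exact absurd (Subsingleton.elim l l') hl
      simp [this, h.one]
    | succ n ih =>
      intro hn
      have ih := ih (by omega)
      have hst := step h (n := n+1) (by omega) (hylt (n+1))
        (by have := hymono.monotone (show n+1+1 ≤ m+1 by omega); rw [hytop] at this; linarith)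
        (hGG (n+1) hn) (hw (n+1) (by omega))
      refine le_trans ?_ hst
      have h1 : a * (a ^ n - n * e) ≤ a * ∑ τ, q (n+1) τ * allLe R (y (n+1)) (n+1) τ :=
        mul_le_mul_of_nonneg_left ih ha0
      have h2 : a * (n * e) ≤ n * e := by
        have : (0:ℝ) ≤ n * e := by positivity
        nlinarith
      push_cast
      rw [pow_succ]
      nlinarith
  have hfin : ∑ τ, q (m+1) τ * allLe R (y (m+1)) (m+1) τ = 0 := by
    refine Finset.sum_eq_zero fun τ _ => ?_
    unfold allLe
    rw [if_neg, mul_zero]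
    intro hh
    have hp := h.psd (m+1) τ
    have : ∑ l, ∑ l', R (τ l) (τ l') ≤ ∑ l : Fin (m+1), (1 + m * (-ε)) := by
      refine Finset.sum_le_sum fun l _ => ?_
      rw [← Finset.add_sum_erase _ _ (Finset.mem_univ l), h.diag]
      refine add_le_add le_rfl ?_
      calc _ ≤ ∑ l' ∈ Finset.univ.erase l, (-ε) := Finset.sum_le_sum fun l' hl' => by
              have := hh l l' (Finset.ne_of_mem_erase hl').symm
              rwa [hytop] at this
        _ = m * (-ε) := by simp
    have h2 : ∑ l : Fin (m+1), (1 + (m:ℝ) * (-ε)) = (m+1) * (1 + m * (-ε)) := by simp; ring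
    rw [h2] at this
    have : (m+1 : ℝ) * (1 + m * (-ε)) < 0 := mul_neg_of_pos_of_neg (by positivity) (by linarith)
    linarith
  have hae : a ^ m ≤ m * e := by
    have := hind m le_rfl
    rw [hfin] at this; linarith
  have ha2 : a ≤ ε + m * e / ε ^ (m-1) := by
    by_cases hc : a ≤ ε
    · have : 0 ≤ m * e / ε ^ (m-1) := by positivity
      linarith
    · push Not at hc
      have h1 : ε ^ (m-1) * a ≤ a ^ m := by
        calc _ ≤ a ^ (m-1) * a := mul_le_mul_of_nonneg_right (pow_le_pow_left₀ hε.le hc.le _) ha0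
          _ = a ^ m := by rw [← pow_succ]; congr 1; omega
      have : a ≤ m * e / ε ^ (m-1) := by
        rw [le_div_iff₀ (by positivity)]; linarith
      linarith
  have h3 : m * e / ε ^ (m-1) = ε + m / ε ^ (m-1) * c0 * s := by
    have : ε ^ m = ε ^ (m-1) * ε := by rw [← pow_succ]; congr 1; omega
    rw [he, ht, this]
    field_simp
  have h4 : ∑ τ : Fin 2 → S, q 2 τ * max (-R (τ 0) (τ 1)) 0 ≤ 2 * ε + a := by
    have e1 : 2 * ε = ∑ τ : Fin 2 → S, q 2 τ * (2 * ε) := by rw [← Finset.sum_mul, h.one, one_mul]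
    rw [e1, ← Finset.sum_add_distrib]
    refine Finset.sum_le_sum fun τ _ => ?_
    rw [← mul_add]
    refine mul_le_mul_of_nonneg_left ?_ (h.nn _ _)
    have hb := (abs_le.1 (h.bd (τ 0) (τ 1))).1
    split_ifs with hh
    · exact max_le (by linarith) (by linarith)
    · have hy1 : -2 * ε ≤ y 1 := by
        simp only [hy]
        have : 0 ≤ ε * ((1:ℕ):ℝ) / (m+1) := by positivity
        linarith
      exact max_le (by linarith) (by linarith)
  linarith

end PSpin


namespace PSpin

section
variable {S : Type*} [Fintype S] [Nonempty S] {ι : Type*} [Fintype ι]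

theorem int_lin (b : ι → S → ℝ) (σ : S) : Integrable (fun g : ι → ℝ => ∑ i, b i σ * g i) (gm ι) :=
  integrable_finsetSum _ fun i _ => (integrable_coord i).const_mul _

theorem int_gW {n : ℕ} (c : S → ℝ) (a : ι → S → ℝ) {X : (Fin n → S) → (ι → ℝ) → ℝ}
    (hX : ∀ τ, Integrable (X τ) (gm ι)) :
    Integrable (fun g => ∑ τ, gW (en c a g) τ * X τ g) (gm ι) := by
  refine integrable_finsetSum _ fun τ _ => ?_
  refine (hX τ).bdd_mul (c := 1) (gW_cont c a τ).aestronglyMeasurable (ae_of_all _ fun g => ?_)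
  rw [Real.norm_eq_abs, abs_of_nonneg (gW_nonneg _ _)]; exact gW_le_one _ _

theorem int_gw (c : S → ℝ) (a : ι → S → ℝ) {X : S → (ι → ℝ) → ℝ}
    (hX : ∀ τ, Integrable (X τ) (gm ι)) :
    Integrable (fun g => ∑ τ, gw (en c a g) τ * X τ g) (gm ι) := by
  refine integrable_finsetSum _ fun τ _ => ?_
  refine (hX τ).bdd_mul (c := 1) (gw_cont c a τ).aestronglyMeasurable (ae_of_all _ fun g => ?_)
  rw [Real.norm_eq_abs, abs_of_nonneg (gw_nonneg _ _)]; exact gw_le_one _ _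

theorem int_gWone {n : ℕ} (c : S → ℝ) (a : ι → S → ℝ) (τ : Fin n → S) :
    Integrable (fun g => gW (en c a g) τ) (gm ι) :=
  Integrable.of_bound (gW_cont c a τ).aestronglyMeasurable 1 (ae_of_all _ fun g => by
    rw [Real.norm_eq_abs, abs_of_nonneg (gW_nonneg _ _)]; exact gW_le_one _ _)

theorem int_gwone (c : S → ℝ) (a : ι → S → ℝ) (τ : S) :
    Integrable (fun g => gw (en c a g) τ) (gm ι) :=
  Integrable.of_bound (gw_cont c a τ).aestronglyMeasurable 1 (ae_of_all _ fun g => by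
    rw [Real.norm_eq_abs, abs_of_nonneg (gw_nonneg _ _)]; exact gw_le_one _ _)

theorem marg1 {n : ℕ} (E : S → ℝ) (l0 : Fin n) (G : S → ℝ) :
    ∑ τ : Fin n → S, gW E τ * G (τ l0) = ∑ σ, gw E σ * G σ := by
  classical
  have : ∀ τ : Fin n → S, gW E τ * G (τ l0) = ∏ l, (gw E (τ l) * if l = l0 then G (τ l) else 1) := by
    intro τ
    rw [gW_eq, Finset.prod_mul_distrib, Finset.prod_ite_eq' Finset.univ l0]
    simp
  simp only [this]
  rw [← Fintype.prod_sum (fun l σ => gw E σ * if l = l0 then G σ else 1)]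
  rw [Finset.prod_eq_single l0]
  · simp
  · intro l _ hl
    simp [hl, gw_sum]
  · simp

theorem marg2 (E : S → ℝ) (G : S → S → ℝ) :
    ∑ τ : Fin 2 → S, gW E τ * G (τ 0) (τ 1) = ∑ σ, gw E σ * ∑ ρ, gw E ρ * G σ ρ := by
  rw [← (finTwoArrowEquiv S).symm.sum_comp, Fintype.sum_prod_type]
  refine Finset.sum_congr rfl fun σ _ => ?_
  rw [Finset.mul_sum]
  refine Finset.sum_congr rfl fun ρ _ => ?_
  rw [gW_eq, Fin.prod_univ_two]
  simp [finTwoArrowEquiv]; ring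

theorem mean_h (c : S → ℝ) (a b : ι → S → ℝ) :
    ∫ g, ∑ σ, gw (en c a g) σ * ∑ i, b i σ * g i ∂(gm ι)
    = ∫ g, ∑ σ, gw (en c a g) σ * (∑ i, b i σ * a i σ
        - ∑ ρ, gw (en c a g) ρ * ∑ i, b i σ * a i ρ) ∂(gm ι) := by
  have := gibbs_ibp c a b (n := 1) 0 (fun _ => 1)
  simp only [one_mul, Nat.cast_one, Finset.univ_unique, Fin.default_eq_zero, Finset.sum_singleton] at this
  rw [integral_congr_ae (ae_of_all _ fun g => marg1 (en c a g) (0 : Fin 1) (fun σ => ∑ i, b i σ * g i))] at this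
  rw [integral_congr_ae (ae_of_all _ fun g => marg1 (en c a g) (0 : Fin 1) (fun σ => ∑ i, b i σ * a i σ
        - ∑ ρ, gw (en c a g) ρ * ∑ i, b i σ * a i ρ))] at this
  exact this

/-- Expected free energy -/
noncomputable def phi (c : S → ℝ) (a : ι → S → ℝ) : ℝ := ∫ g, FE (en c a g) ∂(gm ι)

/-- convexity lower bound -/
theorem phi_add_ge (c : S → ℝ) (a b : ι → S → ℝ) :
    phi c a + ∫ g, ∑ σ, gw (en c a g) σ * ∑ i, b i σ * g i ∂(gm ι)
      ≤ phi c (fun i σ => a i σ + b i σ) := by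
  unfold phi
  rw [← integral_add (FE_integrable c a) (int_gw c a fun σ => int_lin b σ)]
  refine integral_mono ((FE_integrable c a).add (int_gw c a fun σ => int_lin b σ)) (FE_integrable c _) fun g => ?_
  have e : en c (fun i σ => a i σ + b i σ) g = fun σ => en c a g σ + ∑ i, b i σ * g i := by
    funext σ; simp only [en, add_mul, Finset.sum_add_distrib]; ring
  simp only [e]
  exact FE_add_ge _ _

theorem C1 (c : S → ℝ) (a b : ι → S → ℝ) {C : ι → ℝ} {V y m : ℝ} (hy : 0 < y)
    (h0 : ∀ i σ, |a i σ| ≤ C i) (hp : ∀ i σ, |a i σ + y * b i σ| ≤ C i)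
    (hm : ∀ i σ, |a i σ + -y * b i σ| ≤ C i) (hV : ∑ i, C i ^ 2 ≤ V)
    (hmm : m = ∫ g, ∑ σ, gw (en c a g) σ * ∑ i, b i σ * g i ∂(gm ι)) :
    y * ∫ g, ∑ σ, gw (en c a g) σ * |∑ i, b i σ * g i - m| ∂(gm ι) ≤
      Real.log 2 + 4 * √V + phi c (fun i σ => a i σ + y * b i σ)
        + phi c (fun i σ => a i σ + -y * b i σ) - 2 * phi c a := by
  have hI : ∀ z : ℝ, Integrable (fun g => FE (en c (fun i σ => a i σ + z * b i σ) g)) (gm ι) :=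
    fun z => FE_integrable c _
  have hE : ∀ z g, FE (en c (fun i σ => a i σ + z * b i σ) g) =
      FE (en c a g) + Real.log (∑ σ, gw (en c a g) σ * Real.exp (z * ∑ i, b i σ * g i)) := by
    intro z g
    rw [← FE_add]
    congr 1
    funext σ; simp only [en, add_mul, Finset.sum_add_distrib, Finset.mul_sum]
    rw [add_assoc]; congr 2; refine Finset.sum_congr rfl fun i _ => by ring
  have hge : ∀ z : ℝ, z * m ≤ phi c (fun i σ => a i σ + z * b i σ) - phi c a := by
    intro z
    have := phi_add_ge c a (fun i σ => z * b i σ)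
    have e : ∫ g, ∑ σ, gw (en c a g) σ * ∑ i, z * b i σ * g i ∂(gm ι) = z * m := by
      rw [hmm, ← integral_const_mul]
      refine integral_congr_ae (ae_of_all _ fun g => ?_)
      simp only [Finset.mul_sum]
      refine Finset.sum_congr rfl fun σ _ => Finset.sum_congr rfl fun i _ => by ring
    rw [e] at this; linarith
  set P := phi c (fun i σ => a i σ + y * b i σ) with hP
  set Q := phi c (fun i σ => a i σ + -y * b i σ) with hQ
  set Z := phi c a with hZ
  have hgp := hge y
  have hgm := hge (-y)
  have dev : ∀ a' : ι → S → ℝ, (∀ i σ, |a' i σ| ≤ C i) →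
      ∫ g, |FE (en c a' g) - phi c a'| ∂(gm ι) ≤ √V := fun a' ha' =>
    (efron_abs (FE_lip c a' ha')).trans (Real.sqrt_le_sqrt hV)
  have intdev : ∀ a' : ι → S → ℝ, Integrable (fun g => |FE (en c a' g) - phi c a'|) (gm ι) :=
    fun a' => ((FE_integrable c a').sub (integrable_const _)).norm
  have pt : ∀ g, y * ∑ σ, gw (en c a g) σ * |∑ i, b i σ * g i - m| ≤
      (Real.log 2 + (P + Q - 2 * Z)) + (|FE (en c (fun i σ => a i σ + y * b i σ) g) - P|
        + |FE (en c (fun i σ => a i σ + -y * b i σ) g) - Q| + 2 * |FE (en c a g) - Z|) := by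
    intro g
    set h : S → ℝ := fun σ => ∑ i, b i σ * g i with hh
    set w : S → ℝ := gw (en c a g) with hw
    set L : ℝ → ℝ := fun z => Real.log (∑ σ, w σ * Real.exp (z * h σ)) with hL
    have sp : ∀ z, 0 < ∑ σ, w σ * Real.exp (z * h σ) := fun z =>
      Finset.sum_pos (fun _ _ => mul_pos (Real.exp_pos _) (Real.exp_pos _)) Finset.univ_nonempty
    have s1 : y * ∑ σ, w σ * |h σ - m| ≤ Real.log (∑ σ, w σ * Real.exp (y * |h σ - m|)) := by
      refine le_trans (le_of_eq ?_) (jensen_gw (en c a g) fun σ => y * |h σ - m|)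
      rw [Finset.mul_sum]; exact Finset.sum_congr rfl fun σ _ => by ring
    have s2 : ∑ σ, w σ * Real.exp (y * |h σ - m|) ≤
        Real.exp (L y - y * m) + Real.exp (L (-y) + y * m) := by
      have e1 : Real.exp (L y - y * m) = ∑ σ, w σ * Real.exp (y * h σ - y * m) := by
        rw [Real.exp_sub, hL, Real.exp_log (sp y), Finset.sum_div]
        refine Finset.sum_congr rfl fun σ _ => ?_
        rw [Real.exp_sub, mul_div_assoc]
      have e2 : Real.exp (L (-y) + y * m) = ∑ σ, w σ * Real.exp (-y * h σ + y * m) := by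
        rw [Real.exp_add, hL, Real.exp_log (sp (-y)), Finset.sum_mul]
        refine Finset.sum_congr rfl fun σ _ => ?_
        rw [Real.exp_add, mul_assoc]
      rw [e1, e2, ← Finset.sum_add_distrib]
      refine Finset.sum_le_sum fun σ _ => ?_
      rw [← mul_add]
      refine mul_le_mul_of_nonneg_left ?_ (gw_nonneg _ _)
      rcases abs_cases (h σ - m) with ⟨h1, _⟩ | ⟨h1, _⟩ <;> rw [h1]
      · have : y * (h σ - m) = y * h σ - y * m := by ring
        rw [this]; linarith [Real.exp_pos (-y * h σ + y * m)]
      · have : y * -(h σ - m) = -y * h σ + y * m := by ring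
        rw [this]; linarith [Real.exp_pos (y * h σ - y * m)]
    set rhs := (P + Q - 2 * Z) + (|FE (en c (fun i σ => a i σ + y * b i σ) g) - P|
        + |FE (en c (fun i σ => a i σ + -y * b i σ) g) - Q| + 2 * |FE (en c a g) - Z|) with hrhs
    have a1 := abs_nonneg (FE (en c (fun i σ => a i σ + y * b i σ) g) - P)
    have a2 := abs_nonneg (FE (en c (fun i σ => a i σ + -y * b i σ) g) - Q)
    have b1 := le_abs_self (FE (en c (fun i σ => a i σ + y * b i σ) g) - P)
    have b2 := le_abs_self (FE (en c (fun i σ => a i σ + -y * b i σ) g) - Q)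
    have a3 := abs_nonneg (FE (en c a g) - Z)
    have b3 := neg_abs_le (FE (en c a g) - Z)
    have f1 : L y = FE (en c (fun i σ => a i σ + y * b i σ) g) - FE (en c a g) := by
      rw [hE y g]; simp only [hL, hh, hw]; ring
    have f2 : L (-y) = FE (en c (fun i σ => a i σ + -y * b i σ) g) - FE (en c a g) := by
      rw [hE (-y) g]; simp only [hL, hh, hw]; ring
    have s3 : L y - y * m ≤ rhs := by rw [f1]; linarith
    have s4 : L (-y) + y * m ≤ rhs := by rw [f2]; linarith
    have s5 : Real.log (∑ σ, w σ * Real.exp (y * |h σ - m|)) ≤ Real.log 2 + rhs := by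
      have sp2 : 0 < ∑ σ, w σ * Real.exp (y * |h σ - m|) :=
        Finset.sum_pos (fun _ _ => mul_pos (Real.exp_pos _) (Real.exp_pos _)) Finset.univ_nonempty
      rw [Real.log_le_iff_le_exp sp2,
        Real.exp_add, Real.exp_log two_pos]
      have := Real.exp_le_exp.2 s3
      have := Real.exp_le_exp.2 s4
      linarith
    have := s1.trans s5
    linarith
  have hlin : ∀ σ, Integrable (fun g : ι → ℝ => |∑ i, b i σ * g i - m|) (gm ι) := fun σ =>
    ((int_lin b σ).sub (integrable_const m)).norm
  rw [← integral_const_mul]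
  have i1 := intdev (fun i σ => a i σ + y * b i σ)
  have i2 := intdev (fun i σ => a i σ + -y * b i σ)
  have i3 := (intdev a).const_mul 2
  have j1 : Integrable (fun g => |FE (en c (fun i σ => a i σ + y * b i σ) g) - P|
        + |FE (en c (fun i σ => a i σ + -y * b i σ) g) - Q|) (gm ι) := i1.add i2
  have j2 : Integrable (fun g => |FE (en c (fun i σ => a i σ + y * b i σ) g) - P|
        + |FE (en c (fun i σ => a i σ + -y * b i σ) g) - Q| + 2 * |FE (en c a g) - Z|) (gm ι) := j1.add i3
  refine (integral_mono ((int_gw c a hlin).const_mul y) ((integrable_const _).add j2) pt).trans ?_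
  have hadd : ∫ g, ((Real.log 2 + (P + Q - 2 * Z)) + (|FE (en c (fun i σ => a i σ + y * b i σ) g) - P|
        + |FE (en c (fun i σ => a i σ + -y * b i σ) g) - Q| + 2 * |FE (en c a g) - Z|)) ∂(gm ι) =
      (Real.log 2 + (P + Q - 2 * Z)) + ((∫ g, |FE (en c (fun i σ => a i σ + y * b i σ) g) - P| ∂(gm ι))
        + (∫ g, |FE (en c (fun i σ => a i σ + -y * b i σ) g) - Q| ∂(gm ι)) + 2 * ∫ g, |FE (en c a g) - Z| ∂(gm ι)) := by
    rw [integral_add (integrable_const _) j2, integral_add j1 i3, integral_add i1 i2, integral_const_mul,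
      integral_const, probReal_univ, one_smul]
  refine hadd.le.trans ?_
  have d1 := dev _ hp
  have d2 := dev _ hm
  have d3 := dev _ h0
  linarith

end

end PSpin


namespace PSpin

theorem sum_update {α β : Type*} [Fintype α] [DecidableEq α] [Fintype β] [DecidableEq β] (d : α) (G : (α → β) → ℝ) :
    ∑ x : α → β, ∑ k : β, G (Function.update x d k) = Fintype.card β * ∑ x, G x := by
  have inv : Function.Involutive (fun q : (α → β) × β => (Function.update q.1 d q.2, q.1 d)) := by
    rintro ⟨x, k⟩
    simp
  rw [← Fintype.sum_prod_type' (f := fun x k => G (Function.update x d k))]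
  have h := Equiv.sum_comp (inv.toPerm) (fun q : (α → β) × β => G (q.1))
  have h2 : ∑ q : (α → β) × β, G (Function.update q.1 d q.2) = ∑ q : (α → β) × β, G q.1 := h
  rw [h2, Fintype.sum_prod_type]
  simp [Finset.mul_sum]

/-- block perturbation data -/
structure Blk {S : Type} [Fintype S] {ι : Type} [Fintype ι] (D : ℕ) (A : ℝ) (R : S → S → ℝ)
    (b0 : ι → S → ℝ) (deg : ι → Fin D) (B : ι → ℝ) : Prop where
  bd : ∀ σ ρ, |R σ ρ| ≤ 1
  diag : ∀ σ, R σ σ = 1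
  symm : ∀ σ ρ, R σ ρ = R ρ σ
  psd : ∀ (n : ℕ) (τ : Fin n → S), 0 ≤ ∑ l, ∑ l', R (τ l) (τ l')
  bB : ∀ i σ, |b0 i σ| ≤ B i
  BA : ∑ i, B i ^ 2 ≤ D * A
  cov : ∀ d σ ρ, ∑ i, (if deg i = d then b0 i σ else 0) * b0 i ρ = A * R σ ρ ^ ((d : ℕ) + 1)

variable {S : Type} [Fintype S] [Nonempty S] {ι : Type} [Fintype ι] {D : ℕ} {A : ℝ}
  {R : S → S → ℝ} {b0 : ι → S → ℝ} {deg : ι → Fin D} {B : ι → ℝ}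

/-- coefficients of the perturbed energy -/
noncomputable def pa (b0 : ι → S → ℝ) (deg : ι → Fin D) (x : Fin D → ℝ) (i : ι) (σ : S) : ℝ :=
  x (deg i) * b0 i σ

/-- coefficients of the degree `d` part -/
noncomputable def pb (b0 : ι → S → ℝ) (deg : ι → Fin D) (d : Fin D) (i : ι) (σ : S) : ℝ :=
  if deg i = d then b0 i σ else 0

/-- mean -/
noncomputable def pm (c : S → ℝ) (b0 : ι → S → ℝ) (deg : ι → Fin D) (x : Fin D → ℝ) (d : Fin D) : ℝ :=
  ∫ g, ∑ σ, gw (en c (pa b0 deg x) g) σ * ∑ i, pb b0 deg d i σ * g i ∂(gm ι)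

/-- mean absolute deviation -/
noncomputable def pdev (c : S → ℝ) (b0 : ι → S → ℝ) (deg : ι → Fin D) (x : Fin D → ℝ) (d : Fin D) : ℝ :=
  ∫ g, ∑ σ, gw (en c (pa b0 deg x) g) σ * |∑ i, pb b0 deg d i σ * g i - pm c b0 deg x d| ∂(gm ι)

theorem pdev_nonneg (c : S → ℝ) (x : Fin D → ℝ) (d : Fin D) : 0 ≤ pdev c b0 deg x d :=
  integral_nonneg fun g => Finset.sum_nonneg fun σ _ => mul_nonneg (gw_nonneg _ _) (abs_nonneg _)

/-- averaged replica weights -/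
noncomputable def qq (c : S → ℝ) (a : ι → S → ℝ) (n : ℕ) (τ : Fin n → S) : ℝ := ∫ g, gW (en c a g) τ ∂(gm ι)

theorem sum_qq (c : S → ℝ) (a : ι → S → ℝ) (n : ℕ) (F : (Fin n → S) → ℝ) :
    ∑ τ, qq c a n τ * F τ = ∫ g, ∑ τ, gW (en c a g) τ * F τ ∂(gm ι) := by
  rw [integral_finsetSum _ fun τ _ => (int_gWone c a τ).mul_const _]
  refine Finset.sum_congr rfl fun τ _ => ?_
  rw [integral_mul_const]; rfl

theorem Blk.rep (h : Blk D A R b0 deg B) (c : S → ℝ) (a : ι → S → ℝ) : Rep R (qq c a) where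
  bd := h.bd
  diag := h.diag
  symm := h.symm
  psd := h.psd
  nn := fun n τ => integral_nonneg fun g => gW_nonneg _ _
  one := fun n => by
    have := sum_qq c a n (fun _ => 1)
    simp only [mul_one, gW_sum] at this
    rw [this]; simp
  cons := fun n τ => by
    simp only [qq]
    rw [← integral_finsetSum _ fun ρ _ => int_gWone c a _]
    refine integral_congr_ae (ae_of_all _ fun g => ?_)
    simp only [gW_cons, ← Finset.sum_mul, gw_sum, one_mul]

theorem Blk.cov' (h : Blk D A R b0 deg B) (x : Fin D → ℝ) (d : Fin D) (σ ρ : S) :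
    ∑ i, pb b0 deg d i σ * pa b0 deg x i ρ = (x d * A) * R σ ρ ^ ((d : ℕ) + 1) := by
  have : ∀ i, pb b0 deg d i σ * pa b0 deg x i ρ = x d * ((if deg i = d then b0 i σ else 0) * b0 i ρ) := by
    intro i
    unfold pb pa
    split_ifs with hh
    · rw [hh]; ring
    · simp
  simp only [this]
  rw [← Finset.mul_sum, h.cov]; ring

theorem Blk.pm_eq (h : Blk D A R b0 deg B) (c : S → ℝ) (x : Fin D → ℝ) (d : Fin D) :
    pm c b0 deg x d = (x d * A) * (1 - ∑ τ : Fin 2 → S, qq c (pa b0 deg x) 2 τ * R (τ 0) (τ 1) ^ ((d : ℕ)+1)) := by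
  have e2 : ∑ τ : Fin 2 → S, qq c (pa b0 deg x) 2 τ * R (τ 0) (τ 1) ^ ((d : ℕ)+1) =
      ∫ g, ∑ σ, gw (en c (pa b0 deg x) g) σ * ∑ ρ, gw (en c (pa b0 deg x) g) ρ * R σ ρ ^ ((d:ℕ)+1) ∂(gm ι) := by
    rw [sum_qq]
    exact integral_congr_ae (ae_of_all _ fun g => marg2 _ (fun σ ρ => R σ ρ ^ ((d:ℕ)+1)))
  have i2 : Integrable (fun g => ∑ σ, gw (en c (pa b0 deg x) g) σ * ∑ ρ, gw (en c (pa b0 deg x) g) ρ * R σ ρ ^ ((d:ℕ)+1)) (gm ι) :=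
    int_gw c _ fun σ => integrable_finsetSum _ fun ρ _ => (int_gwone c _ ρ).mul_const _
  rw [pm, mean_h, e2]
  simp only [h.cov', h.diag, one_pow, mul_one]
  have e3 : (1 : ℝ) = ∫ g, (1 : ℝ) ∂(gm ι) := by simp
  conv_rhs => rw [e3]
  rw [← integral_sub (integrable_const _) i2, ← integral_const_mul]
  refine integral_congr_ae (ae_of_all _ fun g => ?_)
  simp only
  rw [mul_sub, Finset.mul_sum]
  simp only [mul_sub, Finset.sum_sub_distrib, ← Finset.sum_mul, gw_sum, one_mul]
  rw [mul_one]
  congr 1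
  refine Finset.sum_congr rfl fun σ _ => ?_
  rw [Finset.mul_sum, Finset.mul_sum, Finset.mul_sum]
  refine Finset.sum_congr rfl fun ρ _ => by ring

theorem Blk.GG_le (h : Blk D A R b0 deg B) (c : S → ℝ) (x : Fin D → ℝ) (d : Fin D) (hx : 1 ≤ x d) (hA : 0 < A)
    (n : ℕ) (l0 : Fin n) (f : (Fin n → S) → ℝ) (hf : ∀ τ, |f τ| ≤ 1) :
    |GG R (qq c (pa b0 deg x)) n l0 f (fun z => z ^ ((d : ℕ) + 1))| ≤ pdev c b0 deg x d / A := by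
  set a := pa b0 deg x with ha
  set m := pm c b0 deg x d with hm
  have hmm : m = (x d * A) * (1 - ∑ τ : Fin 2 → S, qq c a 2 τ * R (τ 0) (τ 1) ^ ((d : ℕ)+1)) := h.pm_eq c x d
  have hlin : ∀ σ, Integrable (fun g : ι → ℝ => ∑ i, pb b0 deg d i σ * g i) (gm ι) := fun σ => int_lin _ σ
  have hib := gibbs_ibp c a (pb b0 deg d) l0 f
  have key : (x d * A) * GG R (qq c a) n l0 f (fun z => z ^ ((d : ℕ) + 1)) =
      ∫ g, ∑ τ, gW (en c a g) τ * (f τ * (∑ i, pb b0 deg d i (τ l0) * g i - m)) ∂(gm ι) := by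
    have r1 : ∫ g, ∑ τ, gW (en c a g) τ * (f τ * (∑ i, pb b0 deg d i (τ l0) * g i - m)) ∂(gm ι) =
        ∫ g, ∑ τ, gW (en c a g) τ * (f τ * ∑ i, pb b0 deg d i (τ l0) * g i) ∂(gm ι) - m * ∑ τ, qq c a n τ * f τ := by
      rw [sum_qq, ← integral_const_mul, ← integral_sub]
      · refine integral_congr_ae (ae_of_all _ fun g => ?_)
        simp only
        rw [Finset.mul_sum, ← Finset.sum_sub_distrib]
        refine Finset.sum_congr rfl fun τ _ => by ring
      · exact int_gW c a (fun τ => (hlin (τ l0)).const_mul (f τ))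
      · exact (int_gW c a (fun τ => integrable_const (f τ))).const_mul m
    have r2 : ∑ τ, ∑ ρ, qq c a (n+1) (Fin.cons ρ τ : Fin (n+1) → S) * (f τ * R (τ l0) ρ ^ ((d:ℕ)+1)) =
        ∫ g, ∑ τ, gW (en c a g) τ * (f τ * ∑ ρ, gw (en c a g) ρ * R (τ l0) ρ ^ ((d:ℕ)+1)) ∂(gm ι) := by
      rw [integral_finsetSum _ fun τ _ => ?_]
      · refine Finset.sum_congr rfl fun τ _ => ?_
        have : ∀ g, gW (en c a g) τ * (f τ * ∑ ρ, gw (en c a g) ρ * R (τ l0) ρ ^ ((d:ℕ)+1)) =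
            ∑ ρ, gW (en c a g) (Fin.cons ρ τ : Fin (n+1) → S) * (f τ * R (τ l0) ρ ^ ((d:ℕ)+1)) := by
          intro g
          simp only [gW_cons, Finset.mul_sum]
          exact Finset.sum_congr rfl fun ρ _ => by ring
        simp only [this]
        rw [integral_finsetSum _ fun ρ _ => (int_gWone c a _).mul_const _]
        refine Finset.sum_congr rfl fun ρ _ => ?_
        rw [integral_mul_const]; rfl
      · have : ∀ g, gW (en c a g) τ * (f τ * ∑ ρ, gw (en c a g) ρ * R (τ l0) ρ ^ ((d:ℕ)+1)) =
            ∑ ρ, gW (en c a g) (Fin.cons ρ τ : Fin (n+1) → S) * (f τ * R (τ l0) ρ ^ ((d:ℕ)+1)) := by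
          intro g
          simp only [gW_cons, Finset.mul_sum]
          exact Finset.sum_congr rfl fun ρ _ => by ring
        simp only [this]
        exact integrable_finsetSum _ fun ρ _ => (int_gWone c a _).mul_const _
    have ii : ∀ τ : Fin n → S, Integrable (fun g => ∑ ρ, gw (en c a g) ρ * R (τ l0) ρ ^ ((d:ℕ)+1)) (gm ι) :=
      fun τ => integrable_finsetSum _ fun ρ _ => (int_gwone c a _).mul_const _
    rw [r1, hib]
    unfold GG
    rw [r2, sum_qq c a n (fun τ => f τ * ∑ l, R (τ l0) (τ l) ^ ((d:ℕ)+1))]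
    have r3 : ∫ g, ∑ τ, gW (en c a g) τ * (f τ * (∑ l, (∑ i, pb b0 deg d i (τ l0) * a i (τ l))
        - n * ∑ ρ, gw (en c a g) ρ * ∑ i, pb b0 deg d i (τ l0) * a i ρ)) ∂(gm ι) =
        (x d * A) * (∫ g, ∑ τ, gW (en c a g) τ * (f τ * ∑ l, R (τ l0) (τ l) ^ ((d:ℕ)+1)) ∂(gm ι)
         - n * ∫ g, ∑ τ, gW (en c a g) τ * (f τ * ∑ ρ, gw (en c a g) ρ * R (τ l0) ρ ^ ((d:ℕ)+1)) ∂(gm ι)) := by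
      rw [← integral_const_mul (n : ℝ), ← integral_sub, ← integral_const_mul]
      · refine integral_congr_ae (ae_of_all _ fun g => ?_)
        simp only [h.cov', ha]
        rw [mul_sub, Finset.mul_sum, Finset.mul_sum, Finset.mul_sum, ← Finset.sum_sub_distrib]
        refine Finset.sum_congr rfl fun τ _ => ?_
        have t1 : ∑ l, x d * A * R (τ l0) (τ l) ^ ((d:ℕ)+1) = x d * A * ∑ l, R (τ l0) (τ l) ^ ((d:ℕ)+1) := by
          rw [Finset.mul_sum]
        have t2 : ∑ ρ, gw (en c (pa b0 deg x) g) ρ * (x d * A * R (τ l0) ρ ^ ((d:ℕ)+1)) =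
            x d * A * ∑ ρ, gw (en c (pa b0 deg x) g) ρ * R (τ l0) ρ ^ ((d:ℕ)+1) := by
          rw [Finset.mul_sum]; exact Finset.sum_congr rfl fun ρ _ => by ring
        rw [t1, t2]; ring
      · exact int_gW c a (fun τ => integrable_const _)
      · exact (int_gW c a (fun τ => (ii τ).const_mul (f τ))).const_mul _
    rw [r3, hmm]
    simp only [one_pow]
    ring
  have b1 : |∫ g, ∑ τ, gW (en c a g) τ * (f τ * (∑ i, pb b0 deg d i (τ l0) * g i - m)) ∂(gm ι)|
      ≤ pdev c b0 deg x d := by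
    refine (abs_integral_le_integral_abs).trans ?_
    refine integral_mono ?_ ?_ fun g => ?_
    · exact (int_gW c a fun τ => ((hlin (τ l0)).sub (integrable_const m)).const_mul (f τ)).norm
    · exact int_gw c a fun σ => ((hlin σ).sub (integrable_const m)).norm
    · simp only
      rw [← marg1 (en c a g) l0 (fun σ => |∑ i, pb b0 deg d i σ * g i - m|)]
      refine (Finset.abs_sum_le_sum_abs _ _).trans (Finset.sum_le_sum fun τ _ => ?_)
      rw [abs_mul, abs_of_nonneg (gW_nonneg _ _), abs_mul]
      refine mul_le_mul_of_nonneg_left ?_ (gW_nonneg _ _)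
      calc _ ≤ 1 * |∑ i, pb b0 deg d i (τ l0) * g i - m| := mul_le_mul_of_nonneg_right (hf τ) (abs_nonneg _)
        _ = _ := one_mul _
  rw [← key, abs_mul, abs_of_pos (by positivity)] at b1
  rw [le_div_iff₀ hA]
  have g0 := abs_nonneg (GG R (qq c a) n l0 f (fun z => z ^ ((d : ℕ) + 1)))
  calc _ = 1 * (A * |GG R (qq c a) n l0 f (fun z => z ^ ((d : ℕ) + 1))|) := by ring
    _ ≤ x d * (A * |GG R (qq c a) n l0 f (fun z => z ^ ((d : ℕ) + 1))|) :=
      mul_le_mul_of_nonneg_right hx (by positivity)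
    _ ≤ _ := by linarith

end PSpin


namespace PSpin

variable {S : Type} [Fintype S] [Nonempty S] {ι : Type} [Fintype ι] {D : ℕ} {A : ℝ}
  {R : S → S → ℝ} {b0 : ι → S → ℝ} {deg : ι → Fin D} {B : ι → ℝ}

theorem pa_update (x : Fin D → ℝ) (d : Fin D) (u v : ℝ) :
    (fun (i : ι) (σ : S) => pa b0 deg (Function.update x d u) i σ + v * pb b0 deg d i σ) =
      pa b0 deg (Function.update x d (u + v)) := by
  funext i σ
  unfold pa pb
  by_cases h : deg i = d
  · simp [h]; ring
  · simp [h]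

theorem Blk.pm_bd (h : Blk D A R b0 deg B) (hA : 0 < A) (c : S → ℝ) (x : Fin D → ℝ) (d : Fin D)
    (h0 : 0 ≤ x d) (h2 : x d ≤ 2) : 0 ≤ pm c b0 deg x d ∧ pm c b0 deg x d ≤ 4 * A := by
  rw [h.pm_eq]
  have := sum_q_le (h.rep c (pa b0 deg x)) 2 (fun τ => R (τ 0) (τ 1) ^ ((d:ℕ)+1)) (c := 1)
    (fun τ => by rw [abs_pow]; exact pow_le_one₀ (abs_nonneg _) (h.bd _ _))
  rw [abs_le] at this
  set w := ∑ τ : Fin 2 → S, qq c (pa b0 deg x) 2 τ * R (τ 0) (τ 1) ^ ((d:ℕ)+1) with hw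
  have h3 : 0 ≤ x d * A := by positivity
  constructor
  · exact mul_nonneg h3 (by linarith)
  · nlinarith

theorem Blk.C2 (h : Blk D A R b0 deg B) (hA : 0 < A) (c : S → ℝ) (x : Fin D → ℝ) (d : Fin D)
    (h0 : ∀ d, 0 ≤ x d) (h2 : ∀ d, x d ≤ 2) (K : ℕ) {y : ℝ} (hy : y = 1 / (K + 1)) :
    y * ∑ k ∈ Finset.range K, pdev c b0 deg (Function.update x d (1 + (k + 1) * y)) d ≤
      K * (Real.log 2 + 4 * √(4 * D * A)) + 4 * A * y := by
  have hyp : 0 < y := by rw [hy]; positivity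
  have hK : (K + 1) * y = 1 := by rw [hy]; field_simp
  set X : ℕ → Fin D → ℝ := fun k => Function.update x d (1 + k * y) with hX
  set Φ : ℕ → ℝ := fun k => phi c (pa b0 deg (X k)) with hΦ
  have hXd : ∀ k, X k d = 1 + k * y := fun k => by simp [hX]
  have hX0 : ∀ k d', 0 ≤ X k d' := by
    intro k d'
    by_cases hd : d' = d
    · subst hd; rw [hXd]; positivity
    · simp [hX, hd, h0]
  have hX2 : ∀ k ≤ K + 1, ∀ d', X k d' ≤ 2 := by
    intro k hk d'
    by_cases hd : d' = d
    · subst hd; rw [hXd]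
      have : (k : ℝ) ≤ K + 1 := by exact_mod_cast hk
      nlinarith
    · simp [hX, hd, h2]
  have hbd : ∀ k ≤ K + 1, ∀ i σ, |pa b0 deg (X k) i σ| ≤ 2 * B i := by
    intro k hk i σ
    unfold pa
    rw [abs_mul, abs_of_nonneg (hX0 k _)]
    exact mul_le_mul (hX2 k hk _) (h.bB i σ) (abs_nonneg _) (by norm_num)
  have hV : ∑ i, (2 * B i) ^ 2 ≤ 4 * D * A := by
    have : ∀ i, (2 * B i) ^ 2 = 4 * B i ^ 2 := fun i => by ring
    simp only [this, ← Finset.mul_sum]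
    linarith [h.BA]
  have up : ∀ k, (fun (i : ι) (σ : S) => pa b0 deg (X k) i σ + y * pb b0 deg d i σ) = pa b0 deg (X (k+1)) := by
    intro k
    simp only [hX, pa_update]
    congr 2; push_cast; ring
  have dn : ∀ k, (fun (i : ι) (σ : S) => pa b0 deg (X (k+1)) i σ + -y * pb b0 deg d i σ) = pa b0 deg (X k) := by
    intro k
    simp only [hX, pa_update]
    congr 2; push_cast; ring
  have dn2 : ∀ k i σ, pa b0 deg (X (k+1)) i σ + -y * pb b0 deg d i σ = pa b0 deg (X k) i σ := fun k i σ =>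
    congrFun (congrFun (dn k) i) σ
  have up2 : ∀ k i σ, pa b0 deg (X k) i σ + y * pb b0 deg d i σ = pa b0 deg (X (k+1)) i σ := fun k i σ =>
    congrFun (congrFun (up k) i) σ
  have st : ∀ k ∈ Finset.range K, y * pdev c b0 deg (X (k+1)) d ≤
      (Real.log 2 + 4 * √(4 * D * A)) + ((Φ (k+2) - Φ (k+1)) - (Φ (k+1) - Φ k)) := by
    intro k hk
    rw [Finset.mem_range] at hk
    have := C1 c (pa b0 deg (X (k+1))) (pb b0 deg d) (C := fun i => 2 * B i) (V := 4 * D * A) (y := y)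
      (m := pm c b0 deg (X (k+1)) d) hyp (hbd _ (by omega))
      (fun i σ => by rw [up2]; exact hbd _ (by omega) i σ)
      (fun i σ => by rw [dn2]; exact hbd _ (by omega) i σ) hV rfl
    rw [up, dn] at this
    change y * pdev c b0 deg (X (k+1)) d ≤ Real.log 2 + 4 * √(4 * D * A) + Φ (k+1+1) + Φ k - 2 * Φ (k+1) at this
    linarith
  have s1 : y * ∑ k ∈ Finset.range K, pdev c b0 deg (Function.update x d (1 + (k + 1) * y)) d ≤
      K * (Real.log 2 + 4 * √(4 * D * A)) + ((Φ (K+1) - Φ K) - (Φ 1 - Φ 0)) := by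
    have e : ∀ k : ℕ, Function.update x d (1 + ((k:ℝ) + 1) * y) = X (k+1) := fun k => by
      simp only [hX]; push_cast; rfl
    simp only [e]
    rw [Finset.mul_sum]
    refine (Finset.sum_le_sum st).trans ?_
    rw [Finset.sum_add_distrib, Finset.sum_range_sub (fun k => Φ (k+1) - Φ k), Finset.sum_const, Finset.card_range, nsmul_eq_mul]
  have gen : ∀ k z, phi c (pa b0 deg (X k)) + z * pm c b0 deg (X k) d ≤
      phi c (fun (i : ι) (σ : S) => pa b0 deg (X k) i σ + z * pb b0 deg d i σ) := by
    intro k z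
    refine le_trans (le_of_eq ?_) (phi_add_ge c (pa b0 deg (X k)) (fun i σ => z * pb b0 deg d i σ))
    congr 1
    rw [pm, ← integral_const_mul]
    refine integral_congr_ae (ae_of_all _ fun g => ?_)
    simp only [Finset.mul_sum]
    exact Finset.sum_congr rfl fun σ _ => Finset.sum_congr rfl fun i _ => by ring
  have g1 := gen 0 y
  rw [up] at g1
  have g2 := gen (K+1) (-y)
  rw [dn] at g2
  have p1 := (h.pm_bd hA c (X 0) d (hX0 _ _) (hX2 _ (by omega) _)).1
  have p2 := (h.pm_bd hA c (X (K+1)) d (hX0 _ _) (hX2 _ le_rfl _)).2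
  have q1 : 0 ≤ y * pm c b0 deg (X 0) d := by positivity
  have q2 : y * pm c b0 deg (X (K+1)) d ≤ y * (4 * A) := mul_le_mul_of_nonneg_left p2 hyp.le
  have g1' : Φ 0 + y * pm c b0 deg (X 0) d ≤ Φ 1 := g1
  have g2' : Φ (K+1) + -y * pm c b0 deg (X (K+1)) d ≤ Φ K := g2
  linarith

/-- perturbation parameters on a grid in `(1,2)` -/
noncomputable def xg (K : ℕ) (x : Fin D → Fin K) (d : Fin D) : ℝ := 1 + (((x d : ℕ) : ℝ) + 1) * (1 / (K + 1))

theorem xg_ge (K : ℕ) (x : Fin D → Fin K) (d : Fin D) : 1 ≤ xg K x d := by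
  unfold xg; have : 0 ≤ (((x d : ℕ) : ℝ) + 1) * (1 / (K + 1)) := by positivity
  linarith

theorem xg_le (K : ℕ) (x : Fin D → Fin K) (d : Fin D) : xg K x d ≤ 2 := by
  unfold xg
  have : (((x d : ℕ) : ℝ) + 1) ≤ K + 1 := by
    have := (x d).2.le
    have : ((x d : ℕ) : ℝ) ≤ K := by exact_mod_cast this
    linarith
  have : (((x d : ℕ) : ℝ) + 1) * (1 / (K + 1)) ≤ 1 := by
    rw [mul_one_div, div_le_one (by positivity)]; exact this
  linarith

theorem Blk.avg_dev (h : Blk D A R b0 deg B) (hA : 0 < A) (c : S → ℝ) (d : Fin D) (K : ℕ) (hK : 0 < K) :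
    ∑ x : Fin D → Fin K, pdev c b0 deg (xg K x) d ≤
      (Fintype.card (Fin D → Fin K)) * ((K + 1) * (Real.log 2 + 4 * √(4 * D * A)) + 4 * A / K) := by
  have hK' : (0 : ℝ) < K := by exact_mod_cast hK
  have s := sum_update d (fun x : Fin D → Fin K => pdev c b0 deg (xg K x) d)
  rw [Fintype.card_fin] at s
  have up : ∀ x : Fin D → Fin K, ∑ k : Fin K, pdev c b0 deg (xg K (Function.update x d k)) d ≤
      (K + 1) * (K * (Real.log 2 + 4 * √(4 * D * A))) + 4 * A := by
    intro x
    have := h.C2 hA c (xg K x) d (fun d => zero_le_one.trans (xg_ge K x d)) (xg_le K x) K rfl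
    rw [Finset.sum_range (fun k : ℕ => pdev c b0 deg (Function.update (xg K x) d (1 + ((k:ℝ) + 1) * (1 / (K+1)))) d)] at this
    have e : ∀ k : Fin K, xg K (Function.update x d k) =
        Function.update (xg K x) d (1 + (((k:ℕ):ℝ) + 1) * (1 / (K+1))) := by
      intro k; funext d'
      by_cases hd : d' = d
      · subst hd; simp [xg]
      · simp [xg, hd]
    simp only [e]
    have h3 := mul_le_mul_of_nonneg_left this (show (0:ℝ) ≤ K + 1 by positivity)
    rw [← mul_assoc, mul_one_div_cancel (by positivity), one_mul] at h3
    refine h3.trans (le_of_eq ?_)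
    field_simp
  have s2 : ∑ x : Fin D → Fin K, ∑ k : Fin K, pdev c b0 deg (xg K (Function.update x d k)) d ≤
      (Fintype.card (Fin D → Fin K)) * ((K + 1) * (K * (Real.log 2 + 4 * √(4 * D * A))) + 4 * A) := by
    refine (Finset.sum_le_sum fun x _ => up x).trans (le_of_eq ?_)
    rw [Finset.sum_const, Finset.card_univ, nsmul_eq_mul]
  rw [s] at s2
  have : ∑ x : Fin D → Fin K, pdev c b0 deg (xg K x) d ≤
    ((Fintype.card (Fin D → Fin K)) * ((K + 1) * (K * (Real.log 2 + 4 * √(4 * D * A))) + 4 * A)) / K := by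
    rw [le_div_iff₀ hK']; linarith
  refine this.trans (le_of_eq ?_)
  field_simp

/-- expected Gibbs average of a kernel -/
noncomputable def gav (c : S → ℝ) (a : ι → S → ℝ) (k : S → S → ℝ) : ℝ :=
  ∫ g, ∑ σ, gw (en c a g) σ * ∑ ρ, gw (en c a g) ρ * k σ ρ ∂(gm ι)

theorem block_lemma (ε : ℝ) (hε : 0 < ε) : ∃ D K : ℕ, 0 < K ∧ ∃ A0 : ℝ, 0 < A0 ∧ ∀ A ≥ A0,
    ∀ (S : Type) [Fintype S] [Nonempty S] (ι : Type) [Fintype ι] (R : S → S → ℝ) (b0 : ι → S → ℝ)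
      (deg : ι → Fin D) (B : ι → ℝ) (_ : Blk D A R b0 deg B) (c : S → ℝ),
      ∑ x : Fin D → Fin K, gav c (pa b0 deg (xg K x)) (fun σ ρ => max (-R σ ρ) 0) ≤
        Fintype.card (Fin D → Fin K) * ε := by
  set ε' := min (ε / 8) (1/4) with hε'
  have hε'0 : 0 < ε' := lt_min (by linarith) (by norm_num)
  obtain ⟨D, C, hC, hpos⟩ := positivity_lemma ε' hε'0 (min_le_right _ _)
  obtain ⟨K, hK⟩ := exists_nat_gt (C * D * 16 / ε)
  have hK0 : 0 < K := by
    have : (0:ℝ) < K := lt_of_le_of_lt (by positivity) hK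
    exact_mod_cast this
  have hK' : (0 : ℝ) < K := by exact_mod_cast hK0
  set W : ℝ := C * D * ((K + 1) * (1 + 8 * √D)) with hW
  have hW0 : 0 ≤ W := by positivity
  refine ⟨D, K, hK0, max 1 ((4 * W / ε) ^ 2), lt_of_lt_of_le one_pos (le_max_left _ _), ?_⟩
  intro A hA S _ _ ι _ R b0 deg B hB c
  have hA1 : 1 ≤ A := (le_max_left _ _).trans hA
  have hA0 : 0 < A := by linarith
  have hsA : 1 ≤ √A := by rw [Real.one_le_sqrt]; exact hA1
  have hsA2 : 4 * W / ε ≤ √A := by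
    rw [show 4 * W / ε = √((4 * W / ε) ^ 2) from (Real.sqrt_sq (by positivity)).symm]
    exact Real.sqrt_le_sqrt ((le_max_right _ _).trans hA)
  have hsq : √A * √A = A := Real.mul_self_sqrt hA0.le
  have each : ∀ x : Fin D → Fin K, gav c (pa b0 deg (xg K x)) (fun σ ρ => max (-R σ ρ) 0) ≤
      4 * ε' + C * ∑ d : Fin D, pdev c b0 deg (xg K x) d / A := by
    intro x
    have := hpos S R (qq c (pa b0 deg (xg K x))) (hB.rep c _)
      (fun d => if hd : d < D then pdev c b0 deg (xg K x) ⟨d, hd⟩ / A else 0)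
      (fun d => by split_ifs; exacts [div_nonneg (pdev_nonneg _ _ _) hA0.le, le_rfl])
      (fun d hd n l0 f hf => by
        rw [dif_pos hd]
        exact hB.GG_le c (xg K x) ⟨d, hd⟩ (xg_ge K x _) hA0 n l0 f hf)
    rw [sum_qq, integral_congr_ae (ae_of_all _ fun g => marg2 _ (fun σ ρ => max (-R σ ρ) 0)),
      Finset.sum_range] at this
    simp only [Fin.is_lt, dite_true, Fin.eta] at this
    exact this
  set M : ℝ := (Fintype.card (Fin D → Fin K) : ℝ) with hM
  have hM0 : 0 ≤ M := Nat.cast_nonneg _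
  calc _ ≤ ∑ x : Fin D → Fin K, (4 * ε' + C * ∑ d : Fin D, pdev c b0 deg (xg K x) d / A) :=
        Finset.sum_le_sum fun x _ => each x
    _ = M * (4 * ε') + C * ∑ d : Fin D, (∑ x : Fin D → Fin K, pdev c b0 deg (xg K x) d) / A := by
        rw [Finset.sum_add_distrib, Finset.sum_const, Finset.card_univ, nsmul_eq_mul, ← Finset.mul_sum,
          Finset.sum_comm]
        simp only [Finset.sum_div]
        rfl
    _ ≤ M * (4 * ε') + C * ∑ d : Fin D, (M * ((K + 1) * (Real.log 2 + 4 * √(4 * D * A)) + 4 * A / K)) / A := by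
        gcongr with d
        exact hB.avg_dev hA0 c d K hK0
    _ = M * (4 * ε' + (C * D * ((K + 1) * (Real.log 2 + 4 * √(4 * D * A))) / A + C * D * 4 / K)) := by
        rw [Finset.sum_const, Finset.card_univ, Fintype.card_fin, nsmul_eq_mul]
        field_simp
    _ ≤ M * ε := by
        refine mul_le_mul_of_nonneg_left ?_ hM0
        have t1 : 4 * ε' ≤ ε / 2 := by
          have := min_le_left (ε / 8) (1/4)
          linarith
        have t2 : C * D * 4 / K ≤ ε / 4 := by
          rw [div_le_iff₀ hK']
          rw [div_lt_iff₀ hε] at hK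
          linarith
        have t3 : Real.log 2 + 4 * √(4 * D * A) ≤ (1 + 8 * √D) * √A := by
          have l2 : Real.log 2 ≤ 1 := by
            have := Real.log_two_lt_d9; linarith
          have : √(4 * D * A) = 2 * √D * √A := by
            rw [Real.sqrt_mul (by positivity), Real.sqrt_mul (by norm_num)]
            rw [show (4:ℝ) = 2 ^ 2 by norm_num, Real.sqrt_sq (by norm_num)]
          rw [this]
          nlinarith
        have t4 : C * D * ((K + 1) * (Real.log 2 + 4 * √(4 * D * A))) / A ≤ ε / 4 := by
          rw [div_le_iff₀ hA0]
          have : C * D * ((K + 1) * (Real.log 2 + 4 * √(4 * D * A))) ≤ C * D * ((K + 1) * ((1 + 8 * √D) * √A)) := by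
            gcongr
          refine this.trans ?_
          have e : C * D * ((K + 1) * ((1 + 8 * √D) * √A)) = W * √A := by rw [hW]; ring
          rw [e]
          rw [div_le_iff₀ hε] at hsA2
          calc W * √A ≤ (√A * ε / 4) * √A := mul_le_mul_of_nonneg_right (by linarith) (Real.sqrt_nonneg _)
            _ = ε / 4 * (√A * √A) := by ring
            _ = ε / 4 * A := by rw [hsq]
        linarith

end PSpin


namespace PSpin

/-- elementary symmetric sum -/
noncomputable def esy {n : ℕ} (p : ℕ) (z : Fin n → ℝ) : ℝ :=
  ∑ S ∈ Finset.powersetCard p Finset.univ, ∏ i ∈ S, z i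

theorem esy_rec {n : ℕ} (p : ℕ) (z : Fin n → ℝ) :
    (p + 1) * esy (p+1) z = ∑ S ∈ Finset.powersetCard p Finset.univ, ∑ i ∈ Finset.univ \ S, z i * ∏ i ∈ S, z i := by
  have h1 : (p + 1) * esy (p+1) z = ∑ S ∈ Finset.powersetCard (p+1) (Finset.univ : Finset (Fin n)), ∑ i ∈ S, ∏ i ∈ S, z i := by
    rw [esy, Finset.mul_sum]
    refine Finset.sum_congr rfl fun S hS => ?_
    rw [Finset.mem_powersetCard] at hS
    rw [Finset.sum_const, hS.2, nsmul_eq_mul]; push_cast; ring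
  rw [h1, Finset.sum_sigma', Finset.sum_sigma']
  refine Finset.sum_bij' (fun x _ => ⟨x.1.erase x.2, x.2⟩) (fun x _ => ⟨insert x.2 x.1, x.2⟩) ?_ ?_ ?_ ?_ ?_
  · rintro ⟨S, i⟩ h
    simp only [Finset.mem_sigma, Finset.mem_powersetCard, Finset.subset_univ, true_and] at h
    simp [Finset.card_erase_of_mem h.2, h.1]
  · rintro ⟨S, i⟩ h
    simp only [Finset.mem_sigma, Finset.mem_powersetCard, Finset.subset_univ, true_and, Finset.mem_sdiff, Finset.mem_univ] at h
    simp [Finset.card_insert_of_notMem h.2, h.1]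
  · rintro ⟨S, i⟩ h
    simp only [Finset.mem_sigma, Finset.mem_powersetCard, Finset.subset_univ, true_and] at h
    simp [Finset.insert_erase h.2]
  · rintro ⟨S, i⟩ h
    simp only [Finset.mem_sigma, Finset.mem_powersetCard, Finset.subset_univ, true_and, Finset.mem_sdiff, Finset.mem_univ] at h
    simp [Finset.erase_insert h.2]
  · rintro ⟨S, i⟩ h
    simp only [Finset.mem_sigma, Finset.mem_powersetCard, Finset.subset_univ, true_and] at h
    exact (Finset.mul_prod_erase S z h.2).symm

theorem prod_bd {n : ℕ} (z : Fin n → ℝ) (hz : ∀ i, |z i| ≤ 1) (S : Finset (Fin n)) : |∏ i ∈ S, z i| ≤ 1 := by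
  rw [Finset.abs_prod]; exact Finset.prod_le_one (fun _ _ => abs_nonneg _) fun i _ => hz i

theorem sum_bd {n : ℕ} (z : Fin n → ℝ) (hz : ∀ i, |z i| ≤ 1) : |∑ i, z i| ≤ n := by
  refine (Finset.abs_sum_le_sum_abs _ _).trans ((Finset.sum_le_sum fun i _ => hz i).trans ?_)
  simp

theorem choose_le_pow' (n p : ℕ) : ((n.choose p : ℕ) : ℝ) ≤ (n : ℝ) ^ p := by
  exact_mod_cast Nat.choose_le_pow n p

theorem esy_step {n : ℕ} (p : ℕ) (z : Fin n → ℝ) (hz : ∀ i, |z i| ≤ 1) :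
    |(p + 1) * esy (p+1) z - (∑ i, z i) * esy p z| ≤ p * (n : ℝ) ^ p := by
  rw [esy_rec, esy, Finset.mul_sum, ← Finset.sum_sub_distrib]
  refine (Finset.abs_sum_le_sum_abs _ _).trans ?_
  calc _ ≤ ∑ S ∈ Finset.powersetCard p (Finset.univ : Finset (Fin n)), (p : ℝ) := by
        refine Finset.sum_le_sum fun S hS => ?_
        rw [Finset.mem_powersetCard] at hS
        rw [← Finset.sum_mul, ← sub_mul, abs_mul]
        have h1 : ∑ i ∈ Finset.univ \ S, z i - ∑ i, z i = - ∑ i ∈ S, z i := by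
          rw [← Finset.sum_sdiff hS.1]; ring
        have h2 : |∑ i ∈ S, z i| ≤ p := by
          refine (Finset.abs_sum_le_sum_abs _ _).trans ((Finset.sum_le_sum fun i _ => hz i).trans ?_)
          simp [hS.2]
        rw [h1, abs_neg]
        calc _ ≤ (p : ℝ) * 1 := mul_le_mul h2 (prod_bd z hz S) (abs_nonneg _) (Nat.cast_nonneg _)
          _ = p := mul_one _
    _ = (n.choose p : ℕ) * (p : ℝ) := by simp
    _ ≤ p * (n : ℝ) ^ p := by
        rw [mul_comm]; exact mul_le_mul_of_nonneg_left (choose_le_pow' n p) (Nat.cast_nonneg _)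

theorem esy_cov (p : ℕ) : ∃ c : ℝ, 0 ≤ c ∧ ∀ (n : ℕ) (_ : 1 ≤ n) (z : Fin n → ℝ) (_ : ∀ i, |z i| ≤ 1),
    |(p+1).factorial * esy (p+1) z - (∑ i, z i) ^ (p+1)| ≤ c * (n : ℝ) ^ p := by
  induction p with
  | zero =>
    refine ⟨0, le_rfl, fun n hn z hz => ?_⟩
    have := esy_step 0 z hz
    simp [esy] at this ⊢
    exact this
  | succ p ih =>
    obtain ⟨c, hc, ih⟩ := ih
    refine ⟨c + (p+1).factorial * (p+1), by positivity, fun n hn z hz => ?_⟩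
    have h1 := ih n hn z hz
    have h2 := esy_step (p+1) z hz
    have h3 := sum_bd z hz
    have e : ((p+1+1).factorial : ℝ) * esy (p+1+1) z - (∑ i, z i) ^ (p+1+1) =
        (p+1).factorial * (((p+1 : ℕ) + 1) * esy (p+1+1) z - (∑ i, z i) * esy (p+1) z) +
        (∑ i, z i) * ((p+1).factorial * esy (p+1) z - (∑ i, z i) ^ (p+1)) := by
      rw [Nat.factorial_succ (p+1)]; push_cast; ring
    rw [e]
    refine (abs_add_le _ _).trans ?_
    rw [abs_mul, abs_mul, Nat.abs_cast]
    calc _ ≤ ((p+1).factorial : ℝ) * (((p+1 : ℕ) : ℝ) * (n : ℝ) ^ (p+1)) + n * (c * (n : ℝ) ^ p) := by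
          gcongr
      _ = _ := by push_cast; ring

theorem pow_sub_le {x y : ℝ} (hx : |x| ≤ 1) (hy : |y| ≤ 1) (p : ℕ) : |x ^ p - y ^ p| ≤ p * |x - y| := by
  induction p with
  | zero => simp
  | succ p ih =>
    have e : x ^ (p+1) - y ^ (p+1) = x * (x ^ p - y ^ p) + (x - y) * y ^ p := by ring
    rw [e]
    refine (abs_add_le _ _).trans ?_
    rw [abs_mul, abs_mul, abs_pow]
    have h1 : |x| * |x ^ p - y ^ p| ≤ 1 * (p * |x - y|) := mul_le_mul hx ih (abs_nonneg _) zero_le_one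
    have h2 : |x - y| * |y| ^ p ≤ |x - y| * 1 := mul_le_mul_of_nonneg_left (pow_le_one₀ (abs_nonneg _) hy) (abs_nonneg _)
    push_cast; linarith

/-- superadditivity defect of the overlap -/
theorem ovl_ineq {k : ℕ} (hk : 0 < k) {p : ℕ} (hp : 1 ≤ p) {N r M Rt rest : ℝ} (hN : 0 < N) (hr : 0 ≤ r)
    (hM : M = k * N + r) (R : Fin k → ℝ) (hR : ∀ j, |R j| ≤ 1) (hRt : |Rt| ≤ 1)
    (hrest : |rest| ≤ r) (h : M * Rt = N * ∑ j, R j + rest) :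
    M * Rt ^ p ≤ N * ∑ j, R j ^ p + (p + 1) * N * ∑ j, max (-R j) 0 + (2 * p + 1) * r := by
  have hk' : (0 : ℝ) < k := by exact_mod_cast hk
  have hM0 : 0 < M := by rw [hM]; positivity
  set P : Fin k → ℝ := fun j => max (R j) 0 with hP
  have hP0 : ∀ j, 0 ≤ P j := fun j => le_max_right _ _
  have hP1 : ∀ j, P j ≤ 1 := fun j => max_le ((le_abs_self _).trans (hR j)) zero_le_one
  have hPR : ∀ j, R j = P j - max (-R j) 0 := fun j => by
    simp only [hP]
    rcases le_total 0 (R j) with h | h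
    · rw [max_eq_left h, max_eq_right (by linarith)]; ring
    · rw [max_eq_right h, max_eq_left (by linarith)]; ring
  set n := ∑ j, max (-R j) 0 with hn
  have hn0 : 0 ≤ n := Finset.sum_nonneg fun _ _ => le_max_right _ _
  set Q : ℝ := ∑ j, (1 / (k:ℝ)) * P j with hQ
  have hQ' : k * Q = ∑ j, P j := by rw [hQ, ← Finset.mul_sum]; field_simp
  have hQ0 : 0 ≤ Q := Finset.sum_nonneg fun j _ => mul_nonneg (by positivity) (hP0 j)
  have hQ1 : Q ≤ 1 := by
    have : ∑ j, P j ≤ k := (Finset.sum_le_sum fun j _ => hP1 j).trans (by simp)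
    rw [← hQ'] at this
    nlinarith
  have hsR : ∑ j, R j = k * Q - n := by
    rw [hQ', hn, ← Finset.sum_sub_distrib]; exact Finset.sum_congr rfl fun j _ => hPR j
  have d1 : M * (Rt - Q) = -(N * n) + rest - r * Q := by
    rw [mul_sub, h, hsR, hM]; ring
  have d2 : M * |Rt - Q| ≤ N * n + 2 * r := by
    rw [← abs_of_pos hM0, ← abs_mul, d1]
    rw [abs_le] at hrest
    rw [abs_le]
    have : r * Q ≤ r := by nlinarith
    have : 0 ≤ r * Q := by positivity
    have : 0 ≤ N * n := by positivity
    constructor <;> linarith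
  have d3 : M * (Rt ^ p - Q ^ p) ≤ p * (N * n + 2 * r) := by
    have := pow_sub_le hRt (show |Q| ≤ 1 by rw [abs_of_nonneg hQ0]; exact hQ1) p
    have h2 := (le_abs_self _).trans this
    calc _ ≤ M * (p * |Rt - Q|) := mul_le_mul_of_nonneg_left h2 hM0.le
      _ = p * (M * |Rt - Q|) := by ring
      _ ≤ _ := mul_le_mul_of_nonneg_left d2 (Nat.cast_nonneg _)
  have d4 : Q ^ p ≤ ∑ j, (1 / (k:ℝ)) * P j ^ p := by
    refine Real.pow_arith_mean_le_arith_mean_pow Finset.univ (fun _ => 1 / (k:ℝ)) P (fun _ _ => by positivity) ?_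
      (fun j _ => hP0 j) p
    simp; field_simp
  have d5 : k * Q ^ p ≤ ∑ j, P j ^ p := by
    rw [← Finset.mul_sum, one_div, ← div_eq_inv_mul, le_div_iff₀ hk'] at d4
    linarith
  have d6 : ∑ j, P j ^ p ≤ ∑ j, R j ^ p + n := by
    rw [hn, ← Finset.sum_add_distrib]
    refine Finset.sum_le_sum fun j _ => ?_
    simp only [hP]
    rcases le_total 0 (R j) with h | h
    · rw [max_eq_left h, max_eq_right (by linarith)]; simp
    · rw [max_eq_right h, max_eq_left (by linarith), zero_pow (by omega)]
      have h1 : -(|R j| ^ p) ≤ R j ^ p := by rw [← abs_pow]; exact neg_abs_le _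
      have h2 : |R j| ^ p ≤ |R j| := pow_le_of_le_one (abs_nonneg _) (hR j) (by omega)
      have h3 : |R j| = - R j := abs_of_nonpos h
      linarith
  have d7 : Q ^ p ≤ 1 := pow_le_one₀ hQ0 hQ1
  have d8 : M * Q ^ p ≤ N * (∑ j, R j ^ p + n) + r := by
    rw [hM, add_mul]
    have : N * (k * Q ^ p) ≤ N * (∑ j, R j ^ p + n) := mul_le_mul_of_nonneg_left (d5.trans d6) hN.le
    nlinarith
  nlinarith

end PSpin


namespace PSpin

section
variable {S : Type} [Fintype S] [Nonempty S] {ι : Type} [Fintype ι]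

noncomputable def rot (a b f : ι → S → ℝ) (θ : ℝ) (i : ι) (σ : S) : ℝ :=
  Real.sin θ * a i σ + Real.cos θ * b i σ + f i σ

theorem phi_rot_deriv (c : S → ℝ) (a b f : ι → S → ℝ)
    (hab : ∀ i σ ρ, a i σ * b i ρ = 0) (haf : ∀ i σ ρ, a i σ * f i ρ = 0)
    (hbf : ∀ i σ ρ, b i σ * f i ρ = 0) (θ : ℝ) :
    HasDerivAt (fun θ => phi c (rot a b f θ))
      (Real.sin θ * Real.cos θ * gav c (rot a b f θ) (fun σ ρ =>
        (∑ i, a i σ * a i σ - ∑ i, b i σ * b i σ) - (∑ i, a i σ * a i ρ - ∑ i, b i σ * b i ρ))) θ := by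
  set Bt : ℝ → ι → S → ℝ := fun θ i σ => Real.cos θ * a i σ - Real.sin θ * b i σ with hBt
  have hd : ∀ θ g, HasDerivAt (fun θ => FE (en c (rot a b f θ) g))
      (∑ σ, gw (en c (rot a b f θ) g) σ * ∑ i, Bt θ i σ * g i) θ := by
    intro θ g
    refine FE_deriv (E := fun θ => en c (rot a b f θ) g) (a := fun σ => ∑ i, Bt θ i σ * g i) fun σ => ?_
    simp only [en, rot]
    refine HasDerivAt.const_add _ (HasDerivAt.fun_sum fun i _ => ?_)
    refine HasDerivAt.mul_const ?_ _
    refine ((((Real.hasDerivAt_sin θ).mul_const (a i σ)).add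
      ((Real.hasDerivAt_cos θ).mul_const (b i σ))).add_const (f i σ)).congr_deriv ?_
    simp only [hBt]; ring
  have key := hasDerivAt_integral_of_dominated_loc_of_deriv_le (μ := gm ι) (𝕜 := ℝ)
    (F := fun θ g => FE (en c (rot a b f θ) g))
    (F' := fun θ g => ∑ σ, gw (en c (rot a b f θ) g) σ * ∑ i, Bt θ i σ * g i)
    (x₀ := θ) (s := Set.univ) (bound := fun g => ∑ σ, ∑ i, (|a i σ| + |b i σ|) * |g i|)
    Filter.univ_mem (Eventually.of_forall fun θ => (FE_cont c _).aestronglyMeasurable)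
    (FE_integrable c _) ((int_gw c _ fun σ => int_lin (Bt θ) σ).aestronglyMeasurable)
    (ae_of_all _ fun g x _ => ?_)
    (integrable_finsetSum _ fun σ _ => integrable_finsetSum _ fun i _ =>
      ((integrable_coord i).norm).const_mul _)
    (ae_of_all _ fun g x _ => hd x g)
  · refine key.2.congr_deriv ?_
    rw [mean_h, gav, ← integral_const_mul]
    refine integral_congr_ae (ae_of_all _ fun g => ?_)
    have hK : ∀ σ ρ, ∑ i, Bt θ i σ * rot a b f θ i ρ = Real.sin θ * Real.cos θ *
        (∑ i, a i σ * a i ρ - ∑ i, b i σ * b i ρ) := by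
      intro σ ρ
      rw [← Finset.sum_sub_distrib, Finset.mul_sum]
      refine Finset.sum_congr rfl fun i _ => ?_
      have h1 := hab i σ ρ
      have h2 := hab i ρ σ
      have h3 := haf i σ ρ
      have h4 := hbf i σ ρ
      simp only [hBt, rot]
      linear_combination (Real.cos θ ^ 2) * h1 - Real.sin θ ^ 2 * h2 + Real.cos θ * h3 - Real.sin θ * h4
    simp only [hK]
    rw [Finset.mul_sum]
    refine Finset.sum_congr rfl fun σ _ => ?_
    simp only [mul_sub (gw (en c (rot a b f θ) g) _), Finset.sum_sub_distrib, ← Finset.sum_mul, gw_sum]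
    have : ∑ ρ, gw (en c (rot a b f θ) g) ρ * (Real.sin θ * Real.cos θ *
        (∑ i, a i σ * a i ρ - ∑ i, b i σ * b i ρ)) = Real.sin θ * Real.cos θ * ∑ ρ, gw (en c (rot a b f θ) g) ρ *
        (∑ i, a i σ * a i ρ - ∑ i, b i σ * b i ρ) := by
      rw [Finset.mul_sum]; exact Finset.sum_congr rfl fun ρ _ => by ring
    rw [this]
    simp only [mul_sub (gw (en c (rot a b f θ) g) _), Finset.sum_sub_distrib]
    ring
  · rw [Real.norm_eq_abs]
    refine (Finset.abs_sum_le_sum_abs _ _).trans (Finset.sum_le_sum fun σ _ => ?_)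
    rw [abs_mul, abs_of_nonneg (gw_nonneg _ _)]
    refine (mul_le_of_le_one_left (abs_nonneg _) (gw_le_one _ _)).trans ?_
    refine (Finset.abs_sum_le_sum_abs _ _).trans (Finset.sum_le_sum fun i _ => ?_)
    rw [abs_mul]
    refine mul_le_mul_of_nonneg_right ?_ (abs_nonneg _)
    refine (abs_sub _ _).trans (add_le_add ?_ ?_)
    · rw [abs_mul]; exact mul_le_of_le_one_left (abs_nonneg _) (Real.abs_cos_le_one _)
    · rw [abs_mul]; exact mul_le_of_le_one_left (abs_nonneg _) (Real.abs_sin_le_one _)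

theorem gav_int (c : S → ℝ) (a : ι → S → ℝ) (k : S → S → ℝ) :
    Integrable (fun g => ∑ σ, gw (en c a g) σ * ∑ ρ, gw (en c a g) ρ * k σ ρ) (gm ι) :=
  int_gw c a fun σ => int_gw c a fun ρ => integrable_const _

theorem gav_mono (c : S → ℝ) (a : ι → S → ℝ) {k k' : S → S → ℝ} (h : ∀ σ ρ, k σ ρ ≤ k' σ ρ) :
    gav c a k ≤ gav c a k' := by
  refine integral_mono (gav_int c a k) (gav_int c a k') fun g => ?_
  exact Finset.sum_le_sum fun σ _ => mul_le_mul_of_nonneg_left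
    (Finset.sum_le_sum fun ρ _ => mul_le_mul_of_nonneg_left (h σ ρ) (gw_nonneg _ _)) (gw_nonneg _ _)

theorem gav_const (c : S → ℝ) (a : ι → S → ℝ) (v : ℝ) : gav c a (fun _ _ => v) = v := by
  simp only [gav, ← Finset.sum_mul, gw_sum, one_mul]
  rw [integral_const, probReal_univ, one_smul]

theorem gav_add (c : S → ℝ) (a : ι → S → ℝ) (k k' : S → S → ℝ) :
    gav c a (fun σ ρ => k σ ρ + k' σ ρ) = gav c a k + gav c a k' := by
  simp only [gav]
  rw [← integral_add (gav_int c a k) (gav_int c a k')]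
  simp only [mul_add, Finset.sum_add_distrib]

theorem gav_smul (c : S → ℝ) (a : ι → S → ℝ) (v : ℝ) (k : S → S → ℝ) :
    gav c a (fun σ ρ => v * k σ ρ) = v * gav c a k := by
  simp only [gav]
  rw [← integral_const_mul]
  refine integral_congr_ae (ae_of_all _ fun g => ?_)
  simp only [Finset.mul_sum]
  refine Finset.sum_congr rfl fun σ _ => Finset.sum_congr rfl fun ρ _ => by ring

theorem gav_sum {κ : Type*} (s : Finset κ) (c : S → ℝ) (a : ι → S → ℝ) (k : κ → S → S → ℝ) :
    gav c a (fun σ ρ => ∑ j ∈ s, k j σ ρ) = ∑ j ∈ s, gav c a (k j) := by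
  classical
  induction s using Finset.induction_on with
  | empty => simpa using gav_const c a 0
  | insert j s hj ih =>
    simp only [Finset.sum_insert hj]
    rw [gav_add c a (k j) (fun σ ρ => ∑ j ∈ s, k j σ ρ), ih]

/-- conditioning on the Gaussians outside the range of `e` -/
theorem cond_block {X : Type*} [Fintype X] {ι' : Type} [Fintype ι']
    (e : ι' → ι) (he : Function.Injective e) (A : X → ι → S → ℝ)
    (hA : ∀ x x' i, i ∉ Set.range e → A x i = A x' i) {k : S → S → ℝ} {C : ℝ} (hk : ∀ σ ρ, 0 ≤ k σ ρ)
    (h : ∀ c', ∑ x, gav c' (fun i' => A x (e i')) k ≤ C) (c : S → ℝ) :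
    ∑ x, gav c (A x) k ≤ C := by
  classical
  rcases isEmpty_or_nonempty X with hX | ⟨⟨x0⟩⟩
  · have := h c; simpa using this
  set F : (ι → ℝ) → ℝ := fun g => ∑ x, ∑ σ, gw (en c (A x) g) σ * ∑ ρ, gw (en c (A x) g) ρ * k σ ρ with hF
  have hFi : Integrable F (gm ι) := integrable_finsetSum _ fun x _ => gav_int c (A x) k
  have e1 : ∑ x, gav c (A x) k = ∫ g, F g ∂(gm ι) := by
    rw [hF, integral_finsetSum _ fun x _ => gav_int c (A x) k]; rfl
  rw [e1, merge_integral (fun i => i ∈ Set.range e) hFi]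
  have hF0 : ∀ g, 0 ≤ F g := fun g => Finset.sum_nonneg fun x _ => Finset.sum_nonneg fun σ _ =>
    mul_nonneg (gw_nonneg _ _) (Finset.sum_nonneg fun ρ _ => mul_nonneg (gw_nonneg _ _) (hk _ _))
  have key : ∀ g' : ι → ℝ, ∫ g, F (fun i => if i ∈ Set.range e then g i else g' i) ∂(gm ι) ≤ C := by
    intro g'
    set c' : S → ℝ := fun σ => c σ + ∑ i with i ∉ Set.range e, A x0 i σ * g' i with hc'
    have en_eq : ∀ x (g : ι → ℝ), en c (A x) (fun i => if i ∈ Set.range e then g i else g' i)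
        = en c' (fun i' => A x (e i')) (fun i' => g (e i')) := by
      intro x g; funext σ
      simp only [en, hc']
      rw [← Finset.sum_filter_add_sum_filter_not Finset.univ (fun i => i ∈ Set.range e)]
      have s1 : ∑ i with i ∈ Set.range e, A x i σ * (if i ∈ Set.range e then g i else g' i)
          = ∑ i', A x (e i') σ * g (e i') := by
        rw [show (Finset.univ.filter fun i => i ∈ Set.range e) = Finset.univ.image e by
          ext i; simp]
        rw [Finset.sum_image (fun _ _ _ _ h => he h)]
        simp
      have s2 : ∑ i with i ∉ Set.range e, A x i σ * (if i ∈ Set.range e then g i else g' i)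
          = ∑ i with i ∉ Set.range e, A x0 i σ * g' i := by
        refine Finset.sum_congr rfl fun i hi => ?_
        have hi' := (Finset.mem_filter.1 hi).2
        rw [if_neg hi', hA x x0 i hi']
      rw [s1, s2]; ring
    refine le_trans (le_of_eq ?_) (h c')
    simp only [hF, en_eq]
    have hmp := comp_mp e he
    have : ∀ H : (ι' → ℝ) → ℝ, Continuous H → ∫ g, H (fun i' => g (e i')) ∂(gm ι) = ∫ g, H g ∂(gm ι') := by
      intro H hH
      rw [← hmp.map_eq, integral_map hmp.measurable.aemeasurable hH.aestronglyMeasurable]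
    rw [this (fun g => ∑ x, ∑ σ, gw (en c' (fun i' => A x (e i')) g) σ *
      ∑ ρ, gw (en c' (fun i' => A x (e i')) g) ρ * k σ ρ)]
    · rw [integral_finsetSum _ fun x _ => gav_int c' (fun i' => A x (e i')) k]; rfl
    · refine continuous_finsetSum _ fun x _ => continuous_finsetSum _ fun σ _ => ?_
      exact (gw_cont _ _ _).mul (continuous_finsetSum _ fun ρ _ => (gw_cont _ _ _).mul continuous_const)
  calc _ ≤ ∫ g' : ι → ℝ, C ∂(gm ι) := integral_mono_of_nonneg
        (ae_of_all _ fun g' => integral_nonneg fun g => hF0 _) (integrable_const _) (ae_of_all _ key)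
    _ = C := by rw [integral_const, probReal_univ, one_smul]

theorem phi_zero_le (f : ι → S → ℝ) {v : ℝ} (hv : ∀ σ, ∑ i, f i σ ^ 2 ≤ v) :
    phi (fun _ => 0) f ≤ Real.log (Fintype.card S) + v / 2 := by
  have hmgf : ∀ t : ℝ, ∫ x, Real.exp (t * x) ∂(gaussianReal 0 1) = Real.exp (t ^ 2 / 2) := by
    intro t
    have := congrFun (mgf_id_gaussianReal (μ := 0) (v := 1)) t
    simpa [mgf] using this
  have hI : ∀ σ, Integrable (fun g : ι → ℝ => Real.exp (∑ i, f i σ * g i)) (gm ι) := by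
    intro σ
    simp only [Real.exp_sum]
    exact Integrable.fintype_prod (f := fun i x => Real.exp (f i σ * x))
      fun i => integrable_exp_mul_gaussianReal _
  have hE : ∀ σ, ∫ g, Real.exp (∑ i, f i σ * g i) ∂(gm ι) ≤ Real.exp (v / 2) := by
    intro σ
    simp only [Real.exp_sum]
    rw [integral_fintype_prod_eq_prod (fun i x => Real.exp (f i σ * x))]
    simp only [hmgf]
    rw [← Real.exp_sum, ← Finset.sum_div]
    exact Real.exp_le_exp.2 (div_le_div_of_nonneg_right (hv σ) (by norm_num))
  have hc : (0 : ℝ) < Fintype.card S := by exact_mod_cast Fintype.card_pos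
  set y : ℝ := Fintype.card S * Real.exp (v / 2) with hy
  have hy0 : 0 < y := mul_pos hc (Real.exp_pos _)
  have hly : Real.log y = Real.log (Fintype.card S) + v / 2 := by
    rw [hy, Real.log_mul hc.ne' (Real.exp_pos _).ne', Real.log_exp]
  have hS : Integrable (fun g : ι → ℝ => ∑ σ, Real.exp (∑ i, f i σ * g i)) (gm ι) :=
    integrable_finsetSum _ fun σ _ => hI σ
  have pt : ∀ g, FE (en (fun _ => 0) f g) ≤ (∑ σ, Real.exp (∑ i, f i σ * g i)) / y + (Real.log y - 1) := by
    intro g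
    have h1 := Z_pos (en (fun _ => 0) f g)
    have h2 := Real.log_le_sub_one_of_pos (div_pos h1 hy0)
    rw [Real.log_div h1.ne' hy0.ne'] at h2
    simp only [FE]
    simp only [en, zero_add] at h2 ⊢
    linarith
  calc phi (fun _ => 0) f ≤ ∫ g, ((∑ σ, Real.exp (∑ i, f i σ * g i)) / y + (Real.log y - 1)) ∂(gm ι) :=
        integral_mono (FE_integrable _ _) ((hS.div_const y).add (integrable_const _)) pt
    _ = (∑ σ, ∫ g, Real.exp (∑ i, f i σ * g i) ∂(gm ι)) / y + (Real.log y - 1) := by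
        rw [integral_add (hS.div_const y) (integrable_const _), integral_div,
          integral_finsetSum _ fun σ _ => hI σ, integral_const, probReal_univ, one_smul]
    _ ≤ (∑ σ : S, Real.exp (v / 2)) / y + (Real.log y - 1) := by
        gcongr with σ _
        exact hE σ
    _ = Real.log y := by
        rw [Finset.sum_const, Finset.card_univ, nsmul_eq_mul, ← hy, div_self hy0.ne']; ring
    _ = _ := hly

theorem phi_le_of_max (a f : ι → S → ℝ) {v : ℝ} (hv : ∀ σ, ∑ i, f i σ ^ 2 ≤ v) {m : (ι → ℝ) → ℝ}
    (hm : Integrable m (gm ι)) (h : ∀ g σ, ∑ i, a i σ * g i ≤ m g) :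
    phi (fun _ => 0) (fun i σ => a i σ + f i σ) ≤ ∫ g, m g ∂(gm ι) + (Real.log (Fintype.card S) + v / 2) := by
  have h2 := phi_zero_le f hv
  refine le_trans ?_ (add_le_add_right h2 _)
  rw [phi, phi, ← integral_add hm (FE_integrable _ _)]
  refine integral_mono (FE_integrable _ _) (hm.add (FE_integrable _ _)) fun g => ?_
  show FE _ ≤ m g + FE _
  rw [add_comm (m g)]
  refine FE_mono_add _ _ fun σ => ?_
  have := h g σ
  simp only [en, add_mul, Finset.sum_add_distrib]
  linarith

theorem phi_add_orth (c : S → ℝ) (a f : ι → S → ℝ) (haf : ∀ i σ ρ, a i σ * f i ρ = 0) :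
    phi c a ≤ phi c (fun i σ => a i σ + f i σ) := by
  have h := phi_add_ge c a f
  rw [mean_h] at h
  have : ∀ σ ρ, ∑ i, f i σ * a i ρ = 0 := fun σ ρ =>
    Finset.sum_eq_zero fun i _ => by rw [mul_comm]; exact haf i ρ σ
  simpa [this] using h

theorem phi_ge_of_le (a : ι → S → ℝ) {m : (ι → ℝ) → ℝ}
    (hm : Integrable m (gm ι)) (h : ∀ g, ∃ σ, m g ≤ ∑ i, a i σ * g i) :
    ∫ g, m g ∂(gm ι) ≤ phi (fun _ => 0) a := by
  refine integral_mono hm (FE_integrable _ _) fun g => ?_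
  obtain ⟨σ, hσ⟩ := h g
  refine hσ.trans ?_
  have := le_FE (en (fun _ => 0) a g) σ
  simpa [en] using this

end
end PSpin


namespace PSpin

/-- spin -/
noncomputable def sp (b : Bool) : ℝ := if b then (1 : ℝ) else -1

theorem sp_sq (b : Bool) : sp b * sp b = 1 := by cases b <;> simp [sp]
theorem sp_abs (b : Bool) : |sp b| = 1 := by cases b <;> simp [sp]

/-- overlap on a block -/
noncomputable def ov {M N : ℕ} (e : Fin N → Fin M) (σ ρ : Fin M → Bool) : ℝ :=
  (1 / N) * ∑ i, sp (σ (e i)) * sp (ρ (e i))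

theorem ov_mul {M N : ℕ} (hN : 1 ≤ N) (e : Fin N → Fin M) (σ ρ : Fin M → Bool) :
    (N : ℝ) * ov e σ ρ = ∑ i, sp (σ (e i)) * sp (ρ (e i)) := by
  have : (N : ℝ) ≠ 0 := by positivity
  unfold ov; field_simp

theorem ov_abs {M N : ℕ} (hN : 1 ≤ N) (e : Fin N → Fin M) (σ ρ : Fin M → Bool) : |ov e σ ρ| ≤ 1 := by
  have hN' : (0:ℝ) < N := by positivity
  have h : |∑ i, sp (σ (e i)) * sp (ρ (e i))| ≤ N := by
    refine (Finset.abs_sum_le_sum_abs _ _).trans ?_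
    simp [abs_mul, sp_abs]
  rw [← ov_mul hN, abs_mul, abs_of_pos hN'] at h
  nlinarith

theorem ov_diag {M N : ℕ} (hN : 1 ≤ N) (e : Fin N → Fin M) (σ : Fin M → Bool) : ov e σ σ = 1 := by
  have : (N : ℝ) ≠ 0 := by positivity
  simp [ov, sp_sq, this]

/-- coefficients of the Hamiltonian, `p = q + 1` -/
noncomputable def hc (n q : ℕ) (T : {S : Finset (Fin n) // S.card = q + 1}) (σ : Fin n → Bool) : ℝ :=
  (1 / √n) ^ q * ∏ i ∈ T.1, sp (σ i)

theorem hc_abs (n q : ℕ) (T : {S : Finset (Fin n) // S.card = q + 1}) (σ : Fin n → Bool) :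
    |hc n q T σ| = (1 / √n) ^ q := by
  rw [hc, abs_mul, Finset.abs_prod]; simp [sp_abs, abs_of_nonneg (Real.sqrt_nonneg _)]

theorem hc_val {n : ℕ} (hn : 1 ≤ n) (q : ℕ) (J : {S : Finset (Fin n) // S.card = q + 1} → ℝ) (σ : Fin n → Bool) :
    ∑ T, hc n q T σ * J T = n * pSpinValue n (q+1) J σ := by
  have hn' : (0:ℝ) < n := by positivity
  have h1 : (n : ℝ) * (n : ℝ) ^ (-((((q+1 : ℕ) : ℝ) + 1) / 2)) = (1 / √n) ^ q := by
    have e1 : (1 / √(n:ℝ)) = (n : ℝ) ^ (-(1/2) : ℝ) := by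
      rw [Real.sqrt_eq_rpow, Real.rpow_neg hn'.le, one_div]
    rw [e1, ← Real.rpow_natCast, ← Real.rpow_mul hn'.le]
    nth_rewrite 1 [← Real.rpow_one (n : ℝ)]
    rw [← Real.rpow_add hn']
    congr 1; push_cast; ring
  rw [pSpinValue, ← mul_assoc, h1, Finset.mul_sum]
  refine Finset.sum_congr rfl fun T _ => ?_
  simp only [hc, sp]; ring

theorem esy_sub {n : ℕ} (p : ℕ) (z : Fin n → ℝ) :
    ∑ T : {S : Finset (Fin n) // S.card = p}, ∏ i ∈ T.1, z i = esy p z := by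
  rw [esy]
  exact (Finset.sum_subtype (Finset.powersetCard p Finset.univ) (fun S => by simp [Finset.mem_powersetCard])
    (fun S => ∏ i ∈ S, z i)).symm

theorem hc_cov {n : ℕ} (q : ℕ) (σ ρ : Fin n → Bool) :
    ∑ T, hc n q T σ * hc n q T ρ = (1 / n) ^ q * esy (q+1) (fun i => sp (σ i) * sp (ρ i)) := by
  rw [← esy_sub, Finset.mul_sum]
  refine Finset.sum_congr rfl fun T _ => ?_
  simp only [hc]
  rw [Finset.prod_mul_distrib]
  have : (1 / √(n:ℝ)) ^ q * (1 / √(n:ℝ)) ^ q = (1 / n) ^ q := by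
    rw [← mul_pow]; congr 1
    rw [div_mul_div_comm, Real.mul_self_sqrt (by positivity), one_mul]
  rw [← this]; ring

theorem hc_cov_approx (q : ℕ) : ∃ c : ℝ, 0 ≤ c ∧ ∀ (n : ℕ) (_ : 1 ≤ n) (σ ρ : Fin n → Bool),
    |∑ T, hc n q T σ * hc n q T ρ - n * ov id σ ρ ^ (q+1) / (q+1).factorial| ≤ c := by
  obtain ⟨c, hc0, h⟩ := esy_cov q
  refine ⟨c, hc0, fun n hn σ ρ => ?_⟩
  have hn' : (0:ℝ) < n := by positivity
  have h1 := h n hn (fun i => sp (σ i) * sp (ρ i)) (fun i => by simp [abs_mul, sp_abs])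
  have h2 := ov_mul hn id σ ρ
  simp only [id] at h2
  rw [← h2] at h1
  rw [hc_cov]
  set E := esy (q+1) (fun i => sp (σ i) * sp (ρ i))
  set R := ov id σ ρ
  set F : ℝ := ((q+1).factorial : ℝ) with hF
  have hF1 : 1 ≤ F := by rw [hF]; exact_mod_cast Nat.factorial_pos _
  have e : (1 / (n:ℝ)) ^ q * E - n * R ^ (q+1) / F = (F * E - (n * R) ^ (q+1)) / (F * n ^ q) := by
    have hF0 : F ≠ 0 := by positivity
    have : (n : ℝ) ≠ 0 := hn'.ne'
    rw [one_div, inv_pow, mul_pow, pow_succ (n : ℝ)]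
    field_simp
  rw [e, abs_div, abs_of_pos (by positivity : 0 < F * (n:ℝ) ^ q), div_le_iff₀ (by positivity)]
  refine h1.trans (mul_le_mul_of_nonneg_left ?_ hc0)
  exact le_mul_of_one_le_left (by positivity) hF1

/-- rpow factor -/
theorem gsv_lip (n p : ℕ) :
    LipC (fun _ : {S : Finset (Fin n) // S.card = p} => (n : ℝ) ^ (-(((p : ℝ) + 1) / 2))) (groundStateValue n p) := by
  have key : ∀ g g' : {S : Finset (Fin n) // S.card = p} → ℝ, groundStateValue n p g ≤ groundStateValue n p g' +
      ∑ i, (n : ℝ) ^ (-(((p : ℝ) + 1) / 2)) * |g i - g' i| := by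
    intro g g'
    refine Finset.sup'_le _ _ fun σ _ => ?_
    have h1 : pSpinValue n p g' σ ≤ groundStateValue n p g' := Finset.le_sup' (pSpinValue n p g') (Finset.mem_univ σ)
    refine le_trans ?_ (add_le_add_left h1 _)
    rw [pSpinValue, pSpinValue, ← Finset.mul_sum, ← mul_add, ← Finset.sum_add_distrib]
    refine mul_le_mul_of_nonneg_left (Finset.sum_le_sum fun T _ => ?_) (Real.rpow_nonneg (Nat.cast_nonneg _) _)
    have hp : |∏ i ∈ T.1, (if σ i then (1:ℝ) else -1)| = 1 := by
      rw [Finset.abs_prod]; exact Finset.prod_eq_one fun i _ => sp_abs (σ i)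
    have := le_abs_self ((g T - g' T) * ∏ i ∈ T.1, (if σ i then (1:ℝ) else -1))
    rw [abs_mul, hp, mul_one] at this
    linarith
  intro g g'
  rw [abs_le]
  have h1 := key g g'
  have h2 := key g' g
  simp only [abs_sub_comm (g' _)] at h2
  constructor <;> linarith

/-- mean ground state -/
noncomputable def GS (q n : ℕ) : ℝ := ∫ g, groundStateValue n (q+1) g ∂(gm {S : Finset (Fin n) // S.card = q + 1})

theorem gsv_int (n p : ℕ) : Integrable (groundStateValue n p) (gm {S : Finset (Fin n) // S.card = p}) :=
  (gsv_lip n p).integrable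

theorem val_le_gsv {n : ℕ} (hn : 1 ≤ n) (q : ℕ) (J : {S : Finset (Fin n) // S.card = q + 1} → ℝ) (σ : Fin n → Bool) :
    ∑ T, hc n q T σ * J T ≤ n * groundStateValue n (q+1) J := by
  rw [hc_val hn]
  exact mul_le_mul_of_nonneg_left (Finset.le_sup' (pSpinValue n (q+1) J) (Finset.mem_univ σ)) (Nat.cast_nonneg _)

theorem exists_gsv {n : ℕ} (hn : 1 ≤ n) (q : ℕ) (J : {S : Finset (Fin n) // S.card = q + 1} → ℝ) :
    ∃ σ, ∑ T, hc n q T σ * J T = n * groundStateValue n (q+1) J := by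
  obtain ⟨σ, _, h⟩ := Finset.exists_mem_eq_sup' Finset.univ_nonempty (pSpinValue n (q+1) J)
  exact ⟨σ, by rw [hc_val hn, groundStateValue, h]⟩

theorem card_le (n p : ℕ) : (Fintype.card {S : Finset (Fin n) // S.card = p} : ℝ) ≤ (n : ℝ) ^ p := by
  rw [Fintype.card_finset_len, Fintype.card_fin]; exact choose_le_pow' n p

theorem hc_sq_sum {n : ℕ} (hn : 1 ≤ n) (q : ℕ) (σ : Fin n → Bool) : ∑ T, hc n q T σ ^ 2 ≤ n := by
  have hn' : (0:ℝ) < n := by positivity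
  have : ∀ T, hc n q T σ ^ 2 = (1 / n) ^ q := by
    intro T
    rw [← sq_abs, hc_abs, ← pow_mul, mul_comm q 2, pow_mul, div_pow, one_pow, Real.sq_sqrt hn'.le]
  simp only [this]
  rw [Finset.sum_const, nsmul_eq_mul, Finset.card_univ]
  refine (mul_le_mul_of_nonneg_right (card_le n (q+1)) (by positivity)).trans (le_of_eq ?_)
  rw [pow_succ, mul_right_comm, ← mul_pow, mul_one_div, div_self hn'.ne', one_pow, one_mul]

theorem GS_le {n : ℕ} (hn : 1 ≤ n) (q : ℕ) : GS q n ≤ 2 := by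
  have hn' : (0:ℝ) < n := by positivity
  have h1 := phi_ge_of_le (hc n q) ((gsv_int n (q+1)).const_mul (n : ℝ)) fun g => by
    obtain ⟨σ, h⟩ := exists_gsv hn q g
    exact ⟨σ, h.ge⟩
  have h2 := phi_zero_le (hc n q) (hc_sq_sum hn q)
  rw [integral_const_mul] at h1
  change (n : ℝ) * GS q n ≤ _ at h1
  have h3 : Real.log (Fintype.card (Fin n → Bool)) = n * Real.log 2 := by simp
  have h4 := Real.log_two_lt_d9
  rw [h3] at h2
  have : (n : ℝ) * GS q n ≤ n * 2 := by nlinarith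
  exact le_of_mul_le_mul_left this hn'

theorem GS_nonneg {n : ℕ} (hn : 1 ≤ n) (q : ℕ) : 0 ≤ GS q n := by
  have hn' : (0:ℝ) < n := by positivity
  have h0 : ∫ g : {S : Finset (Fin n) // S.card = q + 1} → ℝ, ∑ T, hc n q T (fun _ => true) * g T ∂(gm _) = 0 := by
    rw [integral_finsetSum _ fun i _ => (integrable_coord i).const_mul _]
    simp only [integral_const_mul, integral_coord, mul_zero, Finset.sum_const_zero]
  have : (0:ℝ) ≤ n * GS q n := by
    rw [← h0, GS, ← integral_const_mul]
    exact integral_mono (int_lin (hc n q) _) ((gsv_int n (q+1)).const_mul _) fun g => val_le_gsv hn q g _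
  exact nonneg_of_mul_nonneg_right this hn'

end PSpin


namespace PSpin

/-- index set of the perturbation -/
abbrev IP (D N : ℕ) : Type := Σ d : Fin D, (Fin ((d : ℕ) + 1) → Fin N)

/-- perturbation coefficients -/
noncomputable def pb0 {M N : ℕ} (D : ℕ) (s : ℝ) (e : Fin N → Fin M) (i : IP D N) (σ : Fin M → Bool) : ℝ :=
  s * (1 / √N) ^ (i.1 : ℕ) * ∏ k, sp (σ (e (i.2 k)))

noncomputable def pB (D N : ℕ) (s : ℝ) (i : IP D N) : ℝ := s * (1 / √N) ^ (i.1 : ℕ)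

theorem pb0_abs {M N : ℕ} (D : ℕ) {s : ℝ} (hs : 0 ≤ s) (e : Fin N → Fin M) (i : IP D N) (σ : Fin M → Bool) :
    |pb0 D s e i σ| = pB D N s i := by
  rw [pb0, abs_mul, Finset.abs_prod]
  simp only [sp_abs, Finset.prod_const_one, mul_one, pB]
  exact abs_of_nonneg (by positivity)

theorem sqrt_pow_mul (N d : ℕ) : (1 / √(N:ℝ)) ^ d * (1 / √(N:ℝ)) ^ d = (1 / N) ^ d := by
  rw [← mul_pow]; congr 1
  rw [div_mul_div_comm, Real.mul_self_sqrt (by positivity), one_mul]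

theorem pB_sum {N : ℕ} (hN : 1 ≤ N) (D : ℕ) (s : ℝ) : ∑ i, pB D N s i ^ 2 = D * (s ^ 2 * N) := by
  have hN' : (0:ℝ) < N := by positivity
  rw [Fintype.sum_sigma]
  have : ∀ d : Fin D, ∑ I : Fin ((d:ℕ)+1) → Fin N, pB D N s ⟨d, I⟩ ^ 2 = s ^ 2 * N := by
    intro d
    have h : ∀ I : Fin ((d:ℕ)+1) → Fin N, pB D N s ⟨d, I⟩ ^ 2 = s ^ 2 * (1 / N) ^ (d:ℕ) := by
      intro I
      rw [← sqrt_pow_mul]; simp only [pB]; ring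
    simp only [h]
    rw [Finset.sum_const, nsmul_eq_mul, Finset.card_univ]
    simp only [Fintype.card_fun, Fintype.card_fin]
    push_cast
    rw [pow_succ, mul_left_comm, mul_right_comm, ← mul_pow, mul_one_div, div_self hN'.ne', one_pow, one_mul]
  simp only [this]; simp

theorem pb0_blk {M N : ℕ} (hN : 1 ≤ N) (D : ℕ) {s : ℝ} (hs : 0 ≤ s) (e : Fin N → Fin M) :
    Blk D (s ^ 2 * N) (ov e) (pb0 D s e) (fun i => i.1) (pB D N s) where
  bd := ov_abs hN e
  diag := ov_diag hN e
  symm := fun σ ρ => by simp only [ov, mul_comm]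
  psd := fun n τ => by
    have : ∑ l, ∑ l', ov e (τ l) (τ l') = (1 / N) * ∑ i, (∑ l, sp (τ l (e i))) ^ 2 := by
      simp only [ov, ← Finset.mul_sum]
      congr 1
      simp only [sq, Finset.sum_mul_sum]
      rw [Finset.sum_comm]
      simp only [Finset.sum_comm (s := (Finset.univ : Finset (Fin n))) (t := (Finset.univ : Finset (Fin N)))]
      refine Finset.sum_congr rfl fun i _ => Finset.sum_comm
    rw [this]; positivity
  bB := fun i σ => (pb0_abs D hs e i σ).le
  BA := (pB_sum hN D s).le
  cov := fun d σ ρ => by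
    have hN' : (0:ℝ) < N := by positivity
    rw [Fintype.sum_sigma, Finset.sum_eq_single d]
    · have h : ∀ I : Fin ((d:ℕ)+1) → Fin N, (if (⟨d, I⟩ : IP D N).1 = d then pb0 D s e ⟨d, I⟩ σ else 0) *
          pb0 D s e ⟨d, I⟩ ρ = s ^ 2 * (1 / N) ^ (d:ℕ) * ∏ k, (sp (σ (e (I k))) * sp (ρ (e (I k)))) := by
        intro I
        rw [if_pos rfl, ← sqrt_pow_mul, Finset.prod_mul_distrib]; simp only [pb0]; ring
      rw [Finset.sum_congr rfl fun I _ => h I]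
      rw [← Finset.mul_sum, ← Fintype.sum_pow (fun i => sp (σ (e i)) * sp (ρ (e i))), ← ov_mul hN, mul_pow,
        pow_succ (N : ℝ)]
      have : (1 / (N:ℝ)) ^ (d:ℕ) * (N:ℝ) ^ (d:ℕ) = 1 := by
        rw [← mul_pow, one_div, inv_mul_cancel₀ hN'.ne', one_pow]
      linear_combination (s ^ 2 * N * ov e σ ρ ^ ((d:ℕ)+1)) * this
    · intro d' _ hd'
      refine Finset.sum_eq_zero fun I _ => ?_
      rw [if_neg hd', zero_mul]
    · simp

section
variable {S : Type} [Fintype S] [Nonempty S] {ι : Type} [Fintype ι]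

theorem interp {X : Type} [Fintype X] (a b : ι → S → ℝ) (f : X → ι → S → ℝ)
    (hab : ∀ i σ ρ, a i σ * b i ρ = 0) (haf : ∀ x i σ ρ, a i σ * f x i ρ = 0)
    (hbf : ∀ x i σ ρ, b i σ * f x i ρ = 0) {k : ℕ} (Rm : Fin k → S → S → ℝ) {C0 w ε : ℝ} (hw : 0 ≤ w)
    (hC0 : 0 ≤ C0) (hε : 0 ≤ ε)
    (hK : ∀ σ ρ, -(C0 + w * ∑ j, Rm j σ ρ) ≤
      (∑ i, a i σ * a i σ - ∑ i, b i σ * b i σ) - (∑ i, a i σ * a i ρ - ∑ i, b i σ * b i ρ))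
    (hR : ∀ θ j, ∑ x, gav (fun _ => 0) (rot a b (f x) θ) (Rm j) ≤ Fintype.card X * ε) :
    ∑ x, phi (fun _ => 0) (fun i σ => b i σ + f x i σ) ≤
      ∑ x, phi (fun _ => 0) (fun i σ => a i σ + f x i σ) + Fintype.card X * (2 * (C0 + w * (k * ε))) := by
  set L : ℝ → ℝ := fun θ => ∑ x, phi (fun _ => 0) (rot a b (f x) θ) with hL
  set L' : ℝ → ℝ := fun θ => ∑ x, (Real.sin θ * Real.cos θ * gav (fun _ => 0) (rot a b (f x) θ) (fun σ ρ =>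
        (∑ i, a i σ * a i σ - ∑ i, b i σ * b i σ) - (∑ i, a i σ * a i ρ - ∑ i, b i σ * b i ρ))) with hL'
  have hd : ∀ θ, HasDerivAt L (L' θ) θ := fun θ =>
    HasDerivAt.fun_sum fun x _ => phi_rot_deriv _ a b (f x) hab (haf x) (hbf x) θ
  have hpi := Real.pi_pos
  have hpi4 := Real.pi_le_four
  obtain ⟨θ, hθ, hs⟩ := exists_hasDerivAt_eq_slope L L' (a := 0) (b := Real.pi / 2) (by linarith)
    (fun θ _ => (hd θ).continuousAt.continuousWithinAt) (fun θ _ => hd θ)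
  set Q : ℝ := Fintype.card X * (C0 + w * (k * ε)) with hQ
  have hQ0 : 0 ≤ Q := by positivity
  have hG : -Q ≤ ∑ x, gav (fun _ => 0) (rot a b (f x) θ) (fun σ ρ =>
        (∑ i, a i σ * a i σ - ∑ i, b i σ * b i σ) - (∑ i, a i σ * a i ρ - ∑ i, b i σ * b i ρ)) := by
    have h1 : ∀ x, -(C0 + w * ∑ j, gav (fun _ => 0) (rot a b (f x) θ) (Rm j)) ≤
        gav (fun _ => 0) (rot a b (f x) θ) (fun σ ρ =>
        (∑ i, a i σ * a i σ - ∑ i, b i σ * b i σ) - (∑ i, a i σ * a i ρ - ∑ i, b i σ * b i ρ)) := by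
      intro x
      refine le_trans (le_of_eq ?_) (gav_mono _ _ hK)
      have e : (fun σ ρ => -(C0 + w * ∑ j, Rm j σ ρ)) = fun σ ρ => -C0 + (-w) * ∑ j, Rm j σ ρ := by
        funext σ ρ; ring
      rw [e, gav_add _ _ (fun _ _ => -C0), gav_const, gav_smul _ _ (-w) (fun σ ρ => ∑ j, Rm j σ ρ), gav_sum]; ring
    refine le_trans ?_ (Finset.sum_le_sum fun x _ => h1 x)
    rw [Finset.sum_neg_distrib, neg_le_neg_iff, Finset.sum_add_distrib, ← Finset.mul_sum, Finset.sum_comm, Finset.sum_const,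
      nsmul_eq_mul, Finset.card_univ, hQ, mul_add]
    refine add_le_add_right ?_ _
    have h2 : ∑ j : Fin k, ∑ x, gav (fun _ => 0) (rot a b (f x) θ) (Rm j) ≤ k * (Fintype.card X * ε) := by
      refine (Finset.sum_le_sum fun j _ => hR θ j).trans ?_
      simp
    nlinarith
  have hsc : 0 ≤ Real.sin θ * Real.cos θ := mul_nonneg (Real.sin_nonneg_of_nonneg_of_le_pi hθ.1.le (by linarith [hθ.2]))
    (Real.cos_nonneg_of_neg_pi_div_two_le_of_le (by linarith [hθ.1]) hθ.2.le)
  have hsc1 : Real.sin θ * Real.cos θ ≤ 1 := by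
    nlinarith [Real.sin_sq_add_cos_sq θ, sq_nonneg (Real.sin θ - Real.cos θ)]
  have hL'ge : -Q ≤ L' θ := by
    rw [hL']; simp only
    rw [← Finset.mul_sum]
    nlinarith
  rw [hs, le_div_iff₀ (by linarith)] at hL'ge
  have e0 : L 0 = ∑ x, phi (fun _ => 0) (fun i σ => b i σ + f x i σ) := by
    simp only [hL]; refine Finset.sum_congr rfl fun x _ => ?_
    congr 1; funext i σ; simp [rot]
  have e1 : L (Real.pi / 2) = ∑ x, phi (fun _ => 0) (fun i σ => a i σ + f x i σ) := by
    simp only [hL]; refine Finset.sum_congr rfl fun x _ => ?_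
    congr 1; funext i σ; simp [rot]
  rw [← e0, ← e1]
  have : Q * (Real.pi / 2 - 0) ≤ Q * 2 := mul_le_mul_of_nonneg_left (by linarith) hQ0
  have e2 : (Fintype.card X : ℝ) * (2 * (C0 + w * (k * ε))) = Q * 2 := by rw [hQ]; ring
  rw [e2]
  linarith

end
end PSpin


namespace PSpin

/-- all Gaussian indices -/
abbrev IT (M N k q D : ℕ) : Type :=
  {S : Finset (Fin M) // S.card = q + 1} ⊕ ((Fin k × {S : Finset (Fin N) // S.card = q + 1}) ⊕ (Fin k × IP D N))

section
variable {M N k q D K : ℕ}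

noncomputable def cA (β : ℝ) : IT M N k q D → (Fin M → Bool) → ℝ
  | Sum.inl T, σ => β * hc M q T σ
  | Sum.inr _, _ => 0

noncomputable def cB (β : ℝ) (e : Fin k → Fin N → Fin M) : IT M N k q D → (Fin M → Bool) → ℝ
  | Sum.inl _, _ => 0
  | Sum.inr (Sum.inl jT), σ => β * hc N q jT.2 (fun i => σ (e jT.1 i))
  | Sum.inr (Sum.inr _), _ => 0

noncomputable def cF (s : ℝ) (e : Fin k → Fin N → Fin M) (x : Fin k → (Fin D → Fin K)) :
    IT M N k q D → (Fin M → Bool) → ℝ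
  | Sum.inl _, _ => 0
  | Sum.inr (Sum.inl _), _ => 0
  | Sum.inr (Sum.inr ji), σ => pa (pb0 D s (e ji.1)) (fun i => i.1) (xg K (x ji.1)) ji.2 σ

theorem hab (β : ℝ) (e : Fin k → Fin N → Fin M) (i : IT M N k q D) (σ ρ : Fin M → Bool) :
    cA β i σ * cB β e i ρ = 0 := by
  rcases i with T | jT | ji <;> simp [cA, cB]

theorem haf (β s : ℝ) (e : Fin k → Fin N → Fin M) (x : Fin k → (Fin D → Fin K)) (i : IT M N k q D) (σ ρ : Fin M → Bool) :
    cA β i σ * cF s e x i ρ = 0 := by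
  rcases i with T | jT | ji <;> simp [cA, cF]

theorem hbf (β s : ℝ) (e : Fin k → Fin N → Fin M) (x : Fin k → (Fin D → Fin K)) (i : IT M N k q D) (σ ρ : Fin M → Bool) :
    cB β e i σ * cF s e x i ρ = 0 := by
  rcases i with T | jT | ji <;> simp [cB, cF]

theorem hR_model {β s ε : ℝ} (hs : 0 ≤ s) (hN : 1 ≤ N) (hK0 : 0 < K)
    (hblk : ∀ (S : Type) [Fintype S] [Nonempty S] (ι : Type) [Fintype ι] (R : S → S → ℝ) (b0 : ι → S → ℝ)
      (deg : ι → Fin D) (B : ι → ℝ) (_ : Blk D (s ^ 2 * N) R b0 deg B) (c : S → ℝ),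
      ∑ x : Fin D → Fin K, gav c (pa b0 deg (xg K x)) (fun σ ρ => max (-R σ ρ) 0) ≤
        Fintype.card (Fin D → Fin K) * ε) (e : Fin k → Fin N → Fin M) (θ : ℝ) (j : Fin k) :
    ∑ x : Fin k → (Fin D → Fin K), gav (fun _ => 0) (rot (cA (M := M) (N := N) (k := k) (q := q) (D := D) β) (cB β e) (cF s e x) θ)
      (fun σ ρ => max (-ov (e j) σ ρ) 0) ≤ Fintype.card (Fin k → (Fin D → Fin K)) * ε := by
  haveI : Nonempty (Fin K) := ⟨⟨0, hK0⟩⟩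
  set G : (Fin k → (Fin D → Fin K)) → ℝ := fun x => gav (fun _ => 0)
    (rot (cA (M := M) (N := N) (k := k) (q := q) (D := D) β) (cB β e) (cF s e x) θ)
      (fun σ ρ => max (-ov (e j) σ ρ) 0) with hG
  have h1 := sum_update j G
  have hc0 : (0 : ℝ) < (Fintype.card (Fin D → Fin K) : ℝ) := by exact_mod_cast Fintype.card_pos
  have h2 : ∀ x, ∑ y, G (Function.update x j y) ≤ Fintype.card (Fin D → Fin K) * ε := by
    intro x
    refine cond_block (X := Fin D → Fin K) (fun i : IP D N => (Sum.inr (Sum.inr (j, i)) : IT M N k q D))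
      (fun i i' h => by simpa using h) (fun y => rot (cA β) (cB β e) (cF s e (Function.update x j y)) θ) ?_
      (fun σ ρ => le_max_right _ _) ?_ _
    · intro y y' i hi
      funext σ
      rcases i with T | jT | ji
      · rfl
      · rfl
      · have hj : ji.1 ≠ j := fun h => hi ⟨ji.2, by rw [← h]⟩
        simp only [rot, cF, Function.update_of_ne hj]
    · intro c'
      have := hblk (Fin M → Bool) (IP D N) (ov (e j)) (pb0 D s (e j)) (fun i => i.1) (pB D N s)
        (pb0_blk hN D hs (e j)) c'
      refine le_trans (le_of_eq (Finset.sum_congr rfl fun y _ => ?_)) this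
      congr 1
      funext i σ
      simp [rot, cA, cB, cF]
  have h3 : ∑ x, ∑ y, G (Function.update x j y) ≤ Fintype.card (Fin k → (Fin D → Fin K)) * (Fintype.card (Fin D → Fin K) * ε) := by
    refine (Finset.sum_le_sum fun x _ => h2 x).trans (le_of_eq ?_)
    rw [Finset.sum_const, nsmul_eq_mul, Finset.card_univ]
  rw [h1] at h3
  have : (Fintype.card (Fin D → Fin K) : ℝ) * ∑ x, G x ≤ Fintype.card (Fin D → Fin K) * (Fintype.card (Fin k → (Fin D → Fin K)) * ε) := by
    refine h3.trans (le_of_eq ?_); ring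
  exact le_of_mul_le_mul_left this hc0

theorem ov_decomp (hN : 1 ≤ N) {r : ℕ} (hM : M = k * N + r) (hM1 : 1 ≤ M)
    (e : Fin k → Fin N → Fin M) (he : Function.Injective (fun x : Fin k × Fin N => e x.1 x.2)) (σ ρ : Fin M → Bool) :
    ∃ rest : ℝ, |rest| ≤ r ∧ (M : ℝ) * ov id σ ρ = N * ∑ j, ov (e j) σ ρ + rest := by
  classical
  set z : Fin M → ℝ := fun i => sp (σ i) * sp (ρ i) with hz
  set E : Fin k × Fin N → Fin M := fun x => e x.1 x.2 with hE
  refine ⟨∑ i ∈ Finset.univ \ Finset.univ.image E, z i, ?_, ?_⟩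
  · refine (Finset.abs_sum_le_sum_abs _ _).trans ?_
    have : ∀ i, |z i| = 1 := fun i => by simp [hz, abs_mul, sp_abs]
    simp only [this]
    rw [Finset.sum_const, nsmul_eq_mul, mul_one, Finset.card_sdiff_of_subset (Finset.subset_univ _),
      Finset.card_image_of_injective _ he]
    simp only [Finset.card_univ, Fintype.card_prod, Fintype.card_fin]
    rw [hM]; simp
  · rw [ov_mul hM1, Finset.mul_sum]
    simp only [ov_mul hN]
    have h1 : ∑ j, ∑ i, sp (σ (e j i)) * sp (ρ (e j i)) = ∑ i ∈ Finset.univ.image E, z i := by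
      rw [Finset.sum_image (fun _ _ _ _ h => he h), Fintype.sum_prod_type]
    rw [h1, add_comm, Finset.sum_sdiff (Finset.subset_univ _)]
    rfl

theorem sumA (β : ℝ) (σ ρ : Fin M → Bool) :
    ∑ i : IT M N k q D, cA β i σ * cA β i ρ = β ^ 2 * ∑ T, hc M q T σ * hc M q T ρ := by
  rw [Fintype.sum_sum_type]
  simp only [cA, mul_zero, Finset.sum_const_zero, add_zero]
  rw [Finset.mul_sum]; exact Finset.sum_congr rfl fun T _ => by ring

theorem sumB (β : ℝ) (e : Fin k → Fin N → Fin M) (σ ρ : Fin M → Bool) :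
    ∑ i : IT M N k q D, cB β e i σ * cB β e i ρ =
      β ^ 2 * ∑ j, ∑ T, hc N q T (fun i => σ (e j i)) * hc N q T (fun i => ρ (e j i)) := by
  rw [Fintype.sum_sum_type, Fintype.sum_sum_type]
  simp only [cB, mul_zero, Finset.sum_const_zero, add_zero, zero_add]
  rw [Fintype.sum_prod_type]
  simp only [Finset.mul_sum]
  exact Finset.sum_congr rfl fun j _ => Finset.sum_congr rfl fun T _ => by ring

theorem hK_model {c β : ℝ} (hc0 : 0 ≤ c) (hcov : ∀ (n : ℕ) (_ : 1 ≤ n) (σ ρ : Fin n → Bool),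
    |∑ T, hc n q T σ * hc n q T ρ - n * ov id σ ρ ^ (q+1) / (q+1).factorial| ≤ c)
    (hN : 1 ≤ N) (hk : 1 ≤ k) {r : ℕ} (hM : M = k * N + r)
    (e : Fin k → Fin N → Fin M) (he : Function.Injective (fun x : Fin k × Fin N => e x.1 x.2)) (σ ρ : Fin M → Bool) :
    -(β ^ 2 * (2 * (k + 1) * c + (2 * q + 3) * r) + (β ^ 2 * ((q + 2) * N)) * ∑ j, max (-ov (e j) σ ρ) 0) ≤
      (∑ i : IT M N k q D, cA β i σ * cA β i σ - ∑ i : IT M N k q D, cB β e i σ * cB β e i σ) -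
      (∑ i : IT M N k q D, cA β i σ * cA β i ρ - ∑ i : IT M N k q D, cB β e i σ * cB β e i ρ) := by
  have hM1 : 1 ≤ M := by rw [hM]; nlinarith
  simp only [sumA, sumB]
  set F : ℝ := ((q+1).factorial : ℝ) with hF
  have hF1 : 1 ≤ F := by rw [hF]; exact_mod_cast Nat.factorial_pos _
  have hMr : (M : ℝ) = k * N + r := by rw [hM]; push_cast; ring
  have hX := hcov M hM1
  have hY : ∀ σ ρ : Fin M → Bool, |∑ j, ∑ T, hc N q T (fun i => σ (e j i)) * hc N q T (fun i => ρ (e j i)) -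
      (N * ∑ j, ov (e j) σ ρ ^ (q+1)) / F| ≤ k * c := by
    intro σ ρ
    have : ∑ j, ∑ T, hc N q T (fun i => σ (e j i)) * hc N q T (fun i => ρ (e j i)) -
      (N * ∑ j, ov (e j) σ ρ ^ (q+1)) / F = ∑ j, (∑ T, hc N q T (fun i => σ (e j i)) * hc N q T (fun i => ρ (e j i)) -
        N * ov (e j) σ ρ ^ (q+1) / F) := by
      rw [Finset.sum_sub_distrib, Finset.mul_sum, Finset.sum_div]
    rw [this]
    refine (Finset.abs_sum_le_sum_abs _ _).trans ?_
    refine (Finset.sum_le_sum fun j _ => hcov N hN (fun i => σ (e j i)) (fun i => ρ (e j i))).trans ?_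
    simp
  have h1 := (abs_le.1 (hX σ σ)).1
  have h2 := (abs_le.1 (hX σ ρ)).2
  have h3 := (abs_le.1 (hY σ σ)).2
  have h4 := (abs_le.1 (hY σ ρ)).1
  obtain ⟨rest, hr1, hr2⟩ := ov_decomp hN hM hM1 e he σ ρ
  have h5 := ovl_ineq (p := q + 1) hk (by omega) (by positivity : (0:ℝ) < N) (Nat.cast_nonneg r) hMr
    (fun j => ov (e j) σ ρ) (fun j => ov_abs hN _ _ _) (ov_abs hM1 id σ ρ) hr1 hr2
  rw [ov_diag hM1, one_pow, mul_one] at h1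
  simp only [ov_diag hN, one_pow, Finset.sum_const, Finset.card_univ, Fintype.card_fin, nsmul_eq_mul, mul_one] at h3
  push_cast at h5
  set P := ∑ j, max (-ov (e j) σ ρ) 0 with hP
  have hP0 : 0 ≤ P := Finset.sum_nonneg fun j _ => le_max_right _ _
  set W := (N : ℝ) * ∑ j, ov (e j) σ ρ ^ (q+1) with hW
  set V := (M : ℝ) * ov id σ ρ ^ (q+1) with hV
  have h6 : V / F - W / F ≤ (q + 2) * N * P + (2 * q + 3) * r := by
    rw [← sub_div, div_le_iff₀ (by positivity)]
    have : 0 ≤ (q + 2) * N * P + (2 * q + 3) * r := by positivity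
    nlinarith
  have h7 : (0:ℝ) ≤ M / F - N * k / F := by
    rw [← sub_div]; refine div_nonneg ?_ (by positivity)
    rw [hMr]; have : (0:ℝ) ≤ r := Nat.cast_nonneg r
    linarith
  have h8 : (k : ℝ) * N = N * k := mul_comm _ _
  set X1 := ∑ T, hc M q T σ * hc M q T σ
  set X2 := ∑ T, hc M q T σ * hc M q T ρ
  set Y1 := ∑ j, ∑ T, hc N q T (fun i => σ (e j i)) * hc N q T (fun i => σ (e j i))
  set Y2 := ∑ j, ∑ T, hc N q T (fun i => σ (e j i)) * hc N q T (fun i => ρ (e j i))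
  have h9 : -((2 * (k + 1) * c + (2 * q + 3) * r) + (q + 2) * N * P) ≤ (X1 - Y1) - (X2 - Y2) := by
    linarith
  have := mul_le_mul_of_nonneg_left h9 (sq_nonneg β)
  linarith

theorem endA (β : ℝ) (hβ : 0 ≤ β) {s : ℝ} (hs : 0 ≤ s) (hDs : D * s ^ 2 ≤ 1) (hN : 1 ≤ N) (hkN : k * N ≤ M) (hM1 : 1 ≤ M)
    (e : Fin k → Fin N → Fin M) (x : Fin k → (Fin D → Fin K)) :
    phi (fun _ => 0) (fun i σ => cA (M := M) (N := N) (k := k) (q := q) (D := D) β i σ + cF s e x i σ) ≤ β * M * GS q M + 3 * M := by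
  have hv : ∀ σ : Fin M → Bool, ∑ i : IT M N k q D, cF s e x i σ ^ 2 ≤ 4 * M := by
    intro σ
    rw [Fintype.sum_sum_type, Fintype.sum_sum_type]
    simp only [cF]
    simp only [ne_eq, OfNat.ofNat_ne_zero, not_false_eq_true, zero_pow, Finset.sum_const_zero, zero_add]
    rw [Fintype.sum_prod_type]
    have h1 : ∀ j : Fin k, ∑ i : IP D N, pa (pb0 D s (e j)) (fun i => i.1) (xg K (x j)) i σ ^ 2 ≤ 4 * (D * (s ^ 2 * N)) := by
      intro j
      rw [← pB_sum hN D s, Finset.mul_sum]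
      refine Finset.sum_le_sum fun i _ => ?_
      rw [pa, mul_pow, ← sq_abs (pb0 _ _ _ _ _), pb0_abs D hs]
      refine mul_le_mul_of_nonneg_right ?_ (sq_nonneg _)
      nlinarith [xg_ge K (x j) i.1, xg_le K (x j) i.1]
    refine (Finset.sum_le_sum fun j _ => h1 j).trans ?_
    simp only [Finset.sum_const, Finset.card_univ, Fintype.card_fin, nsmul_eq_mul]
    have h2 : (k : ℝ) * N ≤ M := by exact_mod_cast hkN
    have h3 : (0:ℝ) ≤ k * N := by positivity
    have h4 : (0:ℝ) ≤ D * s ^ 2 := by positivity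
    calc (k : ℝ) * (4 * (D * (s ^ 2 * N))) = 4 * ((D * s ^ 2) * (k * N)) := by ring
      _ ≤ 4 * (1 * (M : ℝ)) := by gcongr
      _ = _ := by ring
  have hmp := comp_mp (fun T : {S : Finset (Fin M) // S.card = q + 1} => (Sum.inl T : IT M N k q D)) Sum.inl_injective
  have hint : Integrable (fun g : IT M N k q D → ℝ => groundStateValue M (q+1) (fun T => g (Sum.inl T))) (gm _) :=
    hmp.integrable_comp_of_integrable (gsv_int M (q+1))
  have h := phi_le_of_max (cA (M := M) (N := N) (k := k) (q := q) (D := D) β) (cF s e x) hv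
    (hint.const_mul (β * M)) (fun g σ => by
      rw [Fintype.sum_sum_type]
      simp only [cA, zero_mul, Finset.sum_const_zero, add_zero]
      have := mul_le_mul_of_nonneg_left (val_le_gsv hM1 q (fun T => g (Sum.inl T)) σ) hβ
      rw [Finset.mul_sum] at this
      simpa only [mul_assoc] using this)
  have hI : ∫ g : IT M N k q D → ℝ, groundStateValue M (q+1) (fun T => g (Sum.inl T)) ∂(gm _) = GS q M := by
    rw [GS, ← hmp.map_eq, integral_map hmp.measurable.aemeasurable]
    exact (gsv_lip M (q+1)).continuous.aestronglyMeasurable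
  rw [integral_const_mul, hI] at h
  have h3 : Real.log (Fintype.card (Fin M → Bool)) = M * Real.log 2 := by simp
  rw [h3] at h
  have h4 := Real.log_two_lt_d9
  have hM' : (0:ℝ) < M := by positivity
  nlinarith

theorem endB (β : ℝ) (hβ : 0 ≤ β) {s : ℝ} (hN : 1 ≤ N)
    (e : Fin k → Fin N → Fin M) (he : Function.Injective (fun x : Fin k × Fin N => e x.1 x.2)) (x : Fin k → (Fin D → Fin K)) :
    β * (k * N) * GS q N ≤ phi (fun _ => 0) (fun i σ => cB (M := M) (N := N) (k := k) (q := q) (D := D) β e i σ + cF s e x i σ) := by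
  refine le_trans ?_ (phi_add_orth _ (cB β e) (cF s e x) (hbf β s e x))
  have hmp := fun j : Fin k => comp_mp (fun T : {S : Finset (Fin N) // S.card = q + 1} => (Sum.inr (Sum.inl (j, T)) : IT M N k q D))
    (fun T T' h => by simpa using h)
  have hint : ∀ j, Integrable (fun g : IT M N k q D → ℝ => groundStateValue N (q+1) (fun T => g (Sum.inr (Sum.inl (j, T))))) (gm _) :=
    fun j => (hmp j).integrable_comp_of_integrable (gsv_int N (q+1))
  have hI : ∀ j, ∫ g : IT M N k q D → ℝ, groundStateValue N (q+1) (fun T => g (Sum.inr (Sum.inl (j, T)))) ∂(gm _) = GS q N := by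
    intro j
    rw [GS, ← (hmp j).map_eq, integral_map (hmp j).measurable.aemeasurable]
    exact (gsv_lip N (q+1)).continuous.aestronglyMeasurable
  have hint2 : Integrable (fun g : IT M N k q D → ℝ => ∑ j : Fin k, β * N * groundStateValue N (q+1) (fun T => g (Sum.inr (Sum.inl (j, T))))) (gm _) :=
    integrable_finsetSum _ fun j _ => (hint j).const_mul _
  refine le_trans (le_of_eq ?_) (phi_ge_of_le (cB β e) hint2 fun g => ?_)
  · rw [integral_finsetSum _ fun j _ => (hint j).const_mul _]
    simp only [integral_const_mul, hI]
    simp; ring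
  · choose τ hτ using fun j : Fin k => exists_gsv hN q (fun T => g (Sum.inr (Sum.inl (j, T))))
    refine ⟨Function.extend (fun x : Fin k × Fin N => e x.1 x.2) (fun x => τ x.1 x.2) (fun _ => true), le_of_eq ?_⟩
    rw [Fintype.sum_sum_type, Fintype.sum_sum_type]
    simp only [cB, zero_mul, Finset.sum_const_zero, add_zero, zero_add]
    rw [Fintype.sum_prod_type]
    refine Finset.sum_congr rfl fun j _ => ?_
    have : ∀ i, Function.extend (fun x : Fin k × Fin N => e x.1 x.2) (fun x => τ x.1 x.2) (fun _ => true) (e j i) = τ j i :=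
      fun i => he.extend_apply (fun x => τ x.1 x.2) (fun _ => true) (j, i)
    simp only [this]
    rw [mul_assoc, ← hτ j, Finset.mul_sum]
    exact Finset.sum_congr rfl fun T _ => by ring

theorem main_ineq {c β s ε : ℝ} (hβ : 0 ≤ β) (hs : 0 ≤ s) (hε : 0 ≤ ε) (hDs : D * s ^ 2 ≤ 1)
    (hc0 : 0 ≤ c) (hcov : ∀ (n : ℕ) (_ : 1 ≤ n) (σ ρ : Fin n → Bool),
    |∑ T, hc n q T σ * hc n q T ρ - n * ov id σ ρ ^ (q+1) / (q+1).factorial| ≤ c)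
    (hN : 1 ≤ N) (hk : 1 ≤ k) {r : ℕ} (hM : M = k * N + r) (hK0 : 0 < K)
    (hblk : ∀ (S : Type) [Fintype S] [Nonempty S] (ι : Type) [Fintype ι] (R : S → S → ℝ) (b0 : ι → S → ℝ)
      (deg : ι → Fin D) (B : ι → ℝ) (_ : Blk D (s ^ 2 * N) R b0 deg B) (c : S → ℝ),
      ∑ x : Fin D → Fin K, gav c (pa b0 deg (xg K x)) (fun σ ρ => max (-R σ ρ) 0) ≤
        Fintype.card (Fin D → Fin K) * ε) :
    β * (k * N) * GS q N ≤ β * M * GS q M + 3 * M +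
      2 * (β ^ 2 * (2 * (k + 1) * c + (2 * q + 3) * r) + β ^ 2 * ((q + 2) * N) * (k * ε)) := by
  have hM1 : 1 ≤ M := by rw [hM]; nlinarith
  have hkN : k * N ≤ M := by rw [hM]; omega
  haveI : Nonempty (Fin K) := ⟨⟨0, hK0⟩⟩
  set e : Fin k → Fin N → Fin M := fun j i => Fin.castLE hkN (finProdFinEquiv (j, i)) with he'
  have he : Function.Injective (fun x : Fin k × Fin N => e x.1 x.2) := by
    intro x y h
    exact finProdFinEquiv.injective (Fin.castLE_injective hkN h)
  have h := interp (X := Fin k → (Fin D → Fin K)) (cA (M := M) (N := N) (k := k) (q := q) (D := D) β) (cB β e) (cF s e)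
    (hab β e) (haf β s e) (hbf β s e) (fun j σ ρ => max (-ov (e j) σ ρ) 0)
    (C0 := β ^ 2 * (2 * (k + 1) * c + (2 * q + 3) * r)) (w := β ^ 2 * ((q + 2) * N)) (ε := ε) (by positivity)
    (by positivity) hε (hK_model hc0 hcov hN hk hM e he) (hR_model hs hN hK0 hblk e)
  have h1 : ∀ x : Fin k → (Fin D → Fin K), _ := fun x => endA (q := q) β hβ hs hDs hN hkN hM1 e x
  have h2 : ∀ x : Fin k → (Fin D → Fin K), _ := fun x => endB (q := q) β hβ (s := s) hN e he x
  have h3 := Finset.sum_le_sum fun x (_ : x ∈ Finset.univ) => h1 x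
  have h4 := Finset.sum_le_sum fun x (_ : x ∈ Finset.univ) => h2 x
  rw [Finset.sum_const, nsmul_eq_mul, Finset.card_univ] at h3 h4
  have hcp : (0 : ℝ) < (Fintype.card (Fin k → (Fin D → Fin K)) : ℝ) := by exact_mod_cast Fintype.card_pos
  refine le_of_mul_le_mul_left ?_ hcp
  linarith

end
end PSpin


namespace PSpin

theorem GS_almost (q : ℕ) (δ : ℝ) (hδ : 0 < δ) : ∃ N0 : ℕ, ∀ N ≥ N0, ∃ M0 : ℕ, ∀ M ≥ M0, GS q N - δ ≤ GS q M := by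
  obtain ⟨c, hc0, hcov⟩ := hc_cov_approx q
  set β : ℝ := 24 / δ with hβ
  have hβ0 : 0 < β := by positivity
  set ε : ℝ := δ / (16 * β * (q + 2)) with hε
  have hε0 : 0 < ε := by positivity
  obtain ⟨D, K, hK0, A0, hA0, hblk⟩ := block_lemma ε hε0
  set s : ℝ := √(1 / (D + 1)) with hs
  have hs0 : 0 ≤ s := Real.sqrt_nonneg _
  have hs2 : s ^ 2 = 1 / (D + 1) := Real.sq_sqrt (by positivity)
  have hDs : D * s ^ 2 ≤ 1 := by
    rw [hs2, mul_one_div, div_le_one (by positivity)]; linarith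
  obtain ⟨N1, hN1⟩ := exists_nat_ge (A0 * (D + 1))
  obtain ⟨N2, hN2⟩ := exists_nat_ge (64 * β * c / δ)
  refine ⟨N1 + N2 + 1, fun N hN => ?_⟩
  have hNpos : 1 ≤ N := by omega
  have hN' : (0:ℝ) < N := by positivity
  have hNN : ((N1 + N2 + 1 : ℕ) : ℝ) ≤ N := by exact_mod_cast hN
  push_cast at hNN
  have n1 : (0:ℝ) ≤ N1 := Nat.cast_nonneg _
  have n2 : (0:ℝ) ≤ N2 := Nat.cast_nonneg _
  have hA : s ^ 2 * N ≥ A0 := by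
    rw [hs2, ge_iff_le, one_div_mul_eq_div, le_div_iff₀ (by positivity)]; linarith
  have hcN : 64 * β * c ≤ δ * N := by
    rw [div_le_iff₀ hδ] at hN2; nlinarith
  obtain ⟨M1, hM1⟩ := exists_nat_ge (16 * N / δ)
  obtain ⟨M2, hM2⟩ := exists_nat_ge (16 * β * (2 * q + 3) * N / δ)
  refine ⟨M1 + M2 + N, fun M hM => ?_⟩
  have hMM : ((M1 + M2 + N : ℕ) : ℝ) ≤ M := by exact_mod_cast hM
  push_cast at hMM
  have m1 : (0:ℝ) ≤ M1 := Nat.cast_nonneg _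
  have m2 : (0:ℝ) ≤ M2 := Nat.cast_nonneg _
  have hMpos : (0:ℝ) < M := by linarith
  have hM1' : 16 * N ≤ M * δ := by rw [div_le_iff₀ hδ] at hM1; nlinarith
  have hM2' : 16 * β * (2 * q + 3) * N ≤ M * δ := by rw [div_le_iff₀ hδ] at hM2; nlinarith
  set k := M / N with hk
  set r := M % N with hr
  have hkr : M = k * N + r := by rw [hk, hr, mul_comm]; exact (Nat.div_add_mod M N).symm
  have hk1 : 1 ≤ k := (Nat.one_le_div_iff hNpos).2 (by omega)
  have hrN : r < N := Nat.mod_lt _ hNpos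
  have key := main_ineq (M := M) (N := N) (k := k) (q := q) hβ0.le hs0 hε0.le hDs hc0 hcov hNpos hk1 hkr hK0
    (hblk (s ^ 2 * N) hA)
  have hkr' : (M : ℝ) = k * N + r := by rw [hkr]; push_cast; ring
  have hrN' : (r : ℝ) ≤ N := by exact_mod_cast hrN.le
  have hr0 : (0:ℝ) ≤ r := Nat.cast_nonneg _
  have hk1' : (1:ℝ) ≤ k := by exact_mod_cast hk1
  have g2 := GS_le hNpos q
  have g0 := GS_nonneg hNpos q
  have hkN : (k:ℝ) * N ≤ M := by linarith
  have t1 : β * r * GS q N ≤ β * M * δ / 8 := by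
    have h1 : r * GS q N ≤ N * 2 := mul_le_mul hrN' g2 g0 hN'.le
    have h2 := mul_le_mul_of_nonneg_left h1 hβ0.le
    have h3 := mul_le_mul_of_nonneg_left hM1' hβ0.le
    linarith
  have t2 : 3 * (M:ℝ) = β * M * δ / 8 := by rw [hβ]; field_simp; norm_num
  have t3 : 2 * (β ^ 2 * (2 * (k + 1) * c)) ≤ β * M * δ / 8 := by
    have h1 : 2 * (β ^ 2 * (2 * (k + 1) * c)) ≤ 8 * β ^ 2 * k * c := by
      have : (0:ℝ) ≤ β ^ 2 * c := by positivity
      nlinarith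
    have h2 : β * k * (64 * β * c) ≤ β * k * (δ * N) := mul_le_mul_of_nonneg_left hcN (by positivity)
    have h3 : β * δ * (k * N) ≤ β * δ * M := mul_le_mul_of_nonneg_left hkN (by positivity)
    linarith
  have t4 : 2 * (β ^ 2 * ((2 * q + 3) * r)) ≤ β * M * δ / 8 := by
    have h1 : β ^ 2 * (2 * q + 3) * r ≤ β ^ 2 * (2 * q + 3) * N := mul_le_mul_of_nonneg_left hrN' (by positivity)
    have h2 := mul_le_mul_of_nonneg_left hM2' hβ0.le
    linarith
  have t5 : 2 * (β ^ 2 * ((q + 2) * N) * (k * ε)) ≤ β * M * δ / 8 := by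
    have h1 : 2 * (β ^ 2 * ((q + 2) * N) * (k * ε)) = β * δ / 8 * (k * N) := by
      rw [hε]; field_simp; norm_num
    rw [h1]
    have h3 : β * δ / 8 * (k * N) ≤ β * δ / 8 * M := mul_le_mul_of_nonneg_left hkN (by positivity)
    linarith
  have e1 : β * (k * N) * GS q N = β * M * GS q N - β * r * GS q N := by rw [hkr']; ring
  have hbm : 0 < β * M := by positivity
  have fin : β * M * (GS q N - δ) ≤ β * M * GS q M := by
    rw [e1] at key
    have : 0 ≤ β * M * δ := by positivity
    linarith
  exact le_of_mul_le_mul_left fin hbm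

theorem GS_tendsto (q : ℕ) : ∃ η, Tendsto (GS q) atTop (𝓝 η) := by
  have hub : ∀ᶠ n in atTop, GS q n ≤ 2 := eventually_atTop.2 ⟨1, fun n hn => GS_le hn q⟩
  have hlb : ∀ᶠ n in atTop, 0 ≤ GS q n := eventually_atTop.2 ⟨1, fun n hn => GS_nonneg hn q⟩
  have b1 : IsBoundedUnder (· ≤ ·) atTop (GS q) := ⟨2, by simpa using hub⟩
  have b2 : IsBoundedUnder (· ≥ ·) atTop (GS q) := ⟨0, by simpa using hlb⟩
  refine ⟨liminf (GS q) atTop, tendsto_of_le_liminf_of_limsup_le le_rfl ?_ b1 b2⟩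
  refine le_of_forall_pos_le_add fun δ hδ => ?_
  obtain ⟨N0, h⟩ := GS_almost q δ hδ
  refine limsup_le_of_le b2.isCoboundedUnder_le (eventually_atTop.2 ⟨N0, fun N hN => ?_⟩)
  obtain ⟨M0, h'⟩ := h N hN
  have := le_liminf_of_le b1.isCoboundedUnder_ge (eventually_atTop.2 ⟨M0, h'⟩)
  linarith

theorem gsv_var {n : ℕ} (hn : 1 ≤ n) (q : ℕ) {t : ℝ} (ht : 0 < t) :
    pSpinMeasure n (q+1) {J | t ≤ |groundStateValue n (q+1) J - GS q n|} ≤ ENNReal.ofReal (1 / n / t ^ 2) := by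
  have hn' : (0:ℝ) < n := by positivity
  have hL := gsv_lip n (q+1)
  have h := meas_ge_le_variance_div_sq (μ := gm {S : Finset (Fin n) // S.card = q + 1}) hL.memLp ht
  refine h.trans (ENNReal.ofReal_le_ofReal ?_)
  refine div_le_div_of_nonneg_right ?_ (by positivity)
  rw [variance_eq_integral hL.continuous.measurable.aemeasurable]
  refine (efron hL).trans ?_
  rw [Finset.sum_const, nsmul_eq_mul, Finset.card_univ]
  refine (mul_le_mul_of_nonneg_right (card_le n (q+1)) (by positivity)).trans (le_of_eq ?_)
  rw [← Real.rpow_natCast (_ ^ _) 2, ← Real.rpow_mul hn'.le, ← Real.rpow_natCast (n:ℝ) (q+1), ← Real.rpow_add hn',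
    one_div, ← Real.rpow_neg_one]
  congr 1; push_cast; ring

end PSpin

/-- existence of the deterministic limit of the ground-state value of
the `p`-spin glass, via the Parisi formula: for every `p ≥ 2` there is a constant
`η_{p,OPT}` such that `η_{p,n} → η_{p,OPT}` in probability as `n → ∞`. -/
theorem ground_state_value_converges_in_probability (p : ℕ) (hp : 2 ≤ p) :
    ∃ η : ℝ, ∀ ε : ℝ, 0 < ε →
      Tendsto
        (fun n : ℕ =>
          pSpinMeasure n p {J | ε < |groundStateValue n p J - η|})
        atTop (𝓝 0) := by
  obtain ⟨q, rfl⟩ : ∃ q, p = q + 1 := ⟨p - 1, by omega⟩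
  obtain ⟨η, hη⟩ := PSpin.GS_tendsto q
  refine ⟨η, fun ε hε => ?_⟩
  have hlim : Tendsto (fun n : ℕ => ENNReal.ofReal (1 / n / (ε / 2) ^ 2)) atTop (𝓝 0) := by
    rw [← ENNReal.ofReal_zero]
    refine ENNReal.tendsto_ofReal ?_
    have := (tendsto_one_div_atTop_nhds_zero_nat (𝕜 := ℝ)).div_const ((ε / 2) ^ 2)
    simpa using this
  refine tendsto_of_tendsto_of_tendsto_of_le_of_le' tendsto_const_nhds hlim
    (Eventually.of_forall fun n => zero_le) ?_
  have h1 : ∀ᶠ n in atTop, |PSpin.GS q n - η| < ε / 2 := by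
    have := Metric.tendsto_nhds.1 hη (ε / 2) (by positivity)
    simpa [Real.dist_eq] using this
  filter_upwards [h1, eventually_ge_atTop 1] with n hn1 hn2
  refine (measure_mono ?_).trans (PSpin.gsv_var hn2 q (half_pos hε))
  intro J hJ
  simp only [Set.mem_ofPred_eq] at hJ ⊢
  have := abs_sub_le (groundStateValue n (q+1) J) (PSpin.GS q n) η
  linarith
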